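/- Let c>0 and B<3 be fixed constants and let m:ℕ→ℕ satisfy cn ≤ m(n) ≤ Bn for all sufficiently large n. Let H_1,…,H_l be fixed connected planar graphs, each with vertex set {1,…,|H_i|} and each containing at most one cycle (equivalently, e(H_i) ≤ |H_i| for every i), and let t be a fixed positive integer. Then there exist constants ε>0 and N such that for all n ≥ N, the probability that, simultaneously for every i ≤ l, the graph P_{n,m(n)} has at least t components admitting an order-preserving isomorphism to H_i is at least ε. -/

import Mathlib

/-!
The proof first finds linearly many leaves in a random planar graph and then spends a bounded number
of them on building one component after another. Write `PF n m` for the set of planar graphs on `n`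
labelled vertices with `m` edges.

*Planarity.* Planarity is the absence of `K₅` and `K₃,₃` minors. From this come the closure
properties that are needed: passing to minors, linking two graphs by an edge, attaching a leaf,
stacking a vertex on an edge. A planar graph on `n` vertices has at most `4 n` edges
(`IsPlanar.edgeCount_le`), and there are at most `C ^ n * n!` of them (`exists_growth`), because a
positive proportion of the vertices can be contracted in a way that is undone by one of `O(n)`
choices.

*Smoothness of the counts.* The number of connected planar graphs divided by `n!` is
supermultiplicative (`phi_superadd`), since two connected planar graphs may be linked by an edge.
Building a graph near `(n, m)` from many copies of one whose ratio of edges to vertices has almost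
maximal growth rate compares the number of graphs at `(n + j, m + j)` with that at `(n, m)`: for
`j ≤ β n` and `1.01 n ≤ m ≤ B n`, the quotient is at most `exp (C₀ β n) * (2 n) ^ j` (`PF_lipschitz`).

*Leaves.* Deleting a leaf gives the exact identity `leafSum_succ`: the graphs in
`PF (n + 1) (m + 1)` have `(n + 1) * n * |PF n m|` leaves altogether. If the average number of leaves
at `(n, m)` were a small multiple of `n`, it would remain small along the diagonal, and the identity
would make the counts grow too fast (`PF_growth_of_few_leaves`), against `PF_lipschitz`. This settles
`m ≥ 1.01 n` (`leafSum_dense`). For `c n ≤ m ≤ 1.01 n` a positive proportion of the vertices has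
degree zero, is a leaf, has degree two with non-adjacent neighbours, or lies in a triangle component
(`low_degree_structure`), and the other types are compared with leaves by local switchings
(`leafSum_sparse`). Hence a positive proportion of the planar graphs has linearly many leaves
(`good_zero`).

*Building a component.* Let `H` be one of the given graphs, with `h` vertices and `e(H) ≤ h` edges;
as `H` is connected, `e(H)` is `h - 1` or `h`. Deleting `h` leaves one after another
(`move_drop`), adding an edge at a leaf if `H` is a tree (`move_edge`) and placing a copy of `H` on
freely chosen labels (`move_place`) leads from `(n, m)` back to `(n, m)`. Each deletion costs a
factor of order `n` in the double counting, and placing `H` on `h` of `n` labels gains a factor of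
order `n ^ h`, so a set of graphs with linearly many leaves and boundedly many copies of `H` loses
only a constant factor (`move_all`); graphs that already have more copies are good from the start. The moves destroy boundedly many components of the other
types, so the thresholds for those are raised beforehand (`good_step`, `good_all`).
-/

open SimpleGraph Filter Asymptotics

/-- `H` is a minor of `G`: to each vertex of `H` we can assign a connected nonempty
branch set in `G`, pairwise disjoint, with an edge of `G` between the branch sets of
any two adjacent vertices of `H`. -/
def IsMinor {α β : Type*} (H : SimpleGraph α) (G : SimpleGraph β) : Prop :=
  ∃ f : α → Set β,
    (∀ a, (G.induce (f a)).Connected) ∧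
    (∀ a b, a ≠ b → Disjoint (f a) (f b)) ∧
    (∀ a b, H.Adj a b → ∃ u ∈ f a, ∃ v ∈ f b, G.Adj u v)

/-- A graph is planar iff it has neither a `K₅`-minor nor a `K₃,₃`-minor
(Wagner's theorem). -/
def IsPlanar {V : Type*} (G : SimpleGraph V) : Prop :=
  ¬ IsMinor (completeGraph (Fin 5)) G ∧
    ¬ IsMinor (completeBipartiteGraph (Fin 3) (Fin 3)) G

/-- The number of edges of a graph. -/
noncomputable def edgeCount {V : Type*} (G : SimpleGraph V) : ℕ :=
  G.edgeSet.ncard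

/-- The degree of a vertex. -/
noncomputable def vertexDegree {V : Type*} (G : SimpleGraph V) (v : V) : ℕ :=
  (G.neighborSet v).ncard

/-- `𝒫(n,m)`: the set of labelled planar graphs on `{1,…,n}` with exactly `m` edges. -/
def planarSet (n m : ℕ) : Set (SimpleGraph (Fin n)) :=
  {G | IsPlanar G ∧ edgeCount G = m}

/-- The probability that the uniform random planar graph `P_{n,m}` satisfies `P`. -/
noncomputable def planarProb (n m : ℕ) (P : SimpleGraph (Fin n) → Prop) : ℝ :=
  ({G ∈ planarSet n m | P G}.ncard : ℝ) / ((planarSet n m).ncard : ℝ)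

/-- The number of pendant edges (edges incident to a vertex of degree 1). -/
noncomputable def pendantCount {V : Type*} (G : SimpleGraph V) : ℕ :=
  {e ∈ G.edgeSet | ∃ v ∈ e, vertexDegree G v = 1}.ncard

/-- The set of addable non-edges of `G`: non-edges whose addition keeps the graph planar. -/
def addableSet {V : Type*} (G : SimpleGraph V) : Set (Sym2 V) :=
  {e | ¬ e.IsDiag ∧ e ∉ G.edgeSet ∧ IsPlanar (G ⊔ SimpleGraph.fromEdgeSet {e})}

/-- `add(n,m)`: the minimum number of addable non-edges over all graphs in `𝒫(n,m)`. -/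
noncomputable def addMin (n m : ℕ) : ℕ :=
  sInf ((fun G => (addableSet G).ncard) '' planarSet n m)

/-- `W` carries an induced order-preserving copy of `H` in `G`: the increasing bijection
from `{1,…,h}` to `W` is an isomorphism between `H` and the induced subgraph `G[W]`. -/
def IsOrderCopy {h n : ℕ} (H : SimpleGraph (Fin h)) (G : SimpleGraph (Fin n))
    (W : Finset (Fin n)) : Prop :=
  ∃ hW : W.card = h,
    ∀ i j : Fin h,
      H.Adj i j ↔ G.Adj ((W.orderIsoOfFin hW i : Fin n)) ((W.orderIsoOfFin hW j : Fin n))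

/-- `W` is the vertex set of a connected component of `G`. -/
def IsComponent {V : Type*} (G : SimpleGraph V) (W : Finset V) : Prop :=
  (G.induce (W : Set V)).Connected ∧ ∀ v ∈ W, ∀ u, G.Adj v u → u ∈ W

/-- The number of components of `G` admitting an order-preserving isomorphism to `H`. -/
noncomputable def numOrderComponents {h n : ℕ} (H : SimpleGraph (Fin h))
    (G : SimpleGraph (Fin n)) : ℕ :=
  {W : Finset (Fin n) | IsComponent G W ∧ IsOrderCopy H G W}.ncard

/-- The number of distinct cycles (as subgraphs, identified with their edge sets) of
length at most `k` in `S`. -/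
noncomputable def cycleCountLe {V : Type*} (S : SimpleGraph V) (k : ℕ) : ℕ :=
  {E : Set (Sym2 V) | ∃ (v : V) (c : S.Walk v v),
    c.IsCycle ∧ c.length ≤ k ∧ {e | e ∈ c.edges} = E}.ncard

/-! ### Connected vertex sets -/

/-- `W` is nonempty and cannot be split by a set closed under adjacency inside `W`;
this is a working form of connectedness of `G.induce W`. -/
def ConnIn {V : Type*} (G : SimpleGraph V) (W : Set V) : Prop :=
  W.Nonempty ∧ ∀ S : Set V, (∃ x ∈ W, x ∈ S) →
    (∀ x ∈ W, ∀ y ∈ W, G.Adj x y → x ∈ S → y ∈ S) → W ⊆ S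

theorem conn_iff {V : Type*} (G : SimpleGraph V) (W : Set V) :
    (G.induce W).Connected ↔ ConnIn G W := by
  constructor
  · intro h
    refine ⟨?_, ?_⟩
    · obtain ⟨x⟩ := h.nonempty
      exact ⟨x.1, x.2⟩
    · rintro S ⟨x, hxW, hxS⟩ hcl y hyW
      have hr := h.preconnected ⟨x, hxW⟩ ⟨y, hyW⟩
      obtain ⟨p⟩ := hr
      have : ∀ (a b : W), (G.induce W).Walk a b → a.1 ∈ S → b.1 ∈ S := by
        intro a b p
        induction p with
        | nil => exact id
        | @cons u v w hadj p ih =>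
          intro hu
          exact ih (hcl _ u.2 _ v.2 hadj hu)
      exact this _ _ p hxS
  · rintro ⟨⟨x, hx⟩, h⟩
    rw [connected_iff_exists_forall_reachable]
    refine ⟨⟨x, hx⟩, ?_⟩
    have := h {y | ∃ hy : y ∈ W, (G.induce W).Reachable ⟨x, hx⟩ ⟨y, hy⟩} ⟨x, hx, hx, Reachable.refl _⟩ ?_
    · intro w
      obtain ⟨hy, hr⟩ := this w.2
      exact hr
    · rintro a ha b hb hab ⟨ha', hr⟩
      refine ⟨hb, hr.trans ?_⟩
      apply Adj.reachable
      exact hab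

theorem ConnIn.singleton {V : Type*} (G : SimpleGraph V) (x : V) : ConnIn G {x} := by
  refine ⟨⟨x, rfl⟩, ?_⟩
  rintro S ⟨y, rfl, hy⟩ _ z rfl
  exact hy

theorem ConnIn.mono {V : Type*} {G G' : SimpleGraph V} (hG : G ≤ G') {W : Set V}
    (h : ConnIn G W) : ConnIn G' W :=
  ⟨h.1, fun S hS hc => h.2 S hS fun x hx y hy hxy => hc x hx y hy (hG hxy)⟩

/-- Connectivity of an indexed union: the index set is connected and adjacent indices have
touching pieces. -/
theorem ConnIn.biUnion {V U : Type*} {G : SimpleGraph V} {G' : SimpleGraph U} {W : Set V}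
    (h : ConnIn G W) {g : V → Set U} (hg : ∀ x ∈ W, ConnIn G' (g x))
    (hadj : ∀ x ∈ W, ∀ y ∈ W, G.Adj x y → ∃ u ∈ g x, ∃ v ∈ g y, G'.Adj u v) :
    ConnIn G' (⋃ x ∈ W, g x) := by
  constructor
  · obtain ⟨x, hx⟩ := h.1
    obtain ⟨u, hu⟩ := (hg x hx).1
    exact ⟨u, Set.mem_biUnion hx hu⟩
  · rintro S ⟨u, hu, huS⟩ hcl
    obtain ⟨x, hx, hux⟩ := Set.mem_iUnion₂.1 hu
    have key : ∀ x ∈ W, (∃ u ∈ g x, u ∈ S) → g x ⊆ S := by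
      intro x hx hex
      refine (hg x hx).2 S hex ?_
      intro a ha b hb hab haS
      exact hcl a (Set.mem_biUnion hx ha) b (Set.mem_biUnion hx hb) hab haS
    have := h.2 {x | g x ⊆ S} ⟨x, hx, key x hx ⟨u, hux, huS⟩⟩ ?_
    · intro v hv
      obtain ⟨y, hy, hvy⟩ := Set.mem_iUnion₂.1 hv
      exact this hy hvy
    · intro a ha b hb hab haS
      obtain ⟨p, hp, q, hq, hpq⟩ := hadj a ha b hb hab
      exact key b hb ⟨q, hq, hcl p (Set.mem_biUnion ha hp) q (Set.mem_biUnion hb hq) hpq (haS hp)⟩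

theorem ConnIn.image {V U : Type*} {G : SimpleGraph V} {G' : SimpleGraph U} {W : Set V}
    (h : ConnIn G W) (g : V → U) (hg : ∀ x ∈ W, ∀ y ∈ W, G.Adj x y → G'.Adj (g x) (g y)) :
    ConnIn G' (g '' W) := by
  have := h.biUnion (G' := G') (g := fun x => {g x}) (fun x _ => ConnIn.singleton _ _)
    (fun x hx y hy hxy => ⟨g x, rfl, g y, rfl, hg x hx y hy hxy⟩)
  convert this using 1
  ext u
  simp [eq_comm]

theorem ConnIn.insert_adj {V : Type*} {G : SimpleGraph V} {W : Set V} (h : ConnIn G W) {x y : V}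
    (hy : y ∈ W) (hxy : G.Adj x y) : ConnIn G (insert x W) := by
  refine ⟨⟨x, Set.mem_insert _ _⟩, ?_⟩
  rintro S ⟨z, hz, hzS⟩ hcl
  have hyW : y ∈ insert x W := Set.mem_insert_of_mem _ hy
  have hx : x ∈ insert x W := Set.mem_insert _ _
  have hWS : W ⊆ S := by
    refine h.2 S ?_ fun a ha b hb => hcl a (Set.mem_insert_of_mem _ ha) b (Set.mem_insert_of_mem _ hb)
    rcases hz with rfl | hz
    · exact ⟨y, hy, hcl z hx y hyW hxy hzS⟩
    · exact ⟨z, hz, hzS⟩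
  intro w hw
  rcases hw with rfl | hw
  · exact hcl y hyW w hx hxy.symm (hWS hy)
  · exact hWS hw

/-! ### Minors -/

theorem isMinor_iff {α β : Type*} (H : SimpleGraph α) (G : SimpleGraph β) :
    IsMinor H G ↔ ∃ f : α → Set β, (∀ a, ConnIn G (f a)) ∧
      (∀ a b, a ≠ b → Disjoint (f a) (f b)) ∧
      (∀ a b, H.Adj a b → ∃ u ∈ f a, ∃ v ∈ f b, G.Adj u v) := by
  simp only [IsMinor, conn_iff]

theorem IsMinor.trans {α β γ : Type*} {H : SimpleGraph α} {G : SimpleGraph β} {K : SimpleGraph γ}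
    (h1 : IsMinor H G) (h2 : IsMinor G K) : IsMinor H K := by
  rw [isMinor_iff] at *
  obtain ⟨f, hf, hfd, hfa⟩ := h1
  obtain ⟨g, hg, hgd, hga⟩ := h2
  refine ⟨fun a => ⋃ x ∈ f a, g x, ?_, ?_, ?_⟩
  · intro a
    exact (hf a).biUnion (fun x _ => hg x) (fun x _ y _ hxy => hga x y hxy)
  · intro a b hab
    rw [Set.disjoint_left]
    intro u hu hu'
    obtain ⟨x, hx, hux⟩ := Set.mem_iUnion₂.1 hu
    obtain ⟨y, hy, huy⟩ := Set.mem_iUnion₂.1 hu'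
    by_cases hxy : x = y
    · subst hxy
      exact Set.disjoint_left.1 (hfd a b hab) hx hy
    · exact Set.disjoint_left.1 (hgd x y hxy) hux huy
  · intro a b hab
    obtain ⟨x, hx, y, hy, hxy⟩ := hfa a b hab
    obtain ⟨u, hu, v, hv, huv⟩ := hga x y hxy
    exact ⟨u, Set.mem_biUnion hx hu, v, Set.mem_biUnion hy hv, huv⟩

theorem isMinor_of_injective {α β : Type*} {H : SimpleGraph α} {G : SimpleGraph β} (g : α → β)
    (hg : Function.Injective g) (h : ∀ a b, H.Adj a b → G.Adj (g a) (g b)) : IsMinor H G := by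
  rw [isMinor_iff]
  refine ⟨fun a => {g a}, fun a => ConnIn.singleton _ _, ?_, ?_⟩
  · intro a b hab
    simpa using fun h => hab (hg h)
  · intro a b hab
    exact ⟨_, rfl, _, rfl, h a b hab⟩

theorem IsPlanar.of_isMinor {α β : Type*} {H : SimpleGraph α} {G : SimpleGraph β}
    (hG : IsPlanar G) (h : IsMinor H G) : IsPlanar H :=
  ⟨fun h' => hG.1 (h'.trans h), fun h' => hG.2 (h'.trans h)⟩

theorem IsPlanar.of_injective {α β : Type*} {H : SimpleGraph α} {G : SimpleGraph β}
    (hG : IsPlanar G) (g : α → β)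
    (hg : Function.Injective g) (h : ∀ a b, H.Adj a b → G.Adj (g a) (g b)) : IsPlanar H :=
  hG.of_isMinor (isMinor_of_injective g hg h)

theorem IsPlanar.mono {α : Type*} {H G : SimpleGraph α} (hG : IsPlanar G) (h : H ≤ G) :
    IsPlanar H :=
  hG.of_injective id Function.injective_id fun _ _ hab => h hab

theorem IsPlanar.iso {α β : Type*} {H : SimpleGraph α} {G : SimpleGraph β}
    (hG : IsPlanar G) (e : H ≃g G) : IsPlanar H :=
  hG.of_injective e e.injective fun _ _ hab => e.map_adj_iff.2 hab

/-- Branch sets living inside a vertex set `A` give a minor of the induced subgraph. -/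
theorem isMinor_induce {α β : Type*} {H : SimpleGraph α} {G : SimpleGraph β} (A : Set β)
    (f : α → Set β) (hA : ∀ a, f a ⊆ A) (hf : ∀ a, ConnIn G (f a))
    (hfd : ∀ a b, a ≠ b → Disjoint (f a) (f b))
    (hfa : ∀ a b, H.Adj a b → ∃ u ∈ f a, ∃ v ∈ f b, G.Adj u v) : IsMinor H (G.induce A) := by
  rw [isMinor_iff]
  refine ⟨fun a => {x : A | x.1 ∈ f a}, ?_, ?_, ?_⟩
  · intro a
    refine ⟨?_, ?_⟩
    · obtain ⟨x, hx⟩ := (hf a).1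
      exact ⟨⟨x, hA a hx⟩, hx⟩
    · rintro S ⟨x, hx, hxS⟩ hcl
      have := (hf a).2 {y | ∃ hy : y ∈ A, (⟨y, hy⟩ : A) ∈ S} ⟨x.1, hx, x.2, hxS⟩ ?_
      · intro y hy
        obtain ⟨_, h⟩ := this hy
        exact h
      · rintro u hu v hv huv ⟨huA, huS⟩
        exact ⟨hA a hv, hcl ⟨u, huA⟩ hu ⟨v, hA a hv⟩ hv huv huS⟩
  · intro a b hab
    rw [Set.disjoint_left]
    intro x hx hx'
    exact Set.disjoint_left.1 (hfd a b hab) hx hx'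
  · intro a b hab
    obtain ⟨u, hu, v, hv, huv⟩ := hfa a b hab
    exact ⟨⟨u, hA a hu⟩, hu, ⟨v, hA b hv⟩, hv, huv⟩

/-! ### Gluing planar graphs -/

/-- The two features of `K₅` and `K₃,₃` used in gluing arguments: every vertex has at least three
neighbours, and deleting any vertex leaves a connected graph. -/
def Robust {α : Type*} (H : SimpleGraph α) : Prop :=
  (∀ a b c, ∃ d, H.Adj a d ∧ d ≠ b ∧ d ≠ c) ∧
  (∀ (x : α) (s : α → Prop), (∀ a b, a ≠ x → b ≠ x → H.Adj a b → (s a ↔ s b)) →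
    ∀ a b, a ≠ x → b ≠ x → (s a ↔ s b))

theorem exists_fin3 (b c : Fin 3) : ∃ d : Fin 3, d ≠ b ∧ d ≠ c := by
  revert b c; decide

theorem robust_K5 : Robust (completeGraph (Fin 5)) := by
  constructor
  · intro a b c
    have : ∀ a b c : Fin 5, ∃ d, a ≠ d ∧ d ≠ b ∧ d ≠ c := by decide
    simpa using this a b c
  · intro x s h a b ha hb
    by_cases hab : a = b
    · rw [hab]
    · exact h a b ha hb (by simpa using hab)

theorem robust_K33 : Robust (completeBipartiteGraph (Fin 3) (Fin 3)) := by
  have hex : ∀ b c : Fin 3 ⊕ Fin 3, ∃ d : Fin 3, Sum.inl d ≠ b ∧ Sum.inl d ≠ c := by decide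
  have hex' : ∀ b c : Fin 3 ⊕ Fin 3, ∃ d : Fin 3, Sum.inr d ≠ b ∧ Sum.inr d ≠ c := by decide
  constructor
  · intro a b c
    rcases a with a | a
    · obtain ⟨d, h⟩ := hex' b c
      exact ⟨Sum.inr d, by simp, h⟩
    · obtain ⟨d, h⟩ := hex b c
      exact ⟨Sum.inl d, by simp, h⟩
  · intro x s h a b ha hb
    rcases a with a | a <;> rcases b with b | b
    · obtain ⟨d, hd, -⟩ := hex' x x
      exact (h _ _ ha hd (by simp)).trans (h _ _ hd hb (by simp))
    · exact h _ _ ha hb (by simp)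
    · exact h _ _ ha hb (by simp)
    · obtain ⟨d, hd, -⟩ := hex x x
      exact (h _ _ ha hd (by simp)).trans (h _ _ hd hb (by simp))

theorem ConnIn.inter_side {V : Type*} {G : SimpleGraph V} {W A : Set V} {u : V}
    (h : ConnIn G W) (hcross : ∀ x ∈ A, ∀ y ∉ A, G.Adj x y → x = u)
    (hne : (W ∩ A).Nonempty) : ConnIn G (W ∩ A) := by
  refine ⟨hne, ?_⟩
  rintro S ⟨x, hx, hxS⟩ hcl
  have := h.2 {y | (y ∈ A ∧ y ∈ S) ∨ (y ∉ A ∧ u ∈ S)} ⟨x, hx.1, Or.inl ⟨hx.2, hxS⟩⟩ ?_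
  · intro y hy
    rcases this hy.1 with h | h
    · exact h.2
    · exact absurd hy.2 h.1
  · intro x hx y hy hxy hxS
    by_cases hxA : x ∈ A <;> by_cases hyA : y ∈ A
    · have hxS' : x ∈ S := by rcases hxS with h | h; exacts [h.2, absurd hxA h.1]
      exact Or.inl ⟨hyA, hcl x ⟨hx, hxA⟩ y ⟨hy, hyA⟩ hxy hxS'⟩
    · have hxS' : x ∈ S := by rcases hxS with h | h; exacts [h.2, absurd hxA h.1]
      exact Or.inr ⟨hyA, hcross x hxA y hyA hxy ▸ hxS'⟩
    · have hxS' : u ∈ S := by rcases hxS with h | h; exacts [absurd h.1 hxA, h.2]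
      exact Or.inl ⟨hyA, by rw [hcross y hyA x hxA hxy.symm]; exact hxS'⟩
    · have hxS' : u ∈ S := by rcases hxS with h | h; exacts [absurd h.1 hxA, h.2]
      exact Or.inr ⟨hyA, hxS'⟩

theorem ConnIn.exists_cross {V : Type*} {G : SimpleGraph V} {W A : Set V}
    (h : ConnIn G W) {x y : V} (hx : x ∈ W) (hxA : x ∈ A) (hy : y ∈ W) (hyA : y ∉ A) :
    ∃ p ∈ W, ∃ q ∈ W, p ∈ A ∧ q ∉ A ∧ G.Adj p q := by
  by_contra hcon
  push Not at hcon
  exact hyA (h.2 A ⟨x, hx, hxA⟩ (fun p hp q hq hpq hpA => by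
    by_contra hqA; exact hcon p hp q hq hpA hqA hpq) hy)

/-- Restricting a model of `H` to one side `A` when only the branch set of `x0` leaves it. -/
theorem isMinor_side {α V : Type*} {H : SimpleGraph α} {G : SimpleGraph V} {A : Set V} {u : V}
    (f : α → Set V) (hf : ∀ a, ConnIn G (f a)) (hfd : ∀ a b, a ≠ b → Disjoint (f a) (f b))
    (hfa : ∀ a b, H.Adj a b → ∃ u ∈ f a, ∃ v ∈ f b, G.Adj u v)
    (hcross : ∀ x ∈ A, ∀ y ∉ A, G.Adj x y → x = u) (x0 : α) (hne : (f x0 ∩ A).Nonempty)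
    (hoth : ∀ a, a ≠ x0 → f a ⊆ A)
    (hedge : ∀ b, H.Adj x0 b → ∃ p ∈ f x0, ∃ q ∈ f b, p ∈ A ∧ G.Adj p q) :
    IsMinor H (G.induce A) := by
  classical
  have hsub : ∀ a, f a ∩ A = f a ∨ a = x0 := by
    intro a
    by_cases h : a = x0
    · exact Or.inr h
    · exact Or.inl (Set.inter_eq_left.2 (hoth a h))
  refine isMinor_induce A (fun a => f a ∩ A) (fun a => Set.inter_subset_right) ?_ ?_ ?_
  · intro a
    rcases hsub a with h | h
    · simp only [h]; exact hf a
    · subst h; exact (hf a).inter_side hcross hne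
  · intro a b hab
    exact (hfd a b hab).mono Set.inter_subset_left Set.inter_subset_left
  · intro a b hab
    by_cases ha : a = x0
    · subst ha
      obtain ⟨p, hp, q, hq, hpA, hpq⟩ := hedge b hab
      exact ⟨p, ⟨hp, hpA⟩, q, ⟨hq, hoth b hab.ne' hq⟩, hpq⟩
    · by_cases hb : b = x0
      · subst hb
        obtain ⟨p, hp, q, hq, hpA, hpq⟩ := hedge a hab.symm
        exact ⟨q, ⟨hq, hoth a hab.ne hq⟩, p, ⟨hp, hpA⟩, hpq.symm⟩
      · obtain ⟨p, hp, q, hq, hpq⟩ := hfa a b hab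
        exact ⟨p, ⟨hp, hoth a ha hp⟩, q, ⟨hq, hoth b hb hq⟩, hpq⟩

/-- A robust minor of a graph with at most one edge `uv` between `A` and its complement lives on
one of the two sides. -/
theorem Robust.isMinor_sides {α V : Type*} {H : SimpleGraph α} (hH : Robust H) {G : SimpleGraph V}
    {A : Set V} {u v : V} (hcross : ∀ x ∈ A, ∀ y ∉ A, G.Adj x y → x = u ∧ y = v)
    (hm : IsMinor H G) : IsMinor H (G.induce A) ∨ IsMinor H (G.induce Aᶜ) := by
  classical
  obtain ⟨f, hf, hfd, hfa⟩ := (isMinor_iff _ _).1 hm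
  by_cases hα : Nonempty α
  swap
  · left
    rw [not_nonempty_iff] at hα
    exact ⟨fun a => isEmptyElim a, fun a => isEmptyElim a, fun a => isEmptyElim a,
      fun a => isEmptyElim a⟩
  have hu : ∃ x0, ∀ a, a ≠ x0 → u ∉ f a := by
    by_cases h : ∃ x0, u ∈ f x0
    · obtain ⟨x0, hx0⟩ := h
      exact ⟨x0, fun a ha hua => Set.disjoint_left.1 (hfd a x0 ha) hua hx0⟩
    · push Not at h
      exact ⟨hα.some, fun a _ => h a⟩
  obtain ⟨x0, hx0⟩ := hu
  have hside : ∀ a, a ≠ x0 → ∀ p ∈ f a, ∀ q ∈ f a, p ∈ A → q ∈ A := by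
    intro a ha p hp q hq hpA
    by_contra hqA
    obtain ⟨p', hp', q', hq', hpA', hqA', hadj⟩ := (hf a).exists_cross hp hpA hq hqA
    exact hx0 a ha ((hcross p' hpA' q' hqA' hadj).1 ▸ hp')
  have hsame : ∀ a b, a ≠ x0 → b ≠ x0 → H.Adj a b → (f a ⊆ A → f b ⊆ A) := by
    intro a b ha hb hab hA q' hq'
    obtain ⟨p, hp, q, hq, hpq⟩ := hfa a b hab
    have hqA : q ∈ A := by
      by_contra hqA
      exact hx0 a ha ((hcross p (hA hp) q hqA hpq).1 ▸ hp)
    exact hside b hb q hq q' hq' hqA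
  have hall := hH.2 x0 (fun a => f a ⊆ A) (fun a b ha hb hab =>
    ⟨hsame a b ha hb hab, hsame b a hb ha hab.symm⟩)
  by_cases hin : ∀ a, a ≠ x0 → f a ⊆ A
  · left
    have hedge : ∀ b, H.Adj x0 b → ∃ p ∈ f x0, ∃ q ∈ f b, p ∈ A ∧ G.Adj p q := by
      intro b hb
      obtain ⟨p, hp, q, hq, hpq⟩ := hfa x0 b hb
      refine ⟨p, hp, q, hq, ?_, hpq⟩
      by_contra hpA
      exact hx0 b hb.ne' ((hcross q (hin b hb.ne' hq) p hpA hpq.symm).1 ▸ hq)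
    obtain ⟨d, hd, -⟩ := hH.1 x0 x0 x0
    obtain ⟨p, hp, q, hq, hpA, hpq⟩ := hedge d hd
    exact isMinor_side f hf hfd hfa (fun x hx y hy hxy => (hcross x hx y hy hxy).1) x0
      ⟨p, hp, hpA⟩ hin hedge
  · right
    have hout : ∀ a, a ≠ x0 → f a ⊆ Aᶜ := by
      push Not at hin
      obtain ⟨b, hb, hbA⟩ := hin
      intro a ha p hp hpA
      have : f a ⊆ A := fun q hq => hside a ha p hp q hq hpA
      exact hbA ((hall a b ha hb).1 this)
    have hedge : ∀ b, H.Adj x0 b → ∃ p ∈ f x0, ∃ q ∈ f b, p ∈ Aᶜ ∧ G.Adj p q := by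
      intro b hb
      obtain ⟨p, hp, q, hq, hpq⟩ := hfa x0 b hb
      refine ⟨p, hp, q, hq, ?_, hpq⟩
      intro hpA
      obtain ⟨hpu, hqv⟩ := hcross p hpA q (hout b hb.ne' hq) hpq
      obtain ⟨d, hd, hdb, -⟩ := hH.1 x0 b b
      obtain ⟨p', hp', q', hq', hpq'⟩ := hfa x0 d hd
      have hpA' : p' ∉ A := by
        intro hpA'
        obtain ⟨-, hqv'⟩ := hcross p' hpA' q' (hout d hd.ne' hq') hpq'
        refine Set.disjoint_left.1 (hfd d b hdb) hq' ?_
        rw [hqv', ← hqv]; exact hq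
      obtain ⟨p1, hp1, q1, hq1, hpA1, hqA1, hadj⟩ := (hf x0).exists_cross hp hpA hp' hpA'
      obtain ⟨-, hqv'⟩ := hcross p1 hpA1 q1 hqA1 hadj
      refine Set.disjoint_left.1 (hfd x0 b hb.ne) hq1 ?_
      rw [hqv', ← hqv]; exact hq
    obtain ⟨d, hd, -⟩ := hH.1 x0 x0 x0
    obtain ⟨p, hp, q, hq, hpA, hpq⟩ := hedge d hd
    refine isMinor_side (u := v) f hf hfd hfa (fun x hx y hy hxy => ?_) x0 ⟨p, hp, hpA⟩ hout hedge
    exact (hcross y (by simpa using hy) x hx hxy.symm).2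

theorem IsPlanar.glue {V : Type*} {G : SimpleGraph V} {A : Set V} (u v : V)
    (hcross : ∀ x ∈ A, ∀ y ∉ A, G.Adj x y → x = u ∧ y = v)
    (h1 : IsPlanar (G.induce A)) (h2 : IsPlanar (G.induce Aᶜ)) : IsPlanar G :=
  ⟨fun h => (robust_K5.isMinor_sides hcross h).elim h1.1 h2.1,
    fun h => (robust_K33.isMinor_sides hcross h).elim h1.2 h2.2⟩

theorem IsPlanar.of_subsingleton {V : Type*} [Subsingleton V] (G : SimpleGraph V) :
    IsPlanar G := by
  constructor
  · intro h
    obtain ⟨f, hf, hfd, -⟩ := (isMinor_iff _ _).1 h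
    obtain ⟨x, hx⟩ := (hf 0).1
    obtain ⟨y, hy⟩ := (hf 1).1
    rw [Subsingleton.elim y x] at hy
    exact Set.disjoint_left.1 (hfd 0 1 (by decide)) hx hy
  · intro h
    obtain ⟨f, hf, hfd, -⟩ := (isMinor_iff _ _).1 h
    obtain ⟨x, hx⟩ := (hf (Sum.inl 0)).1
    obtain ⟨y, hy⟩ := (hf (Sum.inl 1)).1
    rw [Subsingleton.elim y x] at hy
    exact Set.disjoint_left.1 (hfd (Sum.inl 0) (Sum.inl 1) (by decide)) hx hy

/-- Adding a vertex of degree at most one preserves planarity. -/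
theorem IsPlanar.add_leaf {V : Type*} {G : SimpleGraph V} (v u : V)
    (hN : ∀ y, G.Adj v y → y = u) (h : IsPlanar (G.induce {v}ᶜ)) : IsPlanar G := by
  refine IsPlanar.glue (A := {v}) v u ?_ ?_ h
  · rintro x rfl y _ hxy
    exact ⟨rfl, hN y hxy⟩
  · exact IsPlanar.of_subsingleton _

theorem Robust.isMinor_deg_two {α V : Type*} {H : SimpleGraph α} (hH : Robust H)
    {G : SimpleGraph V} {u v w : V} (hN : ∀ y, G.Adj v y → y = u ∨ y = w) (huw : G.Adj u w)
    (hm : IsMinor H G) : IsMinor H (G.induce {v}ᶜ) := by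
  classical
  obtain ⟨f, hf, hfd, hfa⟩ := (isMinor_iff _ _).1 hm
  by_cases hv : ∃ a, v ∈ f a
  swap
  · push Not at hv
    exact isMinor_induce _ f (fun a x hx hxv => hv a (by rw [← hxv]; exact hx)) hf hfd hfa
  obtain ⟨a, ha⟩ := hv
  have hva : ∀ b, b ≠ a → v ∉ f b := fun b hb hvb => Set.disjoint_left.1 (hfd b a hb) hvb ha
  have hidx : ∀ y : V, ∃ b, ∀ d, y ∈ f d → d = b := by
    intro y
    by_cases h : ∃ b, y ∈ f b
    · obtain ⟨b, hb⟩ := h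
      refine ⟨b, fun d hd => ?_⟩
      by_contra hdb
      exact Set.disjoint_left.1 (hfd d b hdb) hd hb
    · push Not at h
      exact ⟨a, fun d hd => absurd hd (h d)⟩
  have hne : ∃ x ∈ f a, x ≠ v := by
    by_contra hcon
    push Not at hcon
    obtain ⟨bu, hbu⟩ := hidx u
    obtain ⟨bw, hbw⟩ := hidx w
    obtain ⟨d, hd, hdu, hdw⟩ := hH.1 a bu bw
    obtain ⟨p, hp, q, hq, hpq⟩ := hfa a d hd
    rw [hcon p hp] at hpq
    rcases hN q hpq with rfl | rfl
    · exact hdu (hbu d hq)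
    · exact hdw (hbw d hq)
  obtain ⟨x, hx, hxv⟩ := hne
  -- `v` has a neighbour in its own branch set
  have hnb : ∃ p ∈ f a, p ≠ v ∧ G.Adj v p := by
    obtain ⟨p, hp, q, hq, hpA, hqA, hpq⟩ := (hf a).exists_cross (A := {v}) ha rfl hx hxv
    exact ⟨q, hq, hqA, by rw [← show p = v from hpA]; exact hpq⟩
  obtain ⟨p0, hp0, hp0v, hvp0⟩ := hnb
  have hedge : ∀ b, H.Adj a b → ∃ p ∈ f a, ∃ q ∈ f b, p ≠ v ∧ G.Adj p q := by
    intro b hb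
    obtain ⟨p, hp, q, hq, hpq⟩ := hfa a b hb
    by_cases hpv : p = v
    · subst hpv
      have hne : p0 ≠ q := by
        rintro rfl
        exact Set.disjoint_left.1 (hfd a b hb.ne) hp0 hq
      refine ⟨p0, hp0, q, hq, hp0v, ?_⟩
      rcases hN q hpq with rfl | rfl <;> rcases hN p0 hvp0 with rfl | rfl
      · exact absurd rfl hne
      · exact huw.symm
      · exact huw
      · exact absurd rfl hne
    · exact ⟨p, hp, q, hq, hpv, hpq⟩
  have hconn : ConnIn G (f a \ {v}) := by
    refine ⟨⟨x, hx, hxv⟩, ?_⟩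
    rintro S ⟨y, hy, hyS⟩ hcl
    have hyv : y ≠ v := hy.2
    have := (hf a).2 {z | if z = v then ∃ q ∈ S, q ∈ f a ∧ q ≠ v ∧ G.Adj v q else z ∈ S}
      ⟨y, hy.1, by simpa [hyv] using hyS⟩ ?_
    · intro z hz
      have h := this hz.1
      simpa [show z ≠ v from hz.2] using h
    · intro p hp q hq hpq hpS
      have hpq' := hpq.ne
      by_cases hpv : p = v
      · subst hpv
        have hqv : q ≠ p := fun h => hpq' h.symm
        simp only [Set.mem_ofPred_eq, if_true] at hpS
        simp only [Set.mem_ofPred_eq, hqv, if_false]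
        obtain ⟨r, hrS, hra, hrv, hvr⟩ := hpS
        by_cases hrq : r = q
        · rw [← hrq]; exact hrS
        · refine hcl r ⟨hra, hrv⟩ q ⟨hq, hqv⟩ ?_ hrS
          rcases hN q hpq with rfl | rfl <;> rcases hN r hvr with rfl | rfl
          · exact absurd rfl hrq
          · exact huw.symm
          · exact huw
          · exact absurd rfl hrq
      · simp only [Set.mem_ofPred_eq, hpv, if_false] at hpS
        by_cases hqv : q = v
        · subst hqv
          simp only [Set.mem_ofPred_eq, if_true]
          exact ⟨p, hpS, hp, hpv, hpq.symm⟩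
        · simp only [Set.mem_ofPred_eq, hqv, if_false]
          exact hcl p ⟨hp, hpv⟩ q ⟨hq, hqv⟩ hpq hpS
  have hsub : ∀ b, f b \ {v} = f b ∨ b = a := by
    intro b
    by_cases h : b = a
    · exact Or.inr h
    · exact Or.inl (by rw [Set.sdiff_singleton_eq_self]; exact hva b h)
  refine isMinor_induce _ (fun b => f b \ {v}) (fun b x hx => hx.2) ?_ ?_ ?_
  · intro b
    rcases hsub b with h | h
    · simp only [h]; exact hf b
    · subst h; exact hconn
  · intro b c hbc
    exact (hfd b c hbc).mono Set.sdiff_subset Set.sdiff_subset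
  · intro b c hbc
    by_cases hb : b = a
    · subst hb
      obtain ⟨p, hp, q, hq, hpv, hpq⟩ := hedge c hbc
      exact ⟨p, ⟨hp, hpv⟩, q, ⟨hq, fun h => hva c hbc.ne' (by rw [← show q = v from h]; exact hq)⟩, hpq⟩
    · by_cases hc : c = a
      · subst hc
        obtain ⟨p, hp, q, hq, hpv, hpq⟩ := hedge b hbc.symm
        exact ⟨q, ⟨hq, fun h => hva b hb (by rw [← show q = v from h]; exact hq)⟩, p, ⟨hp, hpv⟩, hpq.symm⟩
      · obtain ⟨p, hp, q, hq, hpq⟩ := hfa b c hbc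
        exact ⟨p, ⟨hp, fun h => hva b hb (by rw [← show p = v from h]; exact hp)⟩, q,
          ⟨hq, fun h => hva c hc (by rw [← show q = v from h]; exact hq)⟩, hpq⟩

/-- Stacking a vertex of degree at most two on an edge preserves planarity. -/
theorem IsPlanar.add_deg_two {V : Type*} {G : SimpleGraph V} (v u w : V)
    (hN : ∀ y, G.Adj v y → y = u ∨ y = w) (huw : G.Adj u w) (h : IsPlanar (G.induce {v}ᶜ)) :
    IsPlanar G :=
  ⟨fun h' => h.1 (robust_K5.isMinor_deg_two hN huw h'),
    fun h' => h.2 (robust_K33.isMinor_deg_two hN huw h')⟩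

/-! ### Contraction of an edge -/

/-- The graph on `V \ {v}` obtained by moving all edges at `v` to `u`; for adjacent `u`, `v` this is
the contraction of the edge `uv`. -/
def contract {V : Type*} (G : SimpleGraph V) (v u : V) : SimpleGraph {w : V // w ≠ v} where
  Adj x y := x ≠ y ∧ (G.Adj x y ∨ (x.1 = u ∧ G.Adj v y) ∨ (y.1 = u ∧ G.Adj v x))
  symm := ⟨by
    rintro x y ⟨hne, h | h | h⟩
    · exact ⟨hne.symm, Or.inl h.symm⟩
    · exact ⟨hne.symm, Or.inr (Or.inr h)⟩
    · exact ⟨hne.symm, Or.inr (Or.inl h)⟩⟩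
  loopless := ⟨fun x h => h.1 rfl⟩

theorem contract_isMinor {V : Type*} {G : SimpleGraph V} {v u : V} (h : G.Adj v u) :
    IsMinor (contract G v u) G := by
  classical
  rw [isMinor_iff]
  refine ⟨fun x => if x.1 = u then {u, v} else {x.1}, ?_, ?_, ?_⟩
  · intro x
    by_cases hx : x.1 = u
    · simp only [hx, if_true]
      exact (ConnIn.singleton G v).insert_adj rfl h.symm
    · simp only [hx, if_false]
      exact ConnIn.singleton G _
  · intro x y hxy
    have hxy' : x.1 ≠ y.1 := fun h => hxy (Subtype.ext h)
    have hx := x.2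
    have hy := y.2
    rw [Set.disjoint_left]
    intro z hz hz'
    by_cases hxu : x.1 = u <;> by_cases hyu : y.1 = u <;>
      simp only [hxu, hyu, if_true, if_false, Set.mem_insert_iff, Set.mem_singleton_iff] at hz hz' <;>
      grind
  · rintro x y ⟨hne, hxy | ⟨hxu, hxy⟩ | ⟨hyu, hxy⟩⟩
    · refine ⟨x.1, ?_, y.1, ?_, hxy⟩ <;> (dsimp only; split_ifs <;> simp_all)
    · refine ⟨v, ?_, y.1, ?_, hxy⟩
      · simp [hxu]
      · (dsimp only; split_ifs <;> simp_all)
    · refine ⟨x.1, ?_, v, ?_, hxy.symm⟩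
      · (dsimp only; split_ifs <;> simp_all)
      · simp [hyu]

/-! ### Edge counts -/

theorem edgeCount_comap {V U : Type*} [Finite V] (G : SimpleGraph V) (f : U → V)
    (hf : Function.Injective f) (v : V) (hv : Set.range f = {v}ᶜ) :
    edgeCount G = edgeCount (G.comap f) + vertexDegree G v := by
  classical
  have hU : Finite U := Finite.of_injective f hf
  have hfv : ∀ x, f x ≠ v := by
    intro x hx
    have : f x ∈ ({v}ᶜ : Set V) := hv ▸ Set.mem_range_self x
    exact this hx
  have hsurj : ∀ w, w ≠ v → ∃ x, f x = w := by
    intro w hw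
    have : w ∈ Set.range f := by rw [hv]; exact hw
    exact this
  have hset : G.edgeSet = (Sym2.map f '' (G.comap f).edgeSet) ∪
      ((fun x => s(v, x)) '' G.neighborSet v) := by
    ext e
    induction e using Sym2.ind with
    | _ a b =>
    simp only [mem_edgeSet, Set.mem_union, Set.mem_image, mem_neighborSet]
    constructor
    · intro hab
      by_cases ha : a = v
      · subst ha; exact Or.inr ⟨b, hab, rfl⟩
      · by_cases hb : b = v
        · subst hb; exact Or.inr ⟨a, hab.symm, Sym2.eq_swap⟩
        · obtain ⟨x, rfl⟩ := hsurj a ha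
          obtain ⟨y, rfl⟩ := hsurj b hb
          exact Or.inl ⟨s(x, y), hab, rfl⟩
    · rintro (⟨e, he, heq⟩ | ⟨x, hx, heq⟩)
      · induction e using Sym2.ind with
        | _ x y =>
        rw [Sym2.map_mk] at heq
        have : s(f x, f y) ∈ G.edgeSet := he
        rw [heq] at this
        exact this
      · have : s(v, x) ∈ G.edgeSet := hx
        rw [heq] at this
        exact this
  have hdisj : Disjoint (Sym2.map f '' (G.comap f).edgeSet)
      ((fun x => s(v, x)) '' G.neighborSet v) := by
    rw [Set.disjoint_left]
    rintro e ⟨e', -, rfl⟩ ⟨x, -, hx⟩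
    have : v ∈ Sym2.map f e' := by rw [← hx]; simp
    rw [Sym2.mem_map] at this
    obtain ⟨a, -, ha⟩ := this
    exact hfv a ha
  unfold edgeCount vertexDegree
  rw [hset, Set.ncard_union_eq hdisj (Set.toFinite _) (Set.toFinite _),
    Set.ncard_image_of_injective _ (Sym2.map.injective hf), Set.ncard_image_of_injective]
  intro a b hab
  exact Sym2.congr_right.1 hab

theorem edgeCount_iso {V U : Type*} {G : SimpleGraph V} {K : SimpleGraph U} (e : G ≃g K) :
    edgeCount G = edgeCount K := by
  unfold edgeCount
  rw [← Nat.card_coe_set_eq, ← Nat.card_coe_set_eq]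
  exact Nat.card_congr e.mapEdgeSet

theorem edgeCount_mono {V : Type*} [Finite V] {G K : SimpleGraph V} (h : G ≤ K) :
    edgeCount G ≤ edgeCount K :=
  Set.ncard_le_ncard (edgeSet_mono h) (Set.toFinite _)

theorem sum_vertexDegree {V : Type*} [Fintype V] (G : SimpleGraph V) :
    ∑ v, vertexDegree G v = 2 * edgeCount G := by
  classical
  have h := G.sum_degrees_eq_twice_card_edges
  have h1 : ∀ v, vertexDegree G v = G.degree v := by
    intro v
    unfold vertexDegree
    rw [← Nat.card_coe_set_eq, Nat.card_eq_fintype_card, card_neighborSet_eq_degree]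
  have h2 : edgeCount G = G.edgeFinset.card := by
    unfold edgeCount
    rw [← coe_edgeFinset, Set.ncard_coe_finset]
  rw [h2, ← h]
  exact Finset.sum_congr rfl fun v _ => h1 v

/-! ### Planar graphs are sparse -/

theorem edgeCount_contract_ge {V : Type*} [Finite V] (G : SimpleGraph V) {v u : V}
    (h : G.Adj v u) : edgeCount G ≤
      edgeCount (contract G v u) + 1 + (G.neighborSet v ∩ G.neighborSet u).ncard := by
  classical
  have huv : u ≠ v := h.ne'
  have h1 := edgeCount_comap G (Subtype.val : {w // w ≠ v} → V) Subtype.val_injective v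
    (by ext x; simp)
  set G' := G.comap (Subtype.val : {w // w ≠ v} → V) with hG'
  set R : Set {w // w ≠ v} := {x | G.Adj v x ∧ ¬ G.Adj u x ∧ x.1 ≠ u} with hR
  have h2 : G.neighborSet v ⊆ insert u ((G.neighborSet v ∩ G.neighborSet u) ∪ (Subtype.val '' R)) := by
    intro x hx
    by_cases hxu : x = u
    · exact Or.inl hxu
    · right
      by_cases hxa : G.Adj u x
      · exact Or.inl ⟨hx, hxa⟩
      · exact Or.inr ⟨⟨x, (G.ne_of_adj hx).symm⟩, ⟨hx, hxa, hxu⟩, rfl⟩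
  have h3 : vertexDegree G v ≤ 1 + (G.neighborSet v ∩ G.neighborSet u).ncard + R.ncard := by
    unfold vertexDegree
    calc _ ≤ _ := Set.ncard_le_ncard h2 (Set.toFinite _)
      _ ≤ _ := Set.ncard_insert_le _ _
      _ ≤ ((G.neighborSet v ∩ G.neighborSet u).ncard + (Subtype.val '' R).ncard) + 1 :=
        Nat.add_le_add_right (Set.ncard_union_le _ _) 1
      _ = _ := by rw [Set.ncard_image_of_injective _ Subtype.val_injective]; ring
  have h4 : G'.edgeSet ∪ ((fun x => s((⟨u, huv⟩ : {w // w ≠ v}), x)) '' R)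
      ⊆ (contract G v u).edgeSet := by
    rintro e (he | ⟨x, hx, rfl⟩)
    · induction e using Sym2.ind with
      | _ a b =>
      have hab : G.Adj a b := he
      exact ⟨fun h => hab.ne (congrArg _ h), Or.inl hab⟩
    · refine ⟨fun h => hx.2.2 ?_, Or.inr (Or.inl ⟨rfl, hx.1⟩)⟩
      exact congrArg Subtype.val h.symm
  have h5 : Disjoint G'.edgeSet ((fun x => s((⟨u, huv⟩ : {w // w ≠ v}), x)) '' R) := by
    rw [Set.disjoint_left]
    rintro e he ⟨x, hx, rfl⟩
    exact hx.2.1 he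
  have h6 : edgeCount G' + R.ncard ≤ edgeCount (contract G v u) := by
    unfold edgeCount
    rw [← Set.ncard_image_of_injective R (f := fun x => s((⟨u, huv⟩ : {w // w ≠ v}), x))
      (fun a b hab => Sym2.congr_right.1 hab), ← Set.ncard_union_eq h5 (Set.toFinite _) (Set.toFinite _)]
    exact Set.ncard_le_ncard h4 (Set.toFinite _)
  omega

/-- Average degree at least `2 ^ t` forces a `K_{t+2}` minor. -/
theorem complete_minor_of_dense (t : ℕ) : ∀ (n : ℕ) (V : Type) [Fintype V] (G : SimpleGraph V),
    Fintype.card V = n → 0 < n → 2 ^ t * n ≤ 2 * edgeCount G →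
      IsMinor (completeGraph (Fin (t + 2))) G := by
  classical
  induction t with
  | zero =>
    intro n V _ G hn hpos hE
    have hE' : 0 < edgeCount G := by omega
    obtain ⟨e, he⟩ := (Set.ncard_pos (Set.toFinite _)).1 hE'
    induction e using Sym2.ind with
    | _ a b =>
    have hab : G.Adj a b := he
    refine isMinor_of_injective ![a, b] ?_ ?_
    · intro i j hij
      fin_cases i <;> fin_cases j <;> simp_all [hab.ne, hab.ne']
    · intro i j hij
      fin_cases i <;> fin_cases j <;> simp_all [hab.symm]
  | succ t iht =>
    intro n
    induction n with
    | zero => intro V _ G _ h; omega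
    | succ n ihn =>
      intro V _ G hn _ hE
      have hE' : 0 < edgeCount G := by
        have : 0 < 2 ^ (t + 1) * (n + 1) := by positivity
        omega
      by_cases hcase : ∃ v u, G.Adj v u ∧ (G.neighborSet v ∩ G.neighborSet u).ncard < 2 ^ t
      · obtain ⟨v, u, hvu, hc⟩ := hcase
        have h1 := edgeCount_contract_ge G hvu
        have hcard : Fintype.card {w // w ≠ v} = n := by
          rw [Fintype.card_subtype_compl, Fintype.card_subtype_eq, hn]; rfl
        refine (ihn _ (contract G v u) hcard ?_ ?_).trans (contract_isMinor hvu)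
        · rw [← hcard]
          exact Fintype.card_pos_iff.2 ⟨⟨u, hvu.ne'⟩⟩
        · rw [pow_succ] at hE ⊢
          nlinarith
      · push Not at hcase
        obtain ⟨e, he⟩ := (Set.ncard_pos (Set.toFinite _)).1 hE'
        induction e using Sym2.ind with
        | _ v b =>
        have hvb : G.Adj v b := he
        set G1 := G.comap (Subtype.val : G.neighborSet v → V) with hG1
        have hdeg : ∀ x : G.neighborSet v, 2 ^ t ≤ vertexDegree G1 x := by
          intro x
          refine (hcase v x x.2).trans ?_
          unfold vertexDegree
          rw [← Set.ncard_image_of_injective (G1.neighborSet x) Subtype.val_injective]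
          refine Set.ncard_le_ncard ?_ (Set.toFinite _)
          rintro y ⟨hy1, hy2⟩
          exact ⟨⟨y, hy1⟩, hy2, rfl⟩
        have hsum := sum_vertexDegree G1
        have hlow : 2 ^ t * Fintype.card (G.neighborSet v) ≤ 2 * edgeCount G1 := by
          rw [← hsum]
          calc _ = ∑ _x : G.neighborSet v, 2 ^ t := by simp [mul_comm]
            _ ≤ _ := Finset.sum_le_sum fun x _ => hdeg x
        have hm := iht _ (G.neighborSet v) G1 rfl (Fintype.card_pos_iff.2 ⟨⟨b, hvb⟩⟩) hlow
        obtain ⟨f, hf, hfd, hfa⟩ := (isMinor_iff _ _).1 hm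
        rw [isMinor_iff]
        refine ⟨Fin.cons {v} (fun i => Subtype.val '' (f i)), ?_, ?_, ?_⟩
        · intro a
          refine Fin.cases ?_ (fun i => ?_) a
          · exact ConnIn.singleton _ _
          · exact (hf i).image _ (fun x _ y _ h => h)
        · have h0 : ∀ i, Disjoint ({v} : Set V) (Subtype.val '' (f i)) := by
            intro i
            rw [Set.disjoint_left]
            rintro x rfl ⟨y, -, hy⟩
            have := y.2
            rw [hy] at this
            exact G.loopless.irrefl _ this
          intro a b
          refine Fin.cases ?_ (fun i => ?_) a <;> refine Fin.cases ?_ (fun j => ?_) b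
          · intro h; exact absurd rfl h
          · intro _; exact h0 j
          · intro _; exact (h0 i).symm
          · intro h
            have hij : i ≠ j := fun h' => h (by rw [h'])
            exact (Set.disjoint_image_iff Subtype.val_injective).2 (hfd i j hij)
        · have h0 : ∀ i, ∃ q ∈ Subtype.val '' (f i), G.Adj v q := by
            intro i
            obtain ⟨x, hx⟩ := (hf i).1
            exact ⟨x.1, ⟨x, hx, rfl⟩, x.2⟩
          intro a b
          refine Fin.cases ?_ (fun i => ?_) a <;> refine Fin.cases ?_ (fun j => ?_) b
          · intro h; simp at h
          · intro _
            obtain ⟨q, hq, hvq⟩ := h0 j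
            exact ⟨v, rfl, q, hq, hvq⟩
          · intro _
            obtain ⟨q, hq, hvq⟩ := h0 i
            exact ⟨q, hq, v, rfl, hvq.symm⟩
          · intro h
            obtain ⟨p, hp, q, hq, hpq⟩ := hfa i j (by simpa using h)
            exact ⟨p.1, ⟨p, hp, rfl⟩, q.1, ⟨q, hq, rfl⟩, hpq⟩

theorem IsPlanar.edgeCount_le {V : Type} [Fintype V] {G : SimpleGraph V} (h : IsPlanar G) :
    edgeCount G ≤ 4 * Fintype.card V := by
  by_contra hcon
  push Not at hcon
  rcases Nat.eq_zero_or_pos (Fintype.card V) with h0 | h0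
  · have : IsEmpty V := Fintype.card_eq_zero_iff.1 h0
    have : edgeCount G = 0 := by
      unfold edgeCount
      rw [Set.ncard_eq_zero (Set.toFinite _)]
      ext e
      induction e using Sym2.ind with
      | _ a b => exact isEmptyElim a
    omega
  · exact h.1 (complete_minor_of_dense 3 _ V G rfl h0 (by omega))

/-! ### Vertices all of whose neighbours have large degree -/

theorem ConnIn.star {V : Type*} {G : SimpleGraph V} {a : V} {S : Set V}
    (h : ∀ q ∈ S, G.Adj q a) : ConnIn G (insert a S) := by
  refine ⟨⟨a, Set.mem_insert _ _⟩, ?_⟩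
  rintro U ⟨z, hz, hzU⟩ hcl
  have haU : a ∈ U := by
    rcases hz with rfl | hz
    · exact hzU
    · exact hcl z (Set.mem_insert_of_mem _ hz) a (Set.mem_insert _ _) (h z hz) hzU
  rintro w (rfl | hw)
  · exact haU
  · exact hcl a (Set.mem_insert _ _) w (Set.mem_insert_of_mem _ hw) (h w hw).symm haU

/-- The graph on `T` obtained from `G` by contracting each vertex `q ∈ Q0` into `x q`. -/
def hubGraph {V : Type*} (G : SimpleGraph V) (T : Set V) (Q0 : Finset V) (x : V → V) :
    SimpleGraph T where
  Adj a b := a ≠ b ∧ (G.Adj a b ∨ ∃ q ∈ Q0, (x q = a ∧ G.Adj q b) ∨ (x q = b ∧ G.Adj q a))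
  symm := ⟨by
    rintro a b ⟨hne, h | ⟨q, hq, h⟩⟩
    · exact ⟨hne.symm, Or.inl h.symm⟩
    · exact ⟨hne.symm, Or.inr ⟨q, hq, h.symm⟩⟩⟩
  loopless := ⟨fun a h => h.1 rfl⟩

theorem hubGraph_isMinor {V : Type*} {G : SimpleGraph V} {T : Set V} {Q0 : Finset V} {x : V → V}
    (hT : ∀ q ∈ Q0, q ∉ T) (hx : ∀ q ∈ Q0, G.Adj q (x q)) :
    IsMinor (hubGraph G T Q0 x) G := by
  rw [isMinor_iff]
  refine ⟨fun a => insert a.1 {q | q ∈ Q0 ∧ x q = a.1}, ?_, ?_, ?_⟩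
  · intro a
    refine ConnIn.star ?_
    rintro q ⟨hq, hqa⟩
    rw [← hqa]; exact hx q hq
  · intro a b hab
    have hab' : a.1 ≠ b.1 := fun h => hab (Subtype.ext h)
    rw [Set.disjoint_left]
    rintro z (rfl | ⟨hz, hza⟩) (hzb | ⟨hz', hzb⟩)
    · exact hab' hzb
    · exact hT _ hz' a.2
    · exact hT z hz (hzb ▸ b.2)
    · exact hab' (hza.symm.trans hzb)
  · rintro a b ⟨-, h | ⟨q, hq, ⟨hqa, h⟩ | ⟨hqb, h⟩⟩⟩
    · exact ⟨a.1, Set.mem_insert _ _, b.1, Set.mem_insert _ _, h⟩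
    · exact ⟨q, Set.mem_insert_of_mem _ ⟨hq, hqa⟩, b.1, Set.mem_insert _ _, h⟩
    · exact ⟨a.1, Set.mem_insert _ _, q, Set.mem_insert_of_mem _ ⟨hq, hqb⟩, h.symm⟩

/-- Three vertices of a planar graph cannot have three common neighbours. -/
theorem IsPlanar.no_K33 {V : Type*} {G : SimpleGraph V} (hG : IsPlanar G) (q t : Fin 3 → V)
    (hq : Function.Injective q) (ht : Function.Injective t) (hqt : ∀ i j, q i ≠ t j)
    (h : ∀ i j, G.Adj (q i) (t j)) : False := by
  apply hG.2
  refine isMinor_of_injective (Sum.elim q t) ?_ ?_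
  · rintro (a | a) (b | b) hab
    · exact congrArg _ (hq hab)
    · exact absurd hab (hqt a b)
    · exact absurd hab.symm (hqt b a)
    · exact congrArg _ (ht hab)
  · rintro (a | a) (b | b) hab
    · simp at hab
    · exact h a b
    · exact (h b a).symm
    · simp at hab

open Classical in
/-- In a planar graph some vertex of each nonempty vertex set has at most eight neighbours in it. -/
theorem IsPlanar.exists_low {V : Type} [Fintype V] {M : SimpleGraph V} (hM : IsPlanar M)
    (S : Finset V) (hS : S.Nonempty) : ∃ t ∈ S, (S.filter (M.Adj t)).card ≤ 8 := by
  set M' := M.comap (Subtype.val : S → V)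
  have hM' : IsPlanar M' := hM.of_injective _ Subtype.val_injective fun a b h => h
  have h1 := hM'.edgeCount_le
  have h2 := sum_vertexDegree M'
  by_contra hcon
  push Not at hcon
  have h3 : ∀ x : S, 9 ≤ vertexDegree M' x := by
    intro x
    have h := hcon x x.2
    have h' : (S.filter (M.Adj x.1)).card ≤ (Subtype.val '' M'.neighborSet x).ncard := by
      rw [← Set.ncard_coe_finset]
      refine Set.ncard_le_ncard (t := Subtype.val '' M'.neighborSet x) (fun y hy => ?_)
        (Set.toFinite _)
      simp only [Finset.coe_filter, Set.mem_ofPred_eq] at hy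
      exact ⟨⟨y, hy.1⟩, hy.2, rfl⟩
    rw [Set.ncard_image_of_injective _ Subtype.val_injective] at h'
    exact h.trans_le h'
  have h4 : Fintype.card S * 9 ≤ ∑ x, vertexDegree M' x := by
    calc _ = ∑ _x : S, 9 := by simp
      _ ≤ _ := Finset.sum_le_sum fun x _ => h3 x
  have h5 : 0 < Fintype.card S := by simpa using hS
  omega

open Classical in
/-- If the nonempty sets `N q`, each value being repeated at most twice, are cliques of a planar
graph, then at most `512 k` of them lie inside a given set of `k` vertices: remove a vertex with at
most eight neighbours in that set. -/
theorem clique_sets_card {Q T : Type} [Fintype Q] [Fintype T] {M : SimpleGraph T}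
    (hM : IsPlanar M) (N : Q → Finset T) (hne : ∀ q, (N q).Nonempty)
    (hcl : ∀ q, ∀ a ∈ N q, ∀ b ∈ N q, a ≠ b → M.Adj a b)
    (hrep : ∀ A, (Finset.univ.filter fun q => N q = A).card ≤ 2) :
    ∀ (k : ℕ) (S : Finset T), S.card = k →
      (Finset.univ.filter fun q => N q ⊆ S).card ≤ 512 * k := by
  intro k
  induction k with
  | zero =>
    intro S hS
    rw [Finset.card_eq_zero] at hS
    subst hS
    simp only [Nat.mul_zero, Nat.le_zero, Finset.card_eq_zero]
    rw [Finset.filter_eq_empty_iff]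
    intro q _ hq
    exact (hne q).ne_empty (Finset.subset_empty.1 hq)
  | succ k ih =>
    intro S hS
    obtain ⟨t, htS, ht⟩ := hM.exists_low S (Finset.card_pos.1 (by omega))
    have h1 := ih (S.erase t) (by rw [Finset.card_erase_of_mem htS]; omega)
    set X := Finset.univ.filter fun q => N q ⊆ S ∧ t ∈ N q with hX
    have h2 : (Finset.univ.filter fun q => N q ⊆ S) ⊆
        (Finset.univ.filter fun q => N q ⊆ S.erase t) ∪ X := by
      intro q hq
      simp only [Finset.mem_filter, Finset.mem_univ, true_and, Finset.mem_union, hX] at hq ⊢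
      by_cases htq : t ∈ N q
      · exact Or.inr ⟨hq, htq⟩
      · left
        intro a ha
        exact Finset.mem_erase.2 ⟨fun h => htq (h ▸ ha), hq ha⟩
    have h3 : X.card ≤ 2 * ((S.filter (M.Adj t)).powerset).card := by
      refine Finset.card_le_mul_card_image_of_maps_to (f := fun q => (N q).erase t) ?_ 2 ?_
      · intro q hq
        simp only [Finset.mem_filter, Finset.mem_univ, true_and, hX] at hq
        rw [Finset.mem_powerset]
        intro a ha
        rw [Finset.mem_erase] at ha
        exact Finset.mem_filter.2 ⟨hq.1 ha.2, hcl q t hq.2 a ha.2 ha.1.symm⟩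
      · intro A _
        refine (Finset.card_le_card ?_).trans (hrep (insert t A))
        intro q hq
        simp only [Finset.mem_filter, Finset.mem_univ, true_and, hX] at hq ⊢
        rw [← hq.2, Finset.insert_erase hq.1.2]
    have h4 : ((S.filter (M.Adj t)).powerset).card ≤ 2 ^ 8 := by
      rw [Finset.card_powerset]
      exact Nat.pow_le_pow_right (by norm_num) ht
    have h5 := (Finset.card_le_card h2).trans (Finset.card_union_le _ _)
    omega

open Classical in
theorem card_le_of_clique_sets {Q T : Type} [Fintype Q] [Fintype T] {M : SimpleGraph T}
    (hM : IsPlanar M) (N : Q → Finset T) (hne : ∀ q, (N q).Nonempty)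
    (hcl : ∀ q, ∀ a ∈ N q, ∀ b ∈ N q, a ≠ b → M.Adj a b)
    (hrep : ∀ A, (Finset.univ.filter fun q => N q = A).card ≤ 2) :
    Fintype.card Q ≤ 512 * Fintype.card T := by
  have h := clique_sets_card hM N hne hcl hrep _ Finset.univ rfl
  rw [Finset.filter_true_of_mem (fun q _ => Finset.subset_univ _)] at h
  exact h

open Classical in
/-- An independent set of vertices of degree at least three whose neighbours all lie in `T` has at
most `516 |T|` elements. Contract its vertices into neighbours in `T` as long as each contraction
creates a new edge inside `T`; by maximality the neighbourhoods of the remaining vertices are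
cliques of the resulting planar graph on `T`. -/
theorem IsPlanar.card_outside {V : Type} [Fintype V] {G : SimpleGraph V} (hG : IsPlanar G)
    (T Q : Finset V) (hQT : ∀ q ∈ Q, q ∉ T) (hN : ∀ q ∈ Q, ∀ y, G.Adj q y → y ∈ T)
    (hdeg : ∀ q ∈ Q, 3 ≤ (Finset.univ.filter (G.Adj q)).card) :
    Q.card ≤ 516 * T.card := by
  set valid : Finset (Finset V × (V → V)) := Finset.univ.filter fun p =>
    p.1 ⊆ Q ∧ (∀ q ∈ p.1, G.Adj q (p.2 q)) ∧
      p.1.card ≤ edgeCount (hubGraph G (T : Set V) p.1 p.2) with hvalid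
  have hne : valid.Nonempty := ⟨(∅, id), by simp [hvalid]⟩
  obtain ⟨⟨Q0, x⟩, hmem, hmax⟩ := Finset.exists_max_image valid (fun p => p.1.card) hne
  simp only [hvalid, Finset.mem_filter, Finset.mem_univ, true_and] at hmem hmax
  obtain ⟨hQ0, hx, hcard⟩ := hmem
  set M := hubGraph G (T : Set V) Q0 x with hMdef
  have hM : IsPlanar M := hG.of_isMinor (hubGraph_isMinor (fun q hq => hQT q (hQ0 hq)) hx)
  have h1 : Q0.card ≤ 4 * T.card := by
    refine hcard.trans (hM.edgeCount_le.trans ?_)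
    simp
  have hclique : ∀ q ∈ Q, q ∉ Q0 → ∀ a b : (T : Set V), G.Adj q a → G.Adj q b → a ≠ b →
      M.Adj a b := by
    intro q hq hq0 a b ha hb hab
    by_contra hM'
    have hlt : M < hubGraph G (T : Set V) (insert q Q0) (Function.update x q a) := by
      refine lt_of_le_not_ge ?_ ?_
      · rintro c d ⟨hcd, h | ⟨q', hq', h⟩⟩
        · exact ⟨hcd, Or.inl h⟩
        · refine ⟨hcd, Or.inr ⟨q', Finset.mem_insert_of_mem hq', ?_⟩⟩
          rw [Function.update_of_ne (fun h : q' = q => hq0 (h ▸ hq'))]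
          exact h
      · intro hle
        refine hM' (hle (v := a) (w := b) ⟨hab, Or.inr ⟨q, Finset.mem_insert_self _ _, Or.inl ⟨?_, hb⟩⟩⟩)
        simp
    have hlt' : edgeCount M < edgeCount (hubGraph G (T : Set V) (insert q Q0) (Function.update x q a)) :=
      Set.ncard_lt_ncard (edgeSet_ssubset_edgeSet.2 hlt) (Set.toFinite _)
    have := hmax (insert q Q0, Function.update x q a) ⟨?_, ?_, ?_⟩
    · simp only [Finset.card_insert_of_notMem hq0] at this
      omega
    · exact Finset.insert_subset hq hQ0
    · intro q' hq'
      dsimp only at hq' ⊢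
      by_cases h : q' = q
      · subst h; simpa using ha
      · rw [Function.update_of_ne h]
        exact hx q' (Finset.mem_of_mem_insert_of_ne hq' h)
    · dsimp only
      rw [Finset.card_insert_of_notMem hq0]
      omega
  -- the neighbourhoods of the remaining vertices are cliques of the planar graph `M`
  let Q1 : Finset V := Q \ Q0
  let N : Q1 → Finset (T : Set V) := fun q => Finset.univ.filter fun a => G.Adj q.1 a.1
  have hQ1 : ∀ q : Q1, q.1 ∈ Q ∧ q.1 ∉ Q0 := fun q => Finset.mem_sdiff.1 q.2
  have hNcard : ∀ q : Q1, 3 ≤ (N q).card := by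
    intro q
    refine (hdeg q.1 (hQ1 q).1).trans ?_
    rw [← Finset.card_map ⟨Subtype.val, Subtype.val_injective⟩ (s := N q)]
    refine Finset.card_le_card ?_
    intro y hy
    simp only [Finset.mem_filter, Finset.mem_univ, true_and] at hy
    simp only [N, Finset.mem_map, Finset.mem_filter, Finset.mem_univ, true_and,
      Function.Embedding.coeFn_mk]
    exact ⟨⟨y, hN q.1 (hQ1 q).1 y hy⟩, hy, rfl⟩
  have h2 := card_le_of_clique_sets hM N (fun q => Finset.card_pos.1 (by have := hNcard q; omega))
    (fun q a ha b hb hab => hclique q.1 (hQ1 q).1 (hQ1 q).2 a b (by simpa [N] using ha)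
      (by simpa [N] using hb) hab) ?_
  · have h3 : Q1.card ≤ 512 * T.card := by
      simpa using h2
    have h4 : Q.card ≤ Q1.card + Q0.card := by
      have := Finset.card_sdiff_add_card_eq_card hQ0
      simp only [Q1]; omega
    omega
  · intro A
    by_contra hcon
    push Not at hcon
    obtain ⟨q1, m1, q2, m2, q3, m3, h12, h13, h23⟩ := Finset.two_lt_card.1 hcon
    simp only [Finset.mem_filter, Finset.mem_univ, true_and] at m1 m2 m3
    have hA : 2 < A.card := by rw [← m1]; exact hNcard q1
    obtain ⟨t1, n1, t2, n2, t3, n3, g12, g13, g23⟩ := Finset.two_lt_card.1 hA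
    have hadj : ∀ q : Q1, N q = A → ∀ t ∈ A, G.Adj q.1 t.1 := by
      intro q hq t ht
      rw [← hq] at ht
      simpa [N] using ht
    refine hG.no_K33 ![q1.1, q2.1, q3.1] ![t1.1, t2.1, t3.1] ?_ ?_ ?_ ?_
    · intro i j hij
      fin_cases i <;> fin_cases j <;> simp at hij ⊢ <;>
        first | exact absurd hij (by assumption) | exact absurd hij.symm (by assumption)
    · intro i j hij
      fin_cases i <;> fin_cases j <;> simp at hij ⊢ <;>
        first | exact absurd hij (by assumption) | exact absurd hij.symm (by assumption)
    · have hne : ∀ (q : Q1) (t : (T : Set V)), q.1 ≠ t.1 := fun q t h =>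
        hQT q.1 (hQ1 q).1 (h ▸ t.2)
      intro i j
      fin_cases i <;> fin_cases j <;> exact hne _ _
    · intro i j
      fin_cases i <;> fin_cases j <;> exact hadj _ (by assumption) _ (by assumption)

/-! ### The number of planar graphs is at most exponential times factorial -/

/-- All planar graphs on the finite vertex type `V`. -/
noncomputable def planarFin (V : Type) [Finite V] : Finset (SimpleGraph V) :=
  (Set.toFinite {G : SimpleGraph V | IsPlanar G}).toFinset

theorem mem_planarFin {V : Type} [Finite V] {G : SimpleGraph V} :
    G ∈ planarFin V ↔ IsPlanar G := by
  simp [planarFin]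

/-- The neighbours of a vertex as a finite set. -/
noncomputable def nb {V : Type*} [Finite V] (G : SimpleGraph V) (v : V) : Finset V :=
  (Set.toFinite (G.neighborSet v)).toFinset

@[simp] theorem mem_nb {V : Type*} [Finite V] {G : SimpleGraph V} {v w : V} :
    w ∈ nb G v ↔ G.Adj v w := by
  simp [nb]

theorem card_nb {V : Type*} [Finite V] (G : SimpleGraph V) (v : V) :
    (nb G v).card = vertexDegree G v := by
  unfold nb vertexDegree
  rw [Set.ncard_eq_toFinset_card _ (Set.toFinite _)]

theorem planarFin_card_congr {V U : Type} [Finite V] [Finite U] (e : V ≃ U) :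
    (planarFin V).card = (planarFin U).card := by
  have key : ∀ {V U : Type} [Finite V] [Finite U] (e : V ≃ U),
      (planarFin V).card ≤ (planarFin U).card := by
    intro V U _ _ e
    refine Finset.card_le_card_of_injOn (fun G => G.comap e.symm) ?_ ?_
    · intro G hG
      rw [Finset.mem_coe, mem_planarFin] at hG ⊢
      exact hG.of_injective e.symm e.symm.injective fun a b h => h
    · intro G _ K _ h
      ext a b
      have h' : ∀ x y, (G.comap e.symm).Adj x y ↔ (K.comap e.symm).Adj x y := by
        intro x y; rw [show G.comap e.symm = K.comap e.symm from h]
      simpa using h' (e a) (e b)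
  exact le_antisymm (key e) (key e.symm)

/-- A vertex whose removal by contraction can be encoded with `O(n)` choices. -/
def GoodVertex {V : Type*} (D : ℕ) (G : SimpleGraph V) (v : V) : Prop :=
  vertexDegree G v ≤ 2 ∨ (vertexDegree G v ≤ D ∧ ∃ u, G.Adj v u ∧ vertexDegree G u ≤ D)

open Classical in
theorem IsPlanar.good_vertices {V : Type} [Fintype V] {G : SimpleGraph V} (hG : IsPlanar G) :
    Fintype.card V ≤ 2 * (Finset.univ.filter (GoodVertex 10000 G)).card := by
  set T := Finset.univ.filter fun v => 10000 < vertexDegree G v with hT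
  set Q := Finset.univ.filter fun v => 3 ≤ vertexDegree G v ∧ vertexDegree G v ≤ 10000 ∧
    ∀ u, G.Adj v u → 10000 < vertexDegree G u with hQ
  have h1 : Q.card ≤ 516 * T.card := by
    refine hG.card_outside T Q ?_ ?_ ?_
    · intro q hq
      simp only [hQ, hT, Finset.mem_filter, Finset.mem_univ, true_and] at hq ⊢
      omega
    · intro q hq y hy
      simp only [hQ, hT, Finset.mem_filter, Finset.mem_univ, true_and] at hq ⊢
      exact hq.2.2 y hy
    · intro q hq
      simp only [hQ, Finset.mem_filter, Finset.mem_univ, true_and] at hq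
      have := card_nb G q
      rw [show nb G q = Finset.univ.filter (G.Adj q) by ext; simp] at this
      omega
  have h2 : 10000 * T.card ≤ 8 * Fintype.card V := by
    have hs := sum_vertexDegree G
    have he := hG.edgeCount_le
    calc 10000 * T.card = ∑ v ∈ T, 10000 := by simp [mul_comm]
      _ ≤ ∑ v ∈ T, vertexDegree G v := Finset.sum_le_sum fun v hv => by
        simp only [hT, Finset.mem_filter, Finset.mem_univ, true_and] at hv
        omega
      _ ≤ ∑ v, vertexDegree G v := Finset.sum_le_sum_of_subset (Finset.subset_univ _)
      _ ≤ _ := by omega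
  have h3 : (Finset.univ : Finset V) ⊆ (Finset.univ.filter (GoodVertex 10000 G)) ∪ (T ∪ Q) := by
    intro v _
    simp only [Finset.mem_union, hT, hQ, Finset.mem_filter, Finset.mem_univ, true_and, GoodVertex]
    by_contra hcon
    push Not at hcon
    obtain ⟨⟨a, b⟩, c, d⟩ := hcon
    obtain ⟨u, hu, hu'⟩ := d (by omega) c
    have := b c u hu
    omega
  have h4 := (Finset.card_le_card h3).trans (Finset.card_union_le _ _)
  have h5 := Finset.card_union_le T Q
  rw [Finset.card_univ] at h4
  omega

open Classical in
/-- The possible pairs `(N(v) \ {u}, N(u) \ {v})` when a good vertex `v` has been contracted into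
a neighbour `u` whose neighbourhood afterwards is `N`. -/
noncomputable def splitCodes {U : Type} (D : ℕ) (N : Finset U) : Finset (Finset U × Finset U) :=
  {(∅, N)} ∪ N.image (fun b => ({b}, N)) ∪ N.image (fun b => ({b}, N.erase b)) ∪
    (if N.card ≤ 2 * D then N.powerset ×ˢ N.powerset else ∅)

theorem splitCodes_card {U : Type} (D : ℕ) (N : Finset U) :
    (splitCodes D N).card ≤ 1 + 2 * N.card + 16 ^ D := by
  classical
  unfold splitCodes
  refine (Finset.card_union_le _ _).trans ?_
  refine Nat.add_le_add ?_ ?_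
  · refine (Finset.card_union_le _ _).trans ?_
    have h1 := Finset.card_union_le ({(∅, N)} : Finset (Finset U × Finset U))
      (N.image (fun b => ({b}, N)))
    have h2 : (N.image (fun b => (({b} : Finset U), N))).card ≤ N.card := Finset.card_image_le
    have h3 : (N.image (fun b => (({b} : Finset U), N.erase b))).card ≤ N.card :=
      Finset.card_image_le
    rw [Finset.card_singleton] at h1
    omega
  · split_ifs with h
    · rw [Finset.card_product, Finset.card_powerset, ← pow_add]
      calc 2 ^ (N.card + N.card) ≤ 2 ^ (4 * D) := Nat.pow_le_pow_right (by norm_num) (by omega)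
        _ = 16 ^ D := by rw [pow_mul]; norm_num
    · simp

theorem exists_split {V : Type} [Fintype V] {D : ℕ} {G : SimpleGraph V} {v : V}
    (hgood : GoodVertex D G v) (hv : ∃ u, G.Adj v u) :
    ∃ (u : {w // w ≠ v}) (A B : Finset {w // w ≠ v}), G.Adj v u ∧
      (∀ x, x ∈ A ↔ G.Adj v x ∧ x ≠ u) ∧ (∀ x, x ∈ B ↔ G.Adj u x) ∧
      (A, B) ∈ splitCodes D (nb (contract G v u) u) := by
  classical
  have hu : ∃ u, G.Adj v u ∧ (vertexDegree G v ≤ 2 ∨ (vertexDegree G v ≤ D ∧ vertexDegree G u ≤ D)) := by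
    rcases hgood with h | ⟨h, u, hu, hu'⟩
    · obtain ⟨u, hu⟩ := hv
      exact ⟨u, hu, Or.inl h⟩
    · exact ⟨u, hu, Or.inr ⟨h, hu'⟩⟩
  obtain ⟨u, hvu, hcase⟩ := hu
  let u' : {w // w ≠ v} := ⟨u, hvu.ne'⟩
  let A : Finset {w // w ≠ v} := Finset.univ.filter fun x => G.Adj v x ∧ x ≠ u'
  let B : Finset {w // w ≠ v} := Finset.univ.filter fun x => G.Adj u x
  set N := nb (contract G v u) u' with hN
  have hNAB : N = A ∪ B := by
    ext x
    have hux : x ≠ u' ↔ x.1 ≠ u := by simp [u', Subtype.ext_iff]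
    simp only [hN, mem_nb, contract, A, B, Finset.mem_union, Finset.mem_filter, Finset.mem_univ,
      true_and]
    constructor
    · rintro ⟨hne, h | ⟨-, h⟩ | ⟨h, -⟩⟩
      · exact Or.inr h
      · exact Or.inl ⟨h, hne.symm⟩
      · exact absurd (Subtype.ext h.symm) hne
    · rintro (⟨h, hne⟩ | h)
      · exact ⟨hne.symm, Or.inr (Or.inl ⟨rfl, h⟩)⟩
      · exact ⟨fun h' => h.ne (congrArg Subtype.val h'), Or.inl h⟩
  have hA1 : A.card + 1 ≤ vertexDegree G v := by
    rw [← card_nb]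
    have : (insert u (A.map ⟨Subtype.val, Subtype.val_injective⟩)) ⊆ nb G v := by
      intro x hx
      rw [Finset.mem_insert, Finset.mem_map] at hx
      rcases hx with rfl | ⟨y, hy, rfl⟩
      · simpa using hvu
      · simp only [A, Finset.mem_filter] at hy
        simpa using hy.2.1
    have h := Finset.card_le_card this
    rw [Finset.card_insert_of_notMem, Finset.card_map] at h
    · exact h
    · rw [Finset.mem_map]
      rintro ⟨y, hy, hyu⟩
      simp only [A, Finset.mem_filter] at hy
      exact hy.2.2 (Subtype.ext hyu)
  have hB1 : B.card ≤ vertexDegree G u := by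
    rw [← card_nb, ← Finset.card_map ⟨Subtype.val, Subtype.val_injective⟩ (s := B)]
    refine Finset.card_le_card ?_
    intro x hx
    rw [Finset.mem_map] at hx
    obtain ⟨y, hy, rfl⟩ := hx
    simpa [B] using hy
  refine ⟨u', A, B, hvu, by simp [A], by simp [B, u'], ?_⟩
  simp only [splitCodes, Finset.mem_union, Finset.mem_singleton, Finset.mem_image, Prod.mk.injEq]
  rw [← hN]
  rcases hcase with h2 | ⟨h3, h4⟩
  · have hA : A.card = 0 ∨ A.card = 1 := by omega
    left
    rcases hA with hA | hA
    · left; left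
      rw [Finset.card_eq_zero] at hA
      rw [hNAB, hA]; simp
    · obtain ⟨b, hb⟩ := Finset.card_eq_one.1 hA
      have hbN : b ∈ N := by rw [hNAB, hb]; simp
      by_cases hbB : b ∈ B
      · left; right
        refine ⟨b, hbN, hb.symm, ?_⟩
        rw [hNAB, hb]
        exact Finset.insert_eq_of_mem hbB
      · right
        refine ⟨b, hbN, hb.symm, ?_⟩
        rw [hNAB, hb]
        ext y
        simp only [Finset.mem_erase, Finset.mem_union, Finset.mem_singleton]
        grind
  · right
    have : N.card ≤ 2 * D := by
      rw [hNAB]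
      have := Finset.card_union_le A B
      omega
    rw [if_pos this, Finset.mem_product, Finset.mem_powerset, Finset.mem_powerset]
    rw [hNAB]
    exact ⟨Finset.subset_union_left, Finset.subset_union_right⟩

/-- `G` is determined by the contraction of `uv`, by `u`, and by the two neighbourhoods. -/
theorem contract_recover {V : Type} {G K : SimpleGraph V} {v : V} {u : {w // w ≠ v}}
    {A B : Finset {w // w ≠ v}}
    (hG : G.Adj v u) (hGA : ∀ x, x ∈ A ↔ G.Adj v x ∧ x ≠ u) (hGB : ∀ x, x ∈ B ↔ G.Adj u x)
    (hK : K.Adj v u) (hKA : ∀ x, x ∈ A ↔ K.Adj v x ∧ x ≠ u) (hKB : ∀ x, x ∈ B ↔ K.Adj u x)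
    (h : contract G v u = contract K v u) : G ≤ K := by
  have hv : ∀ x, G.Adj v x → K.Adj v x := by
    intro x hx
    by_cases hxu : x = u.1
    · rw [hxu]; exact hK
    · exact ((hKA ⟨x, hx.ne'⟩).1 ((hGA ⟨x, hx.ne'⟩).2 ⟨hx, fun h => hxu (congrArg Subtype.val h)⟩)).1
  have hu : ∀ x, G.Adj u x → K.Adj u x := by
    intro x hx
    by_cases hxv : x = v
    · rw [hxv]; exact hK.symm
    · exact (hKB ⟨x, hxv⟩).1 ((hGB ⟨x, hxv⟩).2 hx)
  intro a b hab
  by_cases hav : a = v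
  · subst hav; exact hv b hab
  by_cases hbv : b = v
  · subst hbv; exact (hv a hab.symm).symm
  by_cases hau : a = u.1
  · rw [hau] at hab ⊢; exact hu b hab
  by_cases hbu : b = u.1
  · rw [hbu] at hab ⊢; exact (hu a hab.symm).symm
  have h1 : (contract G v u).Adj ⟨a, hav⟩ ⟨b, hbv⟩ :=
    ⟨fun h => hab.ne (congrArg Subtype.val h), Or.inl hab⟩
  rw [h] at h1
  rcases h1.2 with h2 | ⟨h2, -⟩ | ⟨h2, -⟩
  · exact h2
  · exact absurd h2 hau
  · exact absurd h2 hbu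

open Classical in
theorem count_good {V : Type} [Fintype V] (D : ℕ) (v : V) :
    ((planarFin V).filter fun G => GoodVertex D G v).card ≤
      (18 + 16 ^ D) * Fintype.card V * (planarFin {w // w ≠ v}).card := by
  set F := planarFin {w // w ≠ v} with hF
  set n := Fintype.card {w // w ≠ v} with hn
  have hnV : n ≤ Fintype.card V := Fintype.card_subtype_le _
  have hpos : 1 ≤ Fintype.card V := Fintype.card_pos_iff.2 ⟨v⟩
  set X1 := (planarFin V).filter fun G => ∀ u, ¬ G.Adj v u with hX1
  set X2 := (planarFin V).filter fun G => GoodVertex D G v ∧ ∃ u, G.Adj v u with hX2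
  have h0 : ((planarFin V).filter fun G => GoodVertex D G v) ⊆ X1 ∪ X2 := by
    intro G hG
    simp only [Finset.mem_filter, Finset.mem_union, hX1, hX2] at hG ⊢
    by_cases h : ∃ u, G.Adj v u
    · exact Or.inr ⟨hG.1, hG.2, h⟩
    · exact Or.inl ⟨hG.1, by push Not at h; exact h⟩
  have h1 : X1.card ≤ F.card := by
    refine Finset.card_le_card_of_injOn (fun G => G.comap Subtype.val) ?_ ?_
    · intro G hG
      simp only [hX1, Finset.coe_filter, Set.mem_ofPred_eq, mem_planarFin] at hG
      rw [Finset.mem_coe, hF, mem_planarFin]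
      exact hG.1.of_injective _ Subtype.val_injective fun a b h => h
    · intro G hG K hK h
      simp only [hX1, Finset.coe_filter, Set.mem_ofPred_eq] at hG hK
      have h' : ∀ x y : {w // w ≠ v}, G.Adj x y ↔ K.Adj x y := by
        intro x y
        have : (G.comap Subtype.val).Adj x y ↔ (K.comap Subtype.val).Adj x y := by
          rw [show G.comap Subtype.val = K.comap Subtype.val from h]
        exact this
      ext a b
      by_cases ha : a = v
      · subst ha; simp [hG.2, hK.2]
      by_cases hb : b = v
      · subst hb; rw [G.adj_comm, K.adj_comm]; simp [hG.2, hK.2]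
      exact h' ⟨a, ha⟩ ⟨b, hb⟩
  have h2 : X2.card ≤ ∑ G0 ∈ F, ∑ u : {w // w ≠ v}, (splitCodes D (nb G0 u)).card := by
    have hcode : ∀ G ∈ X2, ∃ c : (Σ _ : SimpleGraph {w // w ≠ v}, Σ _ : {w // w ≠ v},
        Finset {w // w ≠ v} × Finset {w // w ≠ v}), c.1 = contract G v c.2.1 ∧ G.Adj v c.2.1 ∧
        (∀ x, x ∈ c.2.2.1 ↔ G.Adj v x ∧ x ≠ c.2.1) ∧ (∀ x, x ∈ c.2.2.2 ↔ G.Adj c.2.1 x) ∧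
        c.2.2 ∈ splitCodes D (nb c.1 c.2.1) := by
      intro G hG
      simp only [hX2, Finset.mem_filter] at hG
      obtain ⟨u, A, B, h1, h2, h3, h4⟩ := exists_split hG.2.1 hG.2.2
      exact ⟨⟨contract G v u, u, A, B⟩, rfl, h1, h2, h3, h4⟩
    rcases X2.eq_empty_or_nonempty with hemp | ⟨G1, hG1⟩
    · rw [hemp]; simp
    have : Nonempty (Σ _ : SimpleGraph {w // w ≠ v}, Σ _ : {w // w ≠ v},
        Finset {w // w ≠ v} × Finset {w // w ≠ v}) := ⟨(hcode G1 hG1).choose⟩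
    choose! code hc using hcode
    have hcard : (F.sigma fun G0 => (Finset.univ : Finset {w // w ≠ v}).sigma
        fun u => splitCodes D (nb G0 u)).card =
        ∑ G0 ∈ F, ∑ u : {w // w ≠ v}, (splitCodes D (nb G0 u)).card := by
      rw [Finset.card_sigma]
      exact Finset.sum_congr rfl fun G0 _ => Finset.card_sigma _ _
    rw [← hcard]
    refine Finset.card_le_card_of_injOn code ?_ ?_
    · intro G hG
      obtain ⟨c1, c2, c3, c4, c5⟩ := hc G hG
      rw [Finset.mem_coe, Finset.mem_sigma, Finset.mem_sigma]
      refine ⟨?_, Finset.mem_univ _, c5⟩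
      rw [hF, mem_planarFin, c1]
      simp only [hX2, Finset.coe_filter, Set.mem_ofPred_eq, mem_planarFin] at hG
      exact hG.1.of_isMinor (contract_isMinor c2)
    · intro G hG K hK h
      obtain ⟨c1, c2, c3, c4, c5⟩ := hc G hG
      obtain ⟨d1, d2, d3, d4, d5⟩ := hc K hK
      rw [← h] at d1 d2 d3 d4 d5
      have heq := c1.symm.trans d1
      exact le_antisymm (contract_recover c2 c3 c4 d2 d3 d4 heq)
        (contract_recover d2 d3 d4 c2 c3 c4 heq.symm)
  have h3 : ∀ G0 ∈ F, ∑ u : {w // w ≠ v}, (splitCodes D (nb G0 u)).card ≤ (17 + 16 ^ D) * n := by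
    intro G0 hG0
    rw [hF, mem_planarFin] at hG0
    have he := hG0.edgeCount_le
    have hs := sum_vertexDegree G0
    calc _ ≤ ∑ u : {w // w ≠ v}, (1 + 2 * vertexDegree G0 u + 16 ^ D) := by
          refine Finset.sum_le_sum fun u _ => ?_
          rw [← card_nb]; exact splitCodes_card D _
      _ = n + 2 * (2 * edgeCount G0) + n * 16 ^ D := by
          rw [Finset.sum_add_distrib, Finset.sum_add_distrib, ← Finset.mul_sum, hs]
          simp [hn]
      _ ≤ _ := by rw [← hn] at he; nlinarith
  have h4 : X2.card ≤ F.card * ((17 + 16 ^ D) * n) := by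
    refine h2.trans ?_
    rw [← smul_eq_mul, ← Finset.sum_const]
    exact Finset.sum_le_sum h3
  have h5 := (Finset.card_le_card h0).trans (Finset.card_union_le _ _)
  calc _ ≤ F.card + F.card * ((17 + 16 ^ D) * n) := h5.trans (Nat.add_le_add h1 h4)
    _ ≤ F.card * Fintype.card V + F.card * ((17 + 16 ^ D) * Fintype.card V) := by
        gcongr
        exact Nat.le_mul_of_pos_right _ hpos
    _ = _ := by ring

open Classical in
theorem planarFin_succ (D : ℕ) (hD : D = 10000) (n : ℕ) :
    (planarFin (Fin (n + 1))).card ≤ 2 * (18 + 16 ^ D) * (n + 1) * (planarFin (Fin n)).card := by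
  set C := 18 + 16 ^ D with hC
  have h1 : (planarFin (Fin (n + 1))).card * (n + 1) ≤
      2 * ∑ v, ((planarFin (Fin (n + 1))).filter fun G => GoodVertex D G v).card := by
    have hsw : ∑ v : Fin (n + 1), ((planarFin (Fin (n + 1))).filter fun G => GoodVertex D G v).card =
        ∑ G ∈ planarFin (Fin (n + 1)), (Finset.univ.filter (GoodVertex D G)).card := by
      simp only [Finset.card_filter]
      exact Finset.sum_comm
    rw [hsw, Finset.mul_sum, ← smul_eq_mul, ← Finset.sum_const]
    refine Finset.sum_le_sum fun G hG => ?_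
    rw [mem_planarFin] at hG
    rw [hD]
    simpa using hG.good_vertices
  have h2 : ∀ v : Fin (n + 1), ((planarFin (Fin (n + 1))).filter fun G => GoodVertex D G v).card ≤
      C * (n + 1) * (planarFin (Fin n)).card := by
    intro v
    have := count_good D v
    rw [Fintype.card_fin, planarFin_card_congr (finSuccAboveEquiv v).symm] at this
    exact this
  have h3 : ∑ v, ((planarFin (Fin (n + 1))).filter fun G => GoodVertex D G v).card ≤
      (n + 1) * (C * (n + 1) * (planarFin (Fin n)).card) := by
    calc _ ≤ ∑ _v : Fin (n + 1), C * (n + 1) * (planarFin (Fin n)).card :=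
          Finset.sum_le_sum fun v _ => h2 v
      _ = _ := by simp
  have h4 : (planarFin (Fin (n + 1))).card * (n + 1) ≤
      (2 * C * (n + 1) * (planarFin (Fin n)).card) * (n + 1) := by
    calc _ ≤ _ := h1
      _ ≤ 2 * ((n + 1) * (C * (n + 1) * (planarFin (Fin n)).card)) := Nat.mul_le_mul_left 2 h3
      _ = _ := by ring
  exact Nat.le_of_mul_le_mul_right h4 (Nat.succ_pos n)

/-- The number of labelled planar graphs on `n` vertices is at most `C ^ n * n!`. -/
theorem exists_growth :
    ∃ C : ℕ, 1 ≤ C ∧ ∀ n, (planarFin (Fin n)).card ≤ C ^ n * n.factorial := by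
  obtain ⟨D, hD⟩ : ∃ D : ℕ, D = 10000 := ⟨_, rfl⟩
  refine ⟨2 * (18 + 16 ^ D), Nat.mul_pos two_pos (Nat.add_pos_left (by norm_num) _), fun n => ?_⟩
  induction n with
  | zero =>
    have : (planarFin (Fin 0)).card ≤ 1 := by
      rw [Finset.card_le_one]
      intro a _ b _
      ext x; exact x.elim0
    simpa using this
  | succ n ih =>
    calc _ ≤ _ := planarFin_succ D hD n
      _ ≤ 2 * (18 + 16 ^ D) * (n + 1) * ((2 * (18 + 16 ^ D)) ^ n * n.factorial) :=
        Nat.mul_le_mul_left _ ih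
      _ = _ := by rw [pow_succ, Nat.factorial_succ]; ring

/-! ### Counting families and the lower bound for connected planar graphs -/

/-- The finset of planar graphs on `Fin n` with `m` edges. -/
noncomputable def PF (n m : ℕ) : Finset (SimpleGraph (Fin n)) :=
  (Set.toFinite (planarSet n m)).toFinset

@[simp] theorem mem_PF {n m : ℕ} {G : SimpleGraph (Fin n)} :
    G ∈ PF n m ↔ IsPlanar G ∧ edgeCount G = m := by
  simp [PF, planarSet]

/-- The finset of connected planar graphs on `Fin n` with `m` edges. -/
noncomputable def CF (n m : ℕ) : Finset (SimpleGraph (Fin n)) :=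
  (Set.toFinite {G | G ∈ planarSet n m ∧ G.Connected}).toFinset

@[simp] theorem mem_CF {n m : ℕ} {G : SimpleGraph (Fin n)} :
    G ∈ CF n m ↔ (IsPlanar G ∧ edgeCount G = m) ∧ G.Connected := by
  simp [CF, planarSet]

theorem CF_subset_PF (n m : ℕ) : CF n m ⊆ PF n m := by
  intro G hG
  rw [mem_CF] at hG
  exact mem_PF.2 hG.1

theorem PF_subset_planarFin (n m : ℕ) : PF n m ⊆ planarFin (Fin n) := by
  intro G hG
  rw [mem_PF] at hG
  exact mem_planarFin.2 hG.1

/-- A path `2, 3, …, n-1` joined completely to two adjacent hubs `0, 1`. -/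
def doubleFan (n : ℕ) : SimpleGraph (Fin n) where
  Adj x y := x ≠ y ∧ (x.1 < 2 ∨ y.1 < 2 ∨ x.1 + 1 = y.1 ∨ y.1 + 1 = x.1)
  symm := ⟨by rintro x y ⟨h, h'⟩; exact ⟨h.symm, by tauto⟩⟩
  loopless := ⟨fun x h => h.1 rfl⟩

/-- The Hamiltonian path `0, 1, …, n-1`. -/
def hamPath (n : ℕ) : SimpleGraph (Fin n) where
  Adj x y := x.1 + 1 = y.1 ∨ y.1 + 1 = x.1
  symm := ⟨by rintro x y h; tauto⟩
  loopless := ⟨fun x h => by omega⟩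

theorem hamPath_le (n : ℕ) : hamPath n ≤ doubleFan n := by
  intro x y h
  refine ⟨?_, by simp only [hamPath] at h; omega⟩
  rintro rfl
  simp only [hamPath] at h; omega

/-- `S` lies entirely to the left of `T`. -/
def LeftOf {n : ℕ} (S T : Set (Fin n)) : Prop := ∀ s ∈ S, ∀ t ∈ T, s < t

theorem doubleFan_left_step {n : ℕ} {S : Set (Fin n)} (hS : ConnIn (doubleFan n) S)
    (hub : ∀ x ∈ S, 2 ≤ x.1) {s t : Fin n} (hs : s ∈ S) (ht : t ∉ S) :
    (s < t → ∀ x ∈ S, x < t) ∧ (t < s → ∀ x ∈ S, t < x) := by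
  constructor
  · intro hst
    exact hS.2 {x | x < t} ⟨s, hs, hst⟩ fun x hx y hy hxy hxt => by
      have h1 := hub x hx
      have h2 := hub y hy
      have h3 : y ≠ t := fun h => ht (h ▸ hy)
      have h4 := hxy.2
      simp only [Set.mem_ofPred_eq, Fin.lt_def] at hxt ⊢
      have : y.1 ≠ t.1 := fun h => h3 (Fin.ext h)
      omega
  · intro hst
    exact hS.2 {x | t < x} ⟨s, hs, hst⟩ fun x hx y hy hxy hxt => by
      have h1 := hub x hx
      have h2 := hub y hy
      have h3 : y ≠ t := fun h => ht (h ▸ hy)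
      have h4 := hxy.2
      simp only [Set.mem_ofPred_eq, Fin.lt_def] at hxt ⊢
      have : y.1 ≠ t.1 := fun h => h3 (Fin.ext h)
      omega

theorem doubleFan_leftOf {n : ℕ} {S T : Set (Fin n)} (hS : ConnIn (doubleFan n) S)
    (hT : ConnIn (doubleFan n) T) (hubS : ∀ x ∈ S, 2 ≤ x.1) (hubT : ∀ x ∈ T, 2 ≤ x.1)
    (hd : Disjoint S T) : LeftOf S T ∨ LeftOf T S := by
  obtain ⟨s, hs⟩ := hS.1
  obtain ⟨t, ht⟩ := hT.1
  have hne : ∀ x ∈ S, x ∉ T := fun x hx hx' => Set.disjoint_left.1 hd hx hx'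
  have hne' : ∀ x ∈ T, x ∉ S := fun x hx hx' => Set.disjoint_left.1 hd hx' hx
  rcases lt_trichotomy s t with h | h | h
  · left
    intro x hx y hy
    exact (doubleFan_left_step hT hubT ht (hne x hx)).2
      ((doubleFan_left_step hS hubS hs (hne' t ht)).1 h x hx) y hy
  · exact absurd ht (h ▸ hne s hs)
  · right
    intro y hy x hx
    exact (doubleFan_left_step hT hubT ht (hne x hx)).1
      ((doubleFan_left_step hS hubS hs (hne' t ht)).2 h x hx) y hy

/-- The branch sets of a minor model that avoid the hubs are arranged along the path, so a
branch set has at most one neighbour on each side. -/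
theorem doubleFan_unique {n : ℕ} {S T U : Set (Fin n)}
    (hubS : ∀ x ∈ S, 2 ≤ x.1) (hubT : ∀ x ∈ T, 2 ≤ x.1) (hubU : ∀ x ∈ U, 2 ≤ x.1)
    (hd : Disjoint T U)
    (hST : ∃ u ∈ S, ∃ v ∈ T, (doubleFan n).Adj u v)
    (hSU : ∃ u ∈ S, ∃ v ∈ U, (doubleFan n).Adj u v) :
    ¬ (LeftOf S T ∧ LeftOf S U) ∧ ¬ (LeftOf T S ∧ LeftOf U S) := by
  obtain ⟨s, hs, t, ht, -, hst⟩ := hST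
  obtain ⟨s', hs', u, hu, -, hsu⟩ := hSU
  have h1 := hubS s hs
  have h2 := hubS s' hs'
  have h3 := hubT t ht
  have h4 := hubU u hu
  have hne : t ≠ u := fun h => Set.disjoint_left.1 hd ht (h ▸ hu)
  have hne' : t.1 ≠ u.1 := fun h => hne (Fin.ext h)
  constructor
  · rintro ⟨a, b⟩
    have a1 := a s hs t ht
    have a2 := a s' hs' t ht
    have b1 := b s hs u hu
    have b2 := b s' hs' u hu
    simp only [Fin.lt_def] at *
    omega
  · rintro ⟨a, b⟩
    have a1 := a t ht s hs
    have a2 := a t ht s' hs'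
    have b1 := b u hu s hs
    have b2 := b u hu s' hs'
    simp only [Fin.lt_def] at *
    omega

/-- After deleting any two vertices the graph still has a triangle, a four-cycle or a vertex
with three neighbours. -/
def TwoRobust {α : Type*} (H : SimpleGraph α) : Prop :=
  ∀ p q : α, ∃ R : α → Prop, ¬ R p ∧ ¬ R q ∧
    ((∃ a, R a ∧ ∃ b c d, R b ∧ R c ∧ R d ∧ b ≠ c ∧ b ≠ d ∧ c ≠ d ∧
      H.Adj a b ∧ H.Adj a c ∧ H.Adj a d) ∨
    (∃ a, R a) ∧ ∀ a, R a → ∃ b c, R b ∧ R c ∧ b ≠ c ∧ H.Adj a b ∧ H.Adj a c)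

theorem twoRobust_not_minor {α : Type*} [Finite α] [Nonempty α] {H : SimpleGraph α} (hH : TwoRobust H) (n : ℕ) :
    ¬ IsMinor H (doubleFan n) := by
  classical
  rw [isMinor_iff]
  rintro ⟨f, hf, hfd, hfa⟩
  obtain ⟨p, hp⟩ : ∃ p, ∀ a, a ≠ p → ∀ x ∈ f a, x.1 ≠ 0 := by
    by_cases h : ∃ p, ∃ x ∈ f p, x.1 = 0
    · obtain ⟨p, x, hx, hx0⟩ := h
      refine ⟨p, fun a ha y hy hy0 => ?_⟩
      have : x = y := Fin.ext (by omega)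
      exact Set.disjoint_left.1 (hfd a p ha) hy (this ▸ hx)
    · push Not at h
      exact ⟨Classical.arbitrary α, fun a _ => h a⟩
  obtain ⟨q, hq⟩ : ∃ p, ∀ a, a ≠ p → ∀ x ∈ f a, x.1 ≠ 1 := by
    by_cases h : ∃ p, ∃ x ∈ f p, x.1 = 1
    · obtain ⟨p, x, hx, hx0⟩ := h
      refine ⟨p, fun a ha y hy hy0 => ?_⟩
      have : x = y := Fin.ext (by omega)
      exact Set.disjoint_left.1 (hfd a p ha) hy (this ▸ hx)
    · push Not at h
      exact ⟨Classical.arbitrary α, fun a _ => h a⟩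
  obtain ⟨R, hRp, hRq, hR⟩ := hH p q
  have hub : ∀ a, R a → ∀ x ∈ f a, 2 ≤ x.1 := by
    intro a ha x hx
    have h1 := hp a (fun h => hRp (h ▸ ha)) x hx
    have h2 := hq a (fun h => hRq (h ▸ ha)) x hx
    omega
  have hside : ∀ a b, R a → R b → a ≠ b → LeftOf (f a) (f b) ∨ LeftOf (f b) (f a) :=
    fun a b ha hb hab => doubleFan_leftOf (hf a) (hf b) (hub a ha) (hub b hb) (hfd a b hab)
  have huniq : ∀ a b c, R a → R b → R c → b ≠ c → H.Adj a b → H.Adj a c →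
      ¬ (LeftOf (f a) (f b) ∧ LeftOf (f a) (f c)) ∧ ¬ (LeftOf (f b) (f a) ∧ LeftOf (f c) (f a)) :=
    fun a b c ha hb hc hbc hab hac => doubleFan_unique (hub a ha) (hub b hb) (hub c hc)
      (hfd b c hbc) (hfa a b hab) (hfa a c hac)
  rcases hR with ⟨a, ha, b, c, d, hb, hc, hd, hbc, hbd, hcd, hab, hac, had⟩ | ⟨⟨a0, ha0⟩, hR⟩
  · have s1 := hside a b ha hb hab.ne
    have s2 := hside a c ha hc hac.ne
    have s3 := hside a d ha hd had.ne
    have u1 := huniq a b c ha hb hc hbc hab hac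
    have u2 := huniq a b d ha hb hd hbd hab had
    have u3 := huniq a c d ha hc hd hcd hac had
    tauto
  · -- the leftmost branch set has all its neighbours on its right
    choose pt hpt using fun a => (hf a).1
    obtain ⟨a, ha, hmin⟩ := Set.exists_min_image {a | R a} pt (Set.toFinite _) ⟨a0, ha0⟩
    obtain ⟨b, c, hb, hc, hbc, hab, hac⟩ := hR a ha
    have hl : ∀ b, R b → H.Adj a b → LeftOf (f a) (f b) := by
      intro b hb hab
      rcases hside a b ha hb hab.ne with h | h
      · exact h
      · exact absurd (h _ (hpt b) _ (hpt a)) (not_lt.2 (hmin b hb))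
    exact (huniq a b c ha hb hc hbc hab hac).1 ⟨hl b hb hab, hl c hc hac⟩

theorem twoRobust_K5 : TwoRobust (completeGraph (Fin 5)) := by
  intro p q
  refine ⟨fun x => x ≠ p ∧ x ≠ q, by simp, by simp, Or.inr ⟨?_, ?_⟩⟩
  · revert p q; decide
  · simp only [completeGraph, top_adj]
    revert p q; decide

theorem twoRobust_K33 : TwoRobust (completeBipartiteGraph (Fin 3) (Fin 3)) := by
  have h3 : ∀ p q : Fin 3, ∃ a, a ≠ p ∧ a ≠ q := by decide
  have h2 : ∀ p : Fin 3, ∃ a b, a ≠ p ∧ b ≠ p ∧ a ≠ b := by decide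
  have hmix : ∀ p q : Fin 3, (∃ a : Fin 3 ⊕ Fin 3, a ≠ Sum.inl p ∧ a ≠ Sum.inr q) ∧
      ∀ a : Fin 3 ⊕ Fin 3, a ≠ Sum.inl p ∧ a ≠ Sum.inr q → ∃ b c : Fin 3 ⊕ Fin 3,
        (b ≠ Sum.inl p ∧ b ≠ Sum.inr q) ∧ (c ≠ Sum.inl p ∧ c ≠ Sum.inr q) ∧ b ≠ c ∧
        (completeBipartiteGraph (Fin 3) (Fin 3)).Adj a b ∧
        (completeBipartiteGraph (Fin 3) (Fin 3)).Adj a c := by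
    intro p q
    obtain ⟨a, b, ha, hb, hab⟩ := h2 p
    obtain ⟨a', b', ha', hb', hab'⟩ := h2 q
    refine ⟨⟨Sum.inl a, by simpa using ha, by simp⟩, ?_⟩
    rintro (x | x) hx
    · exact ⟨Sum.inr a', Sum.inr b', by simpa using ha', by simpa using hb', by simpa using hab',
        by simp, by simp⟩
    · exact ⟨Sum.inl a, Sum.inl b, by simpa using ha, by simpa using hb, by simpa using hab,
        by simp, by simp⟩
  rintro (p | p) (q | q)
  · obtain ⟨a, ha, ha'⟩ := h3 p q
    refine ⟨fun x => x ≠ Sum.inl p ∧ x ≠ Sum.inl q, by simp, by simp, Or.inl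
      ⟨Sum.inl a, by simpa using ⟨ha, ha'⟩, Sum.inr 0, Sum.inr 1, Sum.inr 2, ?_⟩⟩
    simp
  · exact ⟨fun x => x ≠ Sum.inl p ∧ x ≠ Sum.inr q, by simp, by simp, Or.inr (hmix p q)⟩
  · exact ⟨fun x => x ≠ Sum.inl q ∧ x ≠ Sum.inr p, by simp, by simp, Or.inr (hmix q p)⟩
  · obtain ⟨a, ha, ha'⟩ := h3 p q
    refine ⟨fun x => x ≠ Sum.inr p ∧ x ≠ Sum.inr q, by simp, by simp, Or.inl
      ⟨Sum.inr a, by simpa using ⟨ha, ha'⟩, Sum.inl 0, Sum.inl 1, Sum.inl 2, ?_⟩⟩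
    simp

theorem doubleFan_planar (n : ℕ) : IsPlanar (doubleFan n) :=
  ⟨twoRobust_not_minor twoRobust_K5 n, twoRobust_not_minor twoRobust_K33 n⟩

theorem exists_edgeCount_between {V : Type*} [Finite V] {G K : SimpleGraph V} (h : G ≤ K) {m : ℕ}
    (h1 : edgeCount G ≤ m) (h2 : m ≤ edgeCount K) :
    ∃ L, G ≤ L ∧ L ≤ K ∧ edgeCount L = m := by
  obtain ⟨E, hGE, hEK, hE⟩ := Set.exists_subsuperset_card_eq (edgeSet_mono h) h1 h2
  have hd : ∀ e ∈ E, ¬ e.IsDiag := fun e he => K.not_isDiag_of_mem_edgeSet (hEK he)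
  have hes : (fromEdgeSet E).edgeSet = E := by
    rw [edgeSet_fromEdgeSet]
    ext e
    simp only [Set.mem_sdiff]
    exact ⟨fun h => h.1, fun h => ⟨h, hd e h⟩⟩
  refine ⟨fromEdgeSet E, ?_, ?_, ?_⟩
  · rw [← edgeSet_subset_edgeSet, hes]; exact hGE
  · rw [← edgeSet_subset_edgeSet, hes]; exact hEK
  · rw [edgeCount, hes, hE]

theorem range_castSucc_eq (n : ℕ) : Set.range (Fin.castSucc : Fin n → Fin (n + 1)) = {Fin.last n}ᶜ := by
  ext x
  simp only [Set.mem_range, Set.mem_compl_iff, Set.mem_singleton_iff]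
  constructor
  · rintro ⟨y, rfl⟩; exact (Fin.castSucc_lt_last y).ne
  · intro h; exact ⟨x.castPred h, Fin.castSucc_castPred x h⟩

theorem edgeCount_hamPath (n : ℕ) : edgeCount (hamPath n) ≤ n - 1 := by
  induction n with
  | zero =>
    have : (hamPath 0).edgeSet = ∅ := by
      ext e; induction e with | _ a b => exact a.elim0
    simp [edgeCount, this]
  | succ n ih =>
    rw [edgeCount_comap (hamPath (n + 1)) Fin.castSucc (Fin.castSucc_injective n) (Fin.last n)
      (range_castSucc_eq n)]
    have h1 : (hamPath (n + 1)).comap Fin.castSucc = hamPath n := by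
      ext x y; simp [hamPath]
    rw [h1]
    rcases n with _ | n
    · have : (hamPath 1).neighborSet (Fin.last 0) = ∅ := by
        ext y; have := y.2; simp [hamPath]
      simp [vertexDegree] at *
      exact ih
    · have : vertexDegree (hamPath (n + 1 + 1)) (Fin.last (n + 1)) ≤ 1 := by
        refine (Set.ncard_le_one (Set.toFinite _)).2 ?_
        intro a ha b hb
        simp only [mem_neighborSet, hamPath, Fin.val_last] at ha hb
        have := a.2
        have := b.2
        exact Fin.ext (by omega)
      omega

theorem edgeCount_doubleFan (n : ℕ) (hn : 2 ≤ n) : 3 * n - 5 - (if n = 2 then 0 else 1) ≤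
    edgeCount (doubleFan n) := by
  induction n, hn using Nat.le_induction with
  | base =>
    have : (1 : ℕ) ≤ edgeCount (doubleFan 2) := by
      unfold edgeCount
      rw [Nat.one_le_iff_ne_zero, Ne, Set.ncard_eq_zero (Set.toFinite _)]
      intro h
      have : s((0 : Fin 2), 1) ∈ (doubleFan 2).edgeSet := by
        rw [mem_edgeSet]; simp [doubleFan]
      rw [h] at this
      exact this
    simpa using this
  | succ n hn ih =>
    rw [edgeCount_comap (doubleFan (n + 1)) Fin.castSucc (Fin.castSucc_injective n) (Fin.last n)
      (range_castSucc_eq n)]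
    have h1 : (doubleFan (n + 1)).comap Fin.castSucc = doubleFan n := by
      ext x y; simp [doubleFan]
    rw [h1]
    have h0 : n + 1 ≠ 2 := by omega
    rw [if_neg h0]
    set a0 : Fin (n + 1) := ⟨0, by omega⟩
    set a1 : Fin (n + 1) := ⟨1, by omega⟩
    by_cases h2 : n = 2
    · rw [if_pos h2] at ih
      have : 2 ≤ vertexDegree (doubleFan (n + 1)) (Fin.last n) := by
        have hsub : ({a0, a1} : Set (Fin (n + 1))) ⊆ (doubleFan (n + 1)).neighborSet (Fin.last n) := by
          rintro x (rfl | rfl) <;> simp [doubleFan, a0, a1, Fin.ext_iff] <;> omega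
        have := Set.ncard_le_ncard hsub (Set.toFinite _)
        rwa [Set.ncard_pair (by simp [a0, a1])] at this
      omega
    · rw [if_neg h2] at ih
      set a2 : Fin (n + 1) := ⟨n - 1, by omega⟩
      have : 3 ≤ vertexDegree (doubleFan (n + 1)) (Fin.last n) := by
        have hsub : ({a0, a1, a2} : Set (Fin (n + 1))) ⊆
            (doubleFan (n + 1)).neighborSet (Fin.last n) := by
          rintro x (rfl | rfl | rfl) <;> simp [doubleFan, a0, a1, a2, Fin.ext_iff] <;> omega
        have h3 := Set.ncard_le_ncard hsub (Set.toFinite _)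
        have h4 : ({a0, a1, a2} : Set (Fin (n + 1))).ncard = 3 :=
          Set.ncard_eq_three.2 ⟨a0, a1, a2, by simp [a0, a1], by simp [a0, a2, Fin.ext_iff]; omega,
            by simp [a1, a2, Fin.ext_iff]; omega, rfl⟩
        rwa [h4] at h3
      omega

theorem hamPath_connected (n : ℕ) (hn : 1 ≤ n) : (hamPath n).Connected := by
  obtain ⟨k, rfl⟩ : ∃ k, n = k + 1 := ⟨n - 1, by omega⟩
  have h0 : ∀ i : ℕ, ∀ hi : i < k + 1, (hamPath (k + 1)).Reachable 0 ⟨i, hi⟩ := by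
    intro i
    induction i with
    | zero => intro hi; exact Reachable.refl _
    | succ i ih =>
      intro hi
      refine (ih (by omega)).trans (Adj.reachable ?_)
      simp [hamPath]
  exact (connected_iff _).2 ⟨fun x y => (h0 x.1 x.2).symm.trans (h0 y.1 y.2), ⟨0⟩⟩

/-- Relabelling one fixed graph between the Hamiltonian path and the double fan produces at
least `n! / n ^ 3` graphs. -/
theorem CF_lower {n m : ℕ} (hn : 3 ≤ n) (h1 : n - 1 ≤ m) (h2 : m ≤ 3 * n - 6) :
    n.factorial ≤ n ^ 3 * (CF n m).card := by
  classical
  have hD := edgeCount_doubleFan n (by omega)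
  rw [if_neg (by omega)] at hD
  obtain ⟨G0, hle, hge, hm⟩ := exists_edgeCount_between (hamPath_le n)
    ((edgeCount_hamPath n).trans h1) (h2.trans (by omega : 3 * n - 6 ≤ edgeCount (doubleFan n)))
  have hpl : IsPlanar G0 := (doubleFan_planar n).mono hge
  have hcon : G0.Connected := (hamPath_connected n (by omega)).mono hle
  set a0 : Fin n := ⟨0, by omega⟩
  set a1 : Fin n := ⟨1, by omega⟩
  set a2 : Fin n := ⟨2, by omega⟩
  have hcard : Fintype.card (Equiv.Perm (Fin n)) ≤
      (CF n m ×ˢ (Finset.univ : Finset (Fin n × Fin n × Fin n))).card := by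
    rw [← Finset.card_univ]
    refine Finset.card_le_card_of_injOn
      (fun σ => (G0.comap σ, σ.symm a0, σ.symm a1, σ.symm a2)) ?_ ?_
    · intro σ _
      have e : G0.comap σ ≃g G0 := ⟨σ, by simp⟩
      simp only [Finset.coe_product, Set.mem_prod, Finset.mem_coe, mem_CF, Finset.mem_univ, and_true]
      exact ⟨⟨hpl.iso e, by rw [edgeCount_iso e, hm]⟩, e.connected_iff.2 hcon⟩
    · intro σ _ τ _ h
      simp only [Prod.mk.injEq] at h
      obtain ⟨hG, e0, e1, e2⟩ := h
      have hadj : ∀ x y, G0.Adj (σ x) (σ y) ↔ G0.Adj (τ x) (τ y) := by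
        intro x y
        have : (G0.comap σ).Adj x y ↔ (G0.comap τ).Adj x y := by rw [hG]
        exact this
      have key : ∀ i : ℕ, ∀ hi : i < n, σ.symm ⟨i, hi⟩ = τ.symm ⟨i, hi⟩ := by
        intro i
        induction i using Nat.strong_induction_on with
        | _ i ih =>
          intro hi
          rcases Nat.lt_or_ge i 3 with h | h
          · interval_cases i
            · exact e0
            · exact e1
            · exact e2
          · set x := σ.symm ⟨i, hi⟩ with hx
            have hxi : σ x = ⟨i, hi⟩ := by simp [hx]
            have hp := ih (i - 1) (by omega) (by omega)
            set y := σ.symm ⟨i - 1, by omega⟩ with hy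
            have hyi : σ y = ⟨i - 1, by omega⟩ := by simp [hy]
            have hyt : τ y = ⟨i - 1, by omega⟩ := by rw [hp]; simp
            have hA : G0.Adj (σ y) (σ x) := by
              apply hle
              rw [hxi, hyi]
              left; simp; omega
            have hB := hge ((hadj y x).1 hA)
            rw [hyt] at hB
            have hnot : ¬ (τ x).1 < i := by
              intro hlt
              have h3 := ih (τ x).1 hlt (τ x).2
              simp only [Fin.eta, Equiv.symm_apply_apply] at h3
              have h4 : σ x = τ x := ((Equiv.symm_apply_eq σ).1 h3).symm
              rw [← h4, hxi] at hlt
              simp at hlt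
            obtain ⟨hB1, hB2⟩ := hB
            have h5 : τ x = ⟨i, hi⟩ := Fin.ext (by simp at hB2 ⊢; omega)
            rw [← h5]; simp
      have : σ.symm = τ.symm := Equiv.ext fun i => key i.1 i.2
      rw [← σ.symm_symm, this, τ.symm_symm]
  rw [Fintype.card_perm, Fintype.card_fin, Finset.card_product, Finset.card_univ] at hcard
  simp only [Fintype.card_prod, Fintype.card_fin] at hcard
  calc _ ≤ _ := hcard
    _ = _ := by ring

/-! ### Linking two graphs by an edge -/

/-- The disjoint union of two graphs together with the cross edges given by `R`. -/
def linkG {V U : Type*} (G : SimpleGraph V) (K : SimpleGraph U) (R : V → U → Prop) :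
    SimpleGraph (V ⊕ U) where
  Adj x y := match x, y with
    | Sum.inl x, Sum.inl y => G.Adj x y
    | Sum.inr x, Sum.inr y => K.Adj x y
    | Sum.inl x, Sum.inr y => R x y
    | Sum.inr x, Sum.inl y => R y x
  symm := ⟨by
    rintro (x | x) (y | y) h
    · exact G.adj_symm h
    · exact h
    · exact h
    · exact K.adj_symm h⟩
  loopless := ⟨by
    rintro (x | x) h
    · exact G.loopless.irrefl x h
    · exact K.loopless.irrefl x h⟩

section link
variable {V U : Type*} {G : SimpleGraph V} {K : SimpleGraph U} {R : V → U → Prop}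

@[simp] theorem linkG_ll {x y : V} : (linkG G K R).Adj (Sum.inl x) (Sum.inl y) ↔ G.Adj x y := Iff.rfl
@[simp] theorem linkG_rr {x y : U} : (linkG G K R).Adj (Sum.inr x) (Sum.inr y) ↔ K.Adj x y := Iff.rfl
@[simp] theorem linkG_lr {x : V} {y : U} : (linkG G K R).Adj (Sum.inl x) (Sum.inr y) ↔ R x y := Iff.rfl
@[simp] theorem linkG_rl {x : U} {y : V} : (linkG G K R).Adj (Sum.inr x) (Sum.inl y) ↔ R y x := Iff.rfl

theorem linkG_planar (hG : IsPlanar G) (hK : IsPlanar K) (i : V ⊕ U) (j : V ⊕ U)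
    (hR : ∀ x y, R x y → Sum.inl x = i ∧ Sum.inr y = j) : IsPlanar (linkG G K R) := by
  refine IsPlanar.glue (A := Set.range Sum.inl) i j ?_ ?_ ?_
  · rintro _ ⟨x, rfl⟩ (y | y) hy h
    · exact absurd ⟨y, rfl⟩ hy
    · exact hR x y h
  · refine hG.of_injective (fun x => x.2.choose) ?_ ?_
    · intro x y h
      have h1 := x.2.choose_spec
      have h2 := y.2.choose_spec
      simp only at h
      rw [h] at h1
      exact Subtype.ext (h1.symm.trans h2)
    · intro x y h
      have h1 := x.2.choose_spec
      have h2 := y.2.choose_spec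
      rw [comap_adj] at h
      simp only [Function.Embedding.subtype_apply] at h
      rw [← h1, ← h2] at h
      exact h
  · have hex : ∀ x : ((Set.range (Sum.inl : V → V ⊕ U))ᶜ : Set (V ⊕ U)), ∃ y, Sum.inr y = x.1 := by
      rintro ⟨x | x, hx⟩
      · exact absurd ⟨x, rfl⟩ hx
      · exact ⟨x, rfl⟩
    refine hK.of_injective (fun x => (hex x).choose) ?_ ?_
    · intro x y h
      have h1 := (hex x).choose_spec
      have h2 := (hex y).choose_spec
      simp only at h
      rw [h] at h1
      exact Subtype.ext (h1.symm.trans h2)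
    · intro x y h
      have h1 := (hex x).choose_spec
      have h2 := (hex y).choose_spec
      rw [comap_adj] at h
      simp only [Function.Embedding.subtype_apply] at h
      rw [← h1, ← h2] at h
      exact h

theorem linkG_edgeSet : (linkG G K R).edgeSet = Sym2.map Sum.inl '' G.edgeSet ∪
    Sym2.map Sum.inr '' K.edgeSet ∪ {e | ∃ x y, R x y ∧ e = s(Sum.inl x, Sum.inr y)} := by
  ext e
  simp only [Set.mem_union, Set.mem_image, Set.mem_ofPred_eq]
  constructor
  · intro h
    induction e with | _ x y =>
    rw [mem_edgeSet] at h
    rcases x with x | x <;> rcases y with y | y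
    · exact Or.inl (Or.inl ⟨s(x, y), h, rfl⟩)
    · exact Or.inr ⟨x, y, h, rfl⟩
    · exact Or.inr ⟨y, x, h, Sym2.eq_swap⟩
    · exact Or.inl (Or.inr ⟨s(x, y), h, rfl⟩)
  · rintro ((⟨e, he, rfl⟩ | ⟨e, he, rfl⟩) | ⟨x, y, h, rfl⟩)
    · induction e with | _ x y => exact he
    · induction e with | _ x y => exact he
    · exact h

theorem linkG_edgeCount [Finite V] [Finite U] : edgeCount (linkG G K R) = edgeCount G + edgeCount K +
    {e : Sym2 (V ⊕ U) | ∃ x y, R x y ∧ e = s(Sum.inl x, Sum.inr y)}.ncard := by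
  unfold edgeCount
  rw [linkG_edgeSet, Set.ncard_union_eq ?_ (Set.toFinite _) (Set.toFinite _),
    Set.ncard_union_eq ?_ (Set.toFinite _) (Set.toFinite _),
    Set.ncard_image_of_injective _ (Sym2.map.injective Sum.inl_injective),
    Set.ncard_image_of_injective _ (Sym2.map.injective Sum.inr_injective)]
  · rw [Set.disjoint_left]
    rintro _ ⟨e, -, rfl⟩ ⟨e', -, h⟩
    induction e with | _ x y =>
    induction e' with | _ x' y' =>
    simp at h
  · rw [Set.disjoint_left]
    rintro _ (⟨e, -, rfl⟩ | ⟨e, -, rfl⟩) ⟨a, b, -, h⟩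
    · induction e with | _ x y => simp at h
    · induction e with | _ x y => simp at h

theorem linkG_edgeCount_false [Finite V] [Finite U] :
    edgeCount (linkG G K fun _ _ => False) = edgeCount G + edgeCount K := by
  rw [linkG_edgeCount]; simp

theorem linkG_edgeCount_single [Finite V] [Finite U] (i : V) (j : U) :
    edgeCount (linkG G K fun x y => x = i ∧ y = j) = edgeCount G + edgeCount K + 1 := by
  rw [linkG_edgeCount]
  have : {e : Sym2 (V ⊕ U) | ∃ x y, (x = i ∧ y = j) ∧ e = s(Sum.inl x, Sum.inr y)} =
      {s(Sum.inl i, Sum.inr j)} := by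
    ext e
    simp only [Set.mem_ofPred_eq, Set.mem_singleton_iff]
    constructor
    · rintro ⟨x, y, ⟨rfl, rfl⟩, h⟩; exact h
    · intro h; exact ⟨i, j, ⟨rfl, rfl⟩, h⟩
  rw [this, Set.ncard_singleton]

theorem linkG_connected (hG : G.Connected) (hK : K.Connected) {i : V} {j : U} (hR : R i j) :
    (linkG G K R).Connected := by
  have h1 : ∀ x, (linkG G K R).Reachable (Sum.inl i) (Sum.inl x) := fun x =>
    (hG.preconnected i x).map ⟨Sum.inl, fun h => h⟩
  have h2 : ∀ x, (linkG G K R).Reachable (Sum.inr j) (Sum.inr x) := fun x =>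
    (hK.preconnected j x).map ⟨Sum.inr, fun h => h⟩
  have h3 : (linkG G K R).Reachable (Sum.inl i) (Sum.inr j) :=
    Adj.reachable (show (linkG G K R).Adj _ _ from hR)
  have h4 : ∀ x, (linkG G K R).Reachable (Sum.inl i) x := by
    rintro (x | x)
    · exact h1 x
    · exact h3.trans (h2 x)
  exact (connected_iff _).2 ⟨fun x y => (h4 x).symm.trans (h4 y), ⟨Sum.inl i⟩⟩

end link

theorem card_compl_fin {a b : ℕ} {A : Finset (Fin (a + b))} (hA : A.card = a) : Aᶜ.card = b := by
  rw [Finset.card_compl, Fintype.card_fin, hA]; omega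

/-- The increasing labelling of `A` and of its complement. -/
def spl {a b : ℕ} (A : {A : Finset (Fin (a + b)) // A.card = a}) : Fin a ⊕ Fin b ≃ Fin (a + b) :=
  finSumEquivOfFinset A.2 (card_compl_fin A.2)

theorem spl_inl_mem {a b : ℕ} (A : {A : Finset (Fin (a + b)) // A.card = a}) (i : Fin a) :
    spl A (Sum.inl i) ∈ A.1 := by
  rw [spl, finSumEquivOfFinset_inl]; exact Finset.orderEmbOfFin_mem _ _ _

theorem spl_inr_notMem {a b : ℕ} (A : {A : Finset (Fin (a + b)) // A.card = a}) (i : Fin b) :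
    spl A (Sum.inr i) ∉ A.1 := by
  rw [spl, finSumEquivOfFinset_inr, ← Finset.mem_compl]; exact Finset.orderEmbOfFin_mem _ _ _

/-- `G` is placed on the labels in `A`, `K` on the others, with cross edges `R`. -/
def place {a b : ℕ} (A : {A : Finset (Fin (a + b)) // A.card = a}) (G : SimpleGraph (Fin a))
    (K : SimpleGraph (Fin b)) (R : Fin a → Fin b → Prop) : SimpleGraph (Fin (a + b)) :=
  (linkG G K R).comap (spl A).symm

section place
variable {a b : ℕ} {A : {A : Finset (Fin (a + b)) // A.card = a}} {G : SimpleGraph (Fin a)}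
  {K : SimpleGraph (Fin b)} {R : Fin a → Fin b → Prop}

/-- The labelling isomorphism of `place`. -/
def placeIso : place A G K R ≃g linkG G K R := ⟨(spl A).symm, by simp [place]⟩

@[simp] theorem place_adj {x y : Fin a ⊕ Fin b} :
    (place A G K R).Adj (spl A x) (spl A y) ↔ (linkG G K R).Adj x y := by
  simp [place]

theorem mem_iff_spl (x : Fin (a + b)) : x ∈ A.1 ↔ ∃ i, x = spl A (Sum.inl i) := by
  constructor
  · intro h
    obtain ⟨y | y, rfl⟩ := (spl A).surjective x
    · exact ⟨y, rfl⟩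
    · exact absurd h (spl_inr_notMem A y)
  · rintro ⟨i, rfl⟩; exact spl_inl_mem A i

theorem notMem_iff_spl (x : Fin (a + b)) : x ∉ A.1 ↔ ∃ i, x = spl A (Sum.inr i) := by
  constructor
  · intro h
    obtain ⟨y | y, rfl⟩ := (spl A).surjective x
    · exact absurd (spl_inl_mem A y) h
    · exact ⟨y, rfl⟩
  · rintro ⟨i, rfl⟩; exact spl_inr_notMem A i

theorem place_connIn (hG : G.Connected) : ConnIn (place A G K R) A.1 := by
  have h1 : ConnIn G Set.univ := by
    rw [← conn_iff]; exact (SimpleGraph.induceUnivIso G).connected_iff.2 hG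
  have h2 := h1.image (G' := place A G K R) (fun i => spl A (Sum.inl i))
    (fun x _ y _ h => by simpa using h)
  convert h2 using 1
  ext x
  rw [Finset.mem_coe, mem_iff_spl]
  simp [eq_comm]

theorem place_left_injective {G' : SimpleGraph (Fin a)} {K' : SimpleGraph (Fin b)}
    {R' : Fin a → Fin b → Prop} (h : place A G K R = place A G' K' R') : G = G' ∧ K = K' := by
  have h' : ∀ x y, (linkG G K R).Adj x y ↔ (linkG G' K' R').Adj x y := by
    intro x y
    rw [← place_adj (A := A), h, place_adj]
  constructor
  · ext x y; exact h' (Sum.inl x) (Sum.inl y)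
  · ext x y; exact h' (Sum.inr x) (Sum.inr y)

end place

open Classical in
/-- The ordered pairs of adjacent vertices. -/
noncomputable def dartsF {n : ℕ} (G : SimpleGraph (Fin n)) : Finset (Fin n × Fin n) :=
  Finset.univ.filter fun p => G.Adj p.1 p.2

@[simp] theorem mem_dartsF {n : ℕ} {G : SimpleGraph (Fin n)} {p : Fin n × Fin n} :
    p ∈ dartsF G ↔ G.Adj p.1 p.2 := by
  simp [dartsF]

theorem card_dartsF {n : ℕ} (G : SimpleGraph (Fin n)) : (dartsF G).card = 2 * edgeCount G := by
  classical
  rw [← sum_vertexDegree]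
  have : dartsF G = (Finset.univ.sigma (fun v => nb G v)).map
      (Equiv.sigmaEquivProd _ _).toEmbedding := by
    ext ⟨x, y⟩
    rw [Finset.mem_map_equiv]
    simp
  rw [this, Finset.card_map, Finset.card_sigma]
  exact Finset.sum_congr rfl fun v _ => card_nb G v

theorem CF_superadd (a b m1 m2 : ℕ) :
    (a + b).choose a * ((CF a m1).card * ((CF b m2).card * (a * b))) ≤
      2 * (m1 + m2 + 1) * (CF (a + b) (m1 + m2 + 1)).card := by
  classical
  have h := Finset.card_le_card_of_injOn
    (s := (Finset.univ : Finset {A : Finset (Fin (a + b)) // A.card = a}) ×ˢ CF a m1 ×ˢ CF b m2 ×ˢ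
      (Finset.univ : Finset (Fin a × Fin b)))
    (t := (CF (a + b) (m1 + m2 + 1)).sigma fun G => dartsF G)
    (fun d => ⟨place d.1 d.2.1 d.2.2.1 (fun x y => x = d.2.2.2.1 ∧ y = d.2.2.2.2),
      (spl d.1 (Sum.inl d.2.2.2.1), spl d.1 (Sum.inr d.2.2.2.2))⟩) ?_ ?_
  · simp only [Finset.card_product, Finset.card_univ, Fintype.card_prod, Fintype.card_fin,
      Fintype.card_finset_len, Finset.card_sigma, card_dartsF] at h
    refine h.trans (le_of_eq ?_)
    rw [mul_comm (2 * _), ← smul_eq_mul, ← Finset.sum_const]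
    refine Finset.sum_congr rfl fun G hG => ?_
    rw [mem_CF] at hG
    rw [hG.1.2]
  · rintro ⟨A, G, K, i, j⟩ hd
    simp only [Finset.coe_product, Set.mem_prod, Finset.mem_coe, mem_CF, Finset.mem_univ, true_and,
      and_true] at hd
    obtain ⟨⟨⟨hG1, hG2⟩, hG3⟩, ⟨⟨hK1, hK2⟩, hK3⟩⟩ := hd
    rw [Finset.mem_coe, Finset.mem_sigma, mem_CF, mem_dartsF]
    refine ⟨⟨⟨IsPlanar.iso (linkG_planar hG1 hK1 (Sum.inl i) (Sum.inr j) ?_) placeIso, ?_⟩, ?_⟩, ?_⟩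
    · rintro x y ⟨rfl, rfl⟩; exact ⟨rfl, rfl⟩
    · rw [edgeCount_iso placeIso, linkG_edgeCount_single, hG2, hK2]
    · exact placeIso.connected_iff.2 (linkG_connected hG3 hK3 ⟨rfl, rfl⟩)
    · simp
  · have key : ∀ A A' : {A : Finset (Fin (a + b)) // A.card = a}, ∀ G K i j G' K' i' j',
        G.Connected → place A G K (fun x y => x = i ∧ y = j) =
          place A' G' K' (fun x y => x = i' ∧ y = j') →
        spl A (Sum.inl i) = spl A' (Sum.inl i') →
        spl A (Sum.inr j) = spl A' (Sum.inr j') → A.1 ⊆ A'.1 := by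
      intro A A' G K i j G' K' i' j' hcon hpl hi hj
      have hmem : ∃ x ∈ A.1, x ∈ A'.1 := ⟨_, spl_inl_mem A i, hi ▸ spl_inl_mem A' i'⟩
      · refine (place_connIn (A := A) (K := K) (R := fun x y => x = i ∧ y = j) hcon).2 A'.1 hmem ?_
        intro x hx y hy hxy hx'
        by_contra hy'
        obtain ⟨p, rfl⟩ := (mem_iff_spl (A := A') x).1 hx'
        obtain ⟨q, rfl⟩ := (notMem_iff_spl (A := A') y).1 hy'
        rw [hpl, place_adj] at hxy
        obtain ⟨-, rfl⟩ := hxy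
        rw [← hj] at hy
        exact spl_inr_notMem A j hy
    rintro ⟨A, G, K, i, j⟩ hd ⟨A', G', K', i', j'⟩ hd' h
    simp only [Finset.coe_product, Set.mem_prod, Finset.mem_coe, mem_CF, Finset.mem_univ, true_and,
      and_true] at hd hd'
    simp only [Sigma.mk.injEq, heq_eq_eq, Prod.mk.injEq] at h
    obtain ⟨h1, h2, h3⟩ := h
    have hA : A = A' := Subtype.ext (le_antisymm
      (key A A' G K i j G' K' i' j' hd.1.2 h1 h2 h3) (key A' A G' K' i' j' G K i j hd'.1.2 h1.symm h2.symm h3.symm))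
    subst hA
    obtain ⟨rfl, rfl⟩ := place_left_injective h1
    simp only [EmbeddingLike.apply_eq_iff_eq, Sum.inl.injEq, Sum.inr.injEq] at h2 h3
    rw [h2, h3]

/-! ### Reducing the number of components by adding edges -/

theorem edgeCount_sup_edge {V : Type*} [Finite V] {G : SimpleGraph V} {u v : V} (hne : u ≠ v)
    (h : ¬ G.Adj u v) : edgeCount (G ⊔ edge u v) = edgeCount G + 1 := by
  unfold edgeCount
  rw [edgeSet_sup, edgeSet_edge_of_ne hne, Set.union_singleton, Set.ncard_insert_of_notMem _
    (Set.toFinite _)]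
  rwa [mem_edgeSet]

theorem sup_edge_injective {V : Type*} {G K : SimpleGraph V} {u v : V} (hG : ¬ G.Adj u v)
    (hK : ¬ K.Adj u v) (h : G ⊔ edge u v = K ⊔ edge u v) : G = K := by
  have := congrArg (· \ edge u v) h
  simpa [sup_sdiff_right_self, sdiff_edge, hG, hK] using this

theorem IsPlanar.sup_edge {V : Type*} {G : SimpleGraph V} (hG : IsPlanar G) {u v : V}
    (h : ¬ G.Reachable u v) : IsPlanar (G ⊔ edge u v) := by
  have huv : u ≠ v := by rintro rfl; exact h (Reachable.refl _)
  have hind : ∀ A : Set V, (u ∈ A ↔ v ∉ A) → IsPlanar ((G ⊔ edge u v).induce A) := by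
    intro A hA
    refine hG.of_injective Subtype.val Subtype.val_injective ?_
    rintro ⟨x, hx⟩ ⟨y, hy⟩ hxy
    rw [comap_adj] at hxy
    simp only [Function.Embedding.subtype_apply, sup_adj, edge_adj] at hxy
    rcases hxy with hxy | ⟨⟨rfl, rfl⟩ | ⟨rfl, rfl⟩, -⟩
    · exact hxy
    · exact absurd hy (hA.1 hx)
    · exact absurd hx (hA.1 hy)
  refine IsPlanar.glue (A := {x | G.Reachable u x}) u v ?_ (hind _ ?_) (hind _ ?_)
  · intro x hx y hy hxy
    simp only [sup_adj, edge_adj] at hxy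
    rcases hxy with hxy | ⟨⟨rfl, rfl⟩ | ⟨rfl, rfl⟩, -⟩
    · exact absurd ((show G.Reachable u x from hx).trans hxy.reachable) hy
    · exact ⟨rfl, rfl⟩
    · exact absurd hx h
  · exact ⟨fun _ => h, fun _ => Reachable.refl _⟩
  · exact ⟨fun h' => absurd (Reachable.refl u) h', fun h' => by
      simp only [Set.mem_compl_iff, Set.mem_ofPred_eq, not_not] at h'
      exact absurd h' h⟩

theorem reachable_sup_edge {V : Type*} {G : SimpleGraph V} {u v x y : V}
    (h : (G ⊔ edge u v).Reachable x y) : G.Reachable x y ∨ (G.Reachable x u ∧ G.Reachable v y) ∨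
      (G.Reachable x v ∧ G.Reachable u y) := by
  obtain ⟨w⟩ := h
  induction w with
  | nil => exact Or.inl (Reachable.refl _)
  | cons hadj _ ih =>
    simp only [sup_adj, edge_adj] at hadj
    rcases hadj with hadj | ⟨⟨rfl, rfl⟩ | ⟨rfl, rfl⟩, -⟩
    · have := hadj.reachable
      rcases ih with ih | ⟨h1, h2⟩ | ⟨h1, h2⟩
      · exact Or.inl (this.trans ih)
      · exact Or.inr (Or.inl ⟨this.trans h1, h2⟩)
      · exact Or.inr (Or.inr ⟨this.trans h1, h2⟩)
    · rcases ih with ih | ⟨h1, h2⟩ | ⟨h1, h2⟩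
      · exact Or.inr (Or.inl ⟨Reachable.refl _, ih⟩)
      · exact Or.inr (Or.inl ⟨Reachable.refl _, h2⟩)
      · exact Or.inl h2
    · rcases ih with ih | ⟨h1, h2⟩ | ⟨h1, h2⟩
      · exact Or.inr (Or.inr ⟨Reachable.refl _, ih⟩)
      · exact Or.inl h2
      · exact Or.inr (Or.inr ⟨Reachable.refl _, h2⟩)

/-- The number of connected components. -/
noncomputable def ncomp {V : Type*} (G : SimpleGraph V) : ℕ := Nat.card G.ConnectedComponent

theorem card_ne_add_one {α : Type*} [Finite α] (a : α) : Nat.card {c : α // c ≠ a} + 1 = Nat.card α := by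
  classical
  have := Fintype.ofFinite α
  rw [Nat.card_eq_fintype_card, Nat.card_eq_fintype_card, Fintype.card_subtype_compl,
    Fintype.card_subtype_eq]
  exact Nat.sub_add_cancel (Fintype.card_pos_iff.2 ⟨a⟩)

theorem ncomp_sup_edge {V : Type*} [Finite V] {G : SimpleGraph V} {u v : V}
    (h : ¬ G.Reachable u v) : ncomp (G ⊔ edge u v) + 1 = ncomp G := by
  have huv : u ≠ v := by rintro rfl; exact h (Reachable.refl _)
  have hle : G ≤ G ⊔ edge u v := le_sup_left
  have hadj : (G ⊔ edge u v).Adj u v := by simp [edge_adj, huv]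
  unfold ncomp
  rw [← card_ne_add_one (G.connectedComponentMk v)]
  congr 1
  symm
  refine Nat.card_congr (Equiv.ofBijective
    (fun c => c.1.map (Hom.ofLE hle)) ⟨?_, ?_⟩)
  · rintro ⟨c, hc⟩ ⟨d, hd⟩ hcd
    induction c using ConnectedComponent.ind with | _ x =>
    induction d using ConnectedComponent.ind with | _ y =>
    rw [Ne, ConnectedComponent.eq] at hc hd
    simp only [ConnectedComponent.map_mk, ConnectedComponent.eq] at hcd
    rw [Subtype.mk.injEq, ConnectedComponent.eq]
    rcases reachable_sup_edge hcd with h1 | ⟨h1, h2⟩ | ⟨h1, h2⟩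
    · exact h1
    · exact absurd h2.symm hd
    · exact absurd h1 hc
  · intro c
    induction c using ConnectedComponent.ind with | _ x =>
    by_cases hx : G.Reachable x v
    · refine ⟨⟨G.connectedComponentMk u, fun hc => h (ConnectedComponent.eq.1 hc)⟩, ?_⟩
      simp only [ConnectedComponent.map_mk, ConnectedComponent.eq]
      exact hadj.reachable.trans (hx.symm.mono hle)
    · exact ⟨⟨G.connectedComponentMk x, fun hc => hx (ConnectedComponent.eq.1 hc)⟩, rfl⟩

open Classical in
/-- Ordered pairs of vertices in different components. -/
noncomputable def sepPairs {n : ℕ} (G : SimpleGraph (Fin n)) : Finset (Fin n × Fin n) :=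
  Finset.univ.filter fun p => ¬ G.Reachable p.1 p.2

@[simp] theorem mem_sepPairs {n : ℕ} {G : SimpleGraph (Fin n)} {p : Fin n × Fin n} :
    p ∈ sepPairs G ↔ ¬ G.Reachable p.1 p.2 := by
  simp [sepPairs]

theorem card_sepPairs {n : ℕ} (G : SimpleGraph (Fin n)) : n * (ncomp G - 1) ≤ (sepPairs G).card := by
  classical
  have h1 : ∀ u : Fin n, ncomp G - 1 ≤ (Finset.univ.filter fun v => ¬ G.Reachable u v).card := by
    intro u
    have h2 := card_ne_add_one (G.connectedComponentMk u)
    have h3 : Nat.card {c // c ≠ G.connectedComponentMk u} ≤ Nat.card {v // ¬ G.Reachable u v} := by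
      refine Nat.card_le_card_of_surjective
        (fun v => ⟨G.connectedComponentMk v.1, fun hc => v.2 (ConnectedComponent.eq.1 hc).symm⟩) ?_
      rintro ⟨c, hc⟩
      induction c using ConnectedComponent.ind with | _ x =>
      exact ⟨⟨x, fun hx => hc (ConnectedComponent.eq.2 hx.symm)⟩, rfl⟩
    rw [Nat.card_eq_fintype_card (α := {v // ¬ G.Reachable u v}), Fintype.card_subtype] at h3
    unfold ncomp
    omega
  have h2 : (sepPairs G).card = ∑ u : Fin n, (Finset.univ.filter fun v => ¬ G.Reachable u v).card := by
    rw [← Finset.card_sigma]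
    refine Finset.card_bij' (fun p _ => ⟨p.1, p.2⟩) (fun p _ => (p.1, p.2)) ?_ ?_ ?_ ?_ <;> simp
  rw [h2]
  calc _ = ∑ _u : Fin n, (ncomp G - 1) := by simp
    _ ≤ _ := Finset.sum_le_sum fun u _ => h1 u

open Classical in
/-- Planar graphs with `m` edges and exactly `k + 1` components. -/
noncomputable def KF (n m k : ℕ) : Finset (SimpleGraph (Fin n)) :=
  (PF n m).filter fun G => ncomp G = k + 1

theorem mem_KF {n m k : ℕ} {G : SimpleGraph (Fin n)} :
    G ∈ KF n m k ↔ (IsPlanar G ∧ edgeCount G = m) ∧ ncomp G = k + 1 := by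
  simp [KF]

theorem KF_zero (n m : ℕ) : KF n m 0 ⊆ CF n m := by
  intro G hG
  rw [mem_KF] at hG
  rw [mem_CF]
  refine ⟨hG.1, ?_⟩
  have h1 : Nat.card G.ConnectedComponent = 1 := hG.2
  obtain ⟨hs, ⟨c⟩⟩ := Nat.card_eq_one_iff_unique.1 h1
  induction c using ConnectedComponent.ind with | _ x =>
  exact (connected_iff _).2 ⟨fun a b => ConnectedComponent.eq.1 (Subsingleton.elim _ _), ⟨x⟩⟩

theorem KF_step (n m k : ℕ) : (KF n m (k + 1)).card * (k + 1) ≤ 8 * (KF n (m + 1) k).card := by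
  classical
  rcases Nat.eq_zero_or_pos n with rfl | hn
  · have : KF 0 m (k + 1) = ∅ := by
      ext G
      rw [mem_KF]
      have : IsEmpty G.ConnectedComponent := ⟨fun c => by induction c using ConnectedComponent.ind with | _ x => exact x.elim0⟩
      simp [ncomp]
    rw [this]; simp
  have h := Finset.card_le_card_of_injOn
    (s := (KF n m (k + 1)).sigma fun G => sepPairs G)
    (t := (KF n (m + 1) k).sigma fun G => dartsF G)
    (fun d => ⟨d.1 ⊔ edge d.2.1 d.2.2, d.2⟩) ?_ ?_
  rotate_left
  · rintro ⟨G, u, v⟩ hd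
    rw [Finset.mem_coe, Finset.mem_sigma, mem_KF, mem_sepPairs] at hd
    obtain ⟨⟨⟨h1, h2⟩, h3⟩, h4⟩ := hd
    simp only at h1 h2 h3 h4
    have huv : u ≠ v := by rintro rfl; exact h4 (Reachable.refl _)
    rw [Finset.mem_coe, Finset.mem_sigma, mem_KF, mem_dartsF]
    have h5 := ncomp_sup_edge h4
    refine ⟨⟨⟨h1.sup_edge h4, ?_⟩, by simp only; omega⟩, by simp [edge_adj, huv]⟩
    simp only
    rw [edgeCount_sup_edge huv fun h => h4 h.reachable, h2]
  · rintro ⟨G, u, v⟩ hd ⟨K, u', v'⟩ hd' heq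
    rw [Finset.mem_coe, Finset.mem_sigma, mem_KF, mem_sepPairs] at hd hd'
    simp only [Sigma.mk.injEq, heq_eq_eq, Prod.mk.injEq] at heq
    obtain ⟨h1, rfl, rfl⟩ := heq
    have := sup_edge_injective (fun h => hd.2 h.reachable) (fun h => hd'.2 h.reachable) h1
    simp only at this
    rw [this]
  have h6 : (KF n m (k + 1)).card * (n * (k + 1)) ≤
      ((KF n m (k + 1)).sigma fun G => sepPairs G).card := by
    rw [Finset.card_sigma, ← smul_eq_mul, ← Finset.sum_const]
    refine Finset.sum_le_sum fun G hG => ?_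
    rw [mem_KF] at hG
    have := card_sepPairs G
    rw [hG.2] at this
    simpa using this
  have h7 : ((KF n (m + 1) k).sigma fun G => dartsF G).card =
      (KF n (m + 1) k).card * (2 * (m + 1)) := by
    rw [Finset.card_sigma, ← smul_eq_mul, ← Finset.sum_const]
    refine Finset.sum_congr rfl fun G hG => ?_
    rw [mem_KF] at hG
    rw [card_dartsF, hG.1.2]
  rw [h7] at h
  replace h := h6.trans h
  have h8 : (KF n (m + 1) k).card * (2 * (m + 1)) ≤ (KF n (m + 1) k).card * (2 * (4 * n)) := by
    rcases (KF n (m + 1) k).eq_empty_or_nonempty with hemp | ⟨G1, hG1⟩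
    · rw [hemp]; simp
    · rw [mem_KF] at hG1
      have := hG1.1.1.edgeCount_le
      rw [hG1.1.2, Fintype.card_fin] at this
      gcongr
  refine Nat.le_of_mul_le_mul_left ?_ hn
  calc n * ((KF n m (k + 1)).card * (k + 1)) = (KF n m (k + 1)).card * (n * (k + 1)) := by ring
    _ ≤ _ := h
    _ ≤ _ := h8
    _ = _ := by ring

theorem KF_le (n m k : ℕ) : (KF n m k).card * k.factorial ≤ 8 ^ k * (CF n (m + k)).card := by
  induction k generalizing m with
  | zero => simpa using Finset.card_le_card (KF_zero n m)
  | succ k ih =>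
    have h1 := KF_step n m k
    have h2 := ih (m + 1)
    rw [Nat.factorial_succ, pow_succ, show m + (k + 1) = m + 1 + k by ring]
    calc (KF n m (k + 1)).card * ((k + 1) * k.factorial)
        = ((KF n m (k + 1)).card * (k + 1)) * k.factorial := by ring
      _ ≤ (8 * (KF n (m + 1) k).card) * k.factorial := Nat.mul_le_mul_right _ h1
      _ = 8 * ((KF n (m + 1) k).card * k.factorial) := by ring
      _ ≤ 8 * (8 ^ k * (CF n (m + 1 + k)).card) := Nat.mul_le_mul_left _ h2
      _ = _ := by ring

theorem PF_le_sum {n : ℕ} (hn : 1 ≤ n) (m : ℕ) :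
    (PF n m).card ≤ ∑ k ∈ Finset.range n, (KF n m k).card := by
  classical
  have : PF n m ⊆ (Finset.range n).biUnion fun k => KF n m k := by
    intro G hG
    rw [Finset.mem_biUnion]
    have h1 : ncomp G ≤ n := by
      unfold ncomp
      have := Nat.card_le_card_of_surjective (G.connectedComponentMk) Quot.mk_surjective
      simpa using this
    have h2 : 1 ≤ ncomp G := Nat.card_pos_iff.2 ⟨⟨G.connectedComponentMk ⟨0, hn⟩⟩, inferInstance⟩
    refine ⟨ncomp G - 1, ?_, ?_⟩
    · rw [Finset.mem_range]; omega
    · rw [mem_KF]; exact ⟨mem_PF.1 hG, by omega⟩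
  exact (Finset.card_le_card this).trans Finset.card_biUnion_le

/-! ### The normalized count of connected planar graphs -/

/-- The number of connected planar graphs on `n` vertices with `m - 1` edges, divided by `n!`.
The shift of `m` makes this quantity supermultiplicative. -/
noncomputable def phi (n m : ℕ) : ℝ := (CF n (m - 1)).card / n.factorial

/-- A constant bounding the exponential growth of planar graphs. -/
noncomputable def gC : ℝ := (exists_growth.choose : ℕ)

theorem one_le_gC : 1 ≤ gC := by
  have := exists_growth.choose_spec.1
  unfold gC; exact_mod_cast this

theorem planarFin_le_gC (n : ℕ) : ((planarFin (Fin n)).card : ℝ) ≤ gC ^ n * n.factorial := by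
  have := exists_growth.choose_spec.2 n
  unfold gC; exact_mod_cast this

theorem phi_nonneg (n m : ℕ) : 0 ≤ phi n m := by unfold phi; positivity

theorem phi_le (n m : ℕ) : phi n m ≤ gC ^ n := by
  unfold phi
  rw [div_le_iff₀ (by positivity)]
  refine le_trans ?_ (planarFin_le_gC n)
  exact_mod_cast Finset.card_le_card ((CF_subset_PF n _).trans (PF_subset_planarFin n _))

theorem phi_ge {n m : ℕ} (hn : 3 ≤ n) (h1 : n ≤ m) (h2 : m + 5 ≤ 3 * n) :
    1 ≤ (n : ℝ) ^ 3 * phi n m := by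
  have h := CF_lower hn (show n - 1 ≤ m - 1 by omega) (by omega)
  unfold phi
  rw [mul_div_assoc', le_div_iff₀ (by positivity), one_mul]
  exact_mod_cast h

theorem phi_superadd {a b m1 m2 : ℕ} (ha : 20 ≤ a) (hb : 20 ≤ b) (h1 : 1 ≤ m1) (h2 : 1 ≤ m2) :
    phi a m1 * phi b m2 ≤ phi (a + b) (m1 + m2) := by
  have hzero : ∀ n m, 4 * n < m → CF n m = ∅ := by
    intro n m hnm
    rw [Finset.eq_empty_iff_forall_notMem]
    intro G hG
    rw [mem_CF] at hG
    have := hG.1.1.edgeCount_le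
    rw [hG.1.2, Fintype.card_fin] at this
    omega
  by_cases h3 : 4 * a < m1 - 1
  · rw [phi, hzero _ _ h3]; simp [phi_nonneg]
  by_cases h4 : 4 * b < m2 - 1
  · rw [phi, phi, hzero _ _ h4]; simp [phi_nonneg]
  have h := CF_superadd a b (m1 - 1) (m2 - 1)
  rw [show m1 - 1 + (m2 - 1) + 1 = m1 + m2 - 1 by omega] at h
  have h5 : 2 * (m1 + m2 - 1) ≤ a * b := by
    have : 2 * (m1 + m2 - 1) ≤ 10 * (a + b) := by omega
    nlinarith
  have h6 : (a + b).choose a * ((CF a (m1 - 1)).card * (CF b (m2 - 1)).card) ≤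
      (CF (a + b) (m1 + m2 - 1)).card := by
    refine Nat.le_of_mul_le_mul_left ?_ (show 0 < a * b by positivity)
    calc _ = (a + b).choose a * ((CF a (m1 - 1)).card * ((CF b (m2 - 1)).card * (a * b))) := by ring
      _ ≤ _ := h
      _ ≤ _ := Nat.mul_le_mul_right _ h5
  have h7 : ((a + b).choose a : ℝ) * a.factorial * b.factorial = (a + b).factorial := by
    have := Nat.add_choose_mul_factorial_mul_factorial a b
    rw [← Nat.choose_symm_add] at this
    exact_mod_cast this
  unfold phi
  rw [div_mul_div_comm, div_le_div_iff₀ (by positivity) (by positivity)]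
  have h8 : ((a + b).choose a : ℝ) * ((CF a (m1 - 1)).card * (CF b (m2 - 1)).card) ≤
      (CF (a + b) (m1 + m2 - 1)).card := by exact_mod_cast h6
  rw [← h7]
  calc _ = (((a + b).choose a : ℝ) * ((CF a (m1 - 1)).card * (CF b (m2 - 1)).card)) *
        (a.factorial * b.factorial) := by ring
    _ ≤ _ := mul_le_mul_of_nonneg_right h8 (by positivity)

theorem phi_pow {a b r w : ℕ} (ha : 20 ≤ a) (hb : 1 ≤ b) (hr : 20 ≤ r) (hw : 1 ≤ w) (q : ℕ) :
    phi a b ^ q * phi r w ≤ phi (q * a + r) (q * b + w) := by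
  induction q with
  | zero => simp
  | succ q ih =>
    calc phi a b ^ (q + 1) * phi r w = phi a b * (phi a b ^ q * phi r w) := by ring
      _ ≤ phi a b * phi (q * a + r) (q * b + w) := mul_le_mul_of_nonneg_left ih (phi_nonneg _ _)
      _ ≤ phi (a + (q * a + r)) (b + (q * b + w)) := phi_superadd ha (by omega) hb (by omega)
      _ = _ := by congr 1 <;> ring

/-- Among the pairs in a cell there is one whose normalized growth rate is almost maximal. -/
theorem exists_near_sup (S : Set (ℕ × ℕ)) (hS : S.Nonempty) (hpos : ∀ z ∈ S, 1 ≤ z.1) {η : ℝ}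
    (hη : 0 < η) : ∃ z ∈ S, ∃ g : ℝ, 0 ≤ g ∧ g ≤ gC ∧ g ^ z.1 = phi z.1 z.2 ∧
      ∀ y ∈ S, phi y.1 y.2 ≤ ((1 + η) * g) ^ y.1 := by
  set G : ℕ × ℕ → ℝ := fun z => phi z.1 z.2 ^ ((z.1 : ℝ)⁻¹) with hG
  have hg0 : ∀ z, 0 ≤ G z := fun z => Real.rpow_nonneg (phi_nonneg _ _) _
  have hgp : ∀ z ∈ S, G z ^ z.1 = phi z.1 z.2 := fun z hz =>
    Real.rpow_inv_natCast_pow (phi_nonneg _ _) (by have := hpos z hz; omega)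
  have hgC : ∀ z ∈ S, G z ≤ gC := by
    intro z hz
    have h1 : G z ^ z.1 ≤ gC ^ z.1 := by rw [hgp z hz]; exact phi_le _ _
    exact le_of_pow_le_pow_left₀ (by have := hpos z hz; omega) (by linarith [one_le_gC]) h1
  have hbd : BddAbove (G '' S) := ⟨gC, by rintro _ ⟨z, hz, rfl⟩; exact hgC z hz⟩
  set s := sSup (G '' S) with hs
  have hle : ∀ y ∈ S, G y ≤ s := fun y hy => le_csSup hbd ⟨y, hy, rfl⟩
  obtain ⟨z, hz, hzs⟩ : ∃ z ∈ S, s ≤ (1 + η) * G z := by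
    obtain ⟨z0, hz0⟩ := hS
    rcases le_or_gt s 0 with h | h
    · exact ⟨z0, hz0, h.trans (mul_nonneg (by linarith) (hg0 _))⟩
    · have : s / (1 + η) < s := div_lt_self h (by linarith)
      obtain ⟨_, ⟨z, hz, rfl⟩, hlt⟩ := exists_lt_of_lt_csSup (Set.image_nonempty.2 ⟨z0, hz0⟩) this
      refine ⟨z, hz, ?_⟩
      rw [div_lt_iff₀ (by linarith)] at hlt
      linarith
  refine ⟨z, hz, G z, hg0 z, hgC z hz, hgp z hz, fun y hy => ?_⟩
  rw [← hgp y hy]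
  exact pow_le_pow_left₀ (hg0 y) ((hle y hy).trans hzs) _

/-! ### Comparing the counts at `(n + j, m + j)` and `(n, m)` -/

theorem eventually_const_mul_cube_le (K β : ℝ) (hβ : 0 < β) :
    ∃ N : ℕ, ∀ n : ℕ, N ≤ n → K * (n : ℝ) ^ 3 ≤ Real.exp (β * n) := by
  have h1 : Tendsto (fun x : ℝ => x ^ 3 * Real.exp (-x)) atTop (nhds 0) :=
    Real.tendsto_pow_mul_exp_neg_atTop_nhds_zero 3
  have h2 : Tendsto (fun n : ℕ => β * (n : ℝ)) atTop atTop :=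
    tendsto_natCast_atTop_atTop.const_mul_atTop hβ
  have h3 := (h1.comp h2).const_mul (|K| / β ^ 3)
  rw [mul_zero] at h3
  obtain ⟨N, hN⟩ := eventually_atTop.1 (h3.eventually (gt_mem_nhds one_pos))
  refine ⟨N, fun n hn => ?_⟩
  have h4 := hN n hn
  simp only [Function.comp] at h4
  rw [Real.exp_neg, mul_pow] at h4
  have h5 : |K| * (n : ℝ) ^ 3 ≤ Real.exp (β * n) := by
    have : |K| / β ^ 3 * (β ^ 3 * (n : ℝ) ^ 3 * (Real.exp (β * n))⁻¹) =
        |K| * (n : ℝ) ^ 3 / Real.exp (β * n) := by field_simp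
    rw [this, div_lt_one (Real.exp_pos _)] at h4
    exact h4.le
  exact (mul_le_mul_of_nonneg_right (le_abs_self K) (by positivity)).trans h5

theorem cell_arith {δ β η x θ n j k n' M m qa qb : ℝ} (hδ : 0 < δ) (hβ : 0 < β)
    (hη : 0 < η) (hηβ : 1000 * η ≤ β) (hθδ : δ * θ = 2 * β) (hθβ : 2 * β ≤ θ) (hθ1 : θ ≤ 1 / 2)
    (hnβ : 20 ≤ β * n) (hn0 : 0 < n) (hj0 : 0 ≤ j) (hk0 : 0 ≤ k) (hj : j ≤ β * n)
    (hk : k ≤ η * n') (hn'r : n' = n + j) (hMr : M = m + j + k + 1)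
    (hx1 : x * n' ≤ M) (hx2 : M < (x + η) * n') (hxl : 1.004 ≤ x) (hxu : x ≤ 3 - 2 * δ)
    (hqa0 : 0 ≤ qa) (hq1 : qa ≤ (1 - θ) * n') (hqb1 : qb ≤ (x + η) * qa) (hqb2 : x * qa ≤ qb) :
    20 ≤ n - qa ∧ n - qa ≤ m + 1 - qb ∧ m + 1 - qb + 5 ≤ 3 * (n - qa) := by
  have hn'0 : 0 < n' := by linarith
  have hθ0 : 0 ≤ θ := by linarith
  have hgap : θ * n' ≤ n' - qa := by linarith
  have hηn : 1000 * (η * n') ≤ β * n' := by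
    have := mul_le_mul_of_nonneg_right hηβ hn'0.le; linarith
  have hβθ : 2 * (β * n') ≤ θ * n' := by
    have := mul_le_mul_of_nonneg_right hθβ hn'0.le; linarith
  have hβn : β * n' = β * n + β * j := by rw [hn'r]; ring
  have hβj : 0 ≤ β * j := by positivity
  have hθn0 : 0 ≤ θ * n' := by positivity
  have hηqa : η * qa ≤ η * n' := mul_le_mul_of_nonneg_left (by linarith) hη.le
  have hηqa0 : 0 ≤ η * qa := by positivity
  refine ⟨by linarith, ?_, ?_⟩
  · have h2 : 0.004 * (θ * n') ≤ (x - 1) * (n' - qa) :=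
      mul_le_mul (by linarith) hgap hθn0 (by linarith)
    linarith
  · have h2 : 2 * δ * (θ * n') ≤ (3 - x) * (n' - qa) :=
      mul_le_mul (by linarith) hgap hθn0 (by linarith)
    have h3 : 2 * δ * (θ * n') = 4 * (β * n') := by
      calc _ = 2 * (δ * θ) * n' := by ring
        _ = _ := by rw [hθδ]; ring
    linarith

set_option maxHeartbeats 1000000 in
/-- Comparison of `phi` at two nearby points when the first one lies in a thin cone of slope
about `x`. A near-optimal small connected graph `(a, b)` of that slope is repeated `q` times,
and the missing part `(r, w)` is filled in by an arbitrary connected graph. -/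
theorem phi_cell {δ β η x : ℝ} (hδ : 0 < δ) (hδ1 : δ ≤ 1) (hβ : 0 < β) (hβδ : 4 * β ≤ δ)
    (hη : 0 < η) (hηβ : 1000 * η ≤ β) :
    ∃ N : ℕ, ∀ n m j k : ℕ, N ≤ n → (j : ℝ) ≤ β * n → (k : ℝ) ≤ η * (n + j : ℕ) →
      1.005 * ((n + j : ℕ) : ℝ) ≤ (m + j + k + 1 : ℕ) →
      ((m + j + k + 1 : ℕ) : ℝ) ≤ (3 - 2 * δ) * (n + j : ℕ) →
      x * ((n + j : ℕ) : ℝ) ≤ (m + j + k + 1 : ℕ) →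
      ((m + j + k + 1 : ℕ) : ℝ) < (x + η) * (n + j : ℕ) →
      phi (n + j) (m + j + k + 1) ≤
        Real.exp ((3 + 4 * Real.log gC / δ) * (β * n)) * phi n (m + 1) := by
  set S : Set (ℕ × ℕ) := {z | 20 ≤ z.1 ∧ 1 ≤ z.2 ∧ x * (z.1 : ℝ) ≤ z.2 ∧ (z.2 : ℝ) < (x + η) * z.1}
    with hSdef
  rcases S.eq_empty_or_nonempty with hemp | hne
  · refine ⟨20, fun n m j k hn _ _ _ _ h1 h2 => ?_⟩
    exfalso
    have : ((n + j, m + j + k + 1) : ℕ × ℕ) ∈ S := ⟨by simp only; omega, by simp only; omega, h1, h2⟩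
    rw [hemp] at this
    exact this
  obtain ⟨⟨a, b⟩, ⟨ha, hb, hab1, hab2⟩, g, hg0, hgC, hga, hgle⟩ :=
    exists_near_sup S hne (fun z hz => by have := hz.1; omega) hβ
  simp only at ha hb hab1 hab2 hga
  obtain ⟨N1, hN1⟩ := eventually_const_mul_cube_le (Real.exp (Real.log gC * a)) β hβ
  refine ⟨max N1 (max 20 (⌈20 / β⌉₊)), ?_⟩
  intro n m j k hn hj hk hM1 hM2 hx1 hx2
  have hnN1 : N1 ≤ n := (le_max_left _ _).trans hn
  have hn20 : 20 ≤ n := (le_max_left _ _).trans ((le_max_right _ _).trans hn)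
  have hnβ : 20 ≤ β * n := by
    have h1 : ⌈20 / β⌉₊ ≤ n := (le_max_right _ _).trans ((le_max_right _ _).trans hn)
    have h2 := (Nat.le_ceil (20 / β)).trans (Nat.cast_le.2 h1)
    rw [div_le_iff₀ hβ] at h2
    linarith
  set n' := n + j with hn'
  set M := m + j + k + 1 with hM
  have hn'r : (n' : ℝ) = n + j := by rw [hn']; push_cast; ring
  have hMr : (M : ℝ) = m + j + k + 1 := by rw [hM]; push_cast; ring
  have hn0 : (0 : ℝ) < n := by positivity
  have hj0 : (0 : ℝ) ≤ j := by positivity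
  have ha0 : (0 : ℝ) < a := by positivity
  have hn'0 : (0 : ℝ) < n' := by rw [hn'r]; linarith
  set θ := 2 / δ * β with hθ
  have hθδ : δ * θ = 2 * β := by rw [hθ]; field_simp
  have hθβ : 2 * β ≤ θ := by
    rw [hθ]; refine mul_le_mul_of_nonneg_right ?_ hβ.le
    rw [le_div_iff₀ hδ]; linarith
  have hθ1 : θ ≤ 1 / 2 := by
    rw [hθ, div_mul_eq_mul_div, div_le_iff₀ hδ]; linarith
  set q := ⌊(1 - θ) * n' / a⌋₊ with hq
  have hq1 : (q : ℝ) * a ≤ (1 - θ) * n' := by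
    have := Nat.floor_le (show 0 ≤ (1 - θ) * n' / a by
      apply div_nonneg _ ha0.le; apply mul_nonneg _ hn'0.le; linarith)
    rwa [le_div_iff₀ ha0] at this
  have hq2 : (1 - θ) * n' ≤ q * a + a := by
    have := (Nat.lt_floor_add_one ((1 - θ) * n' / a)).le
    rw [div_le_iff₀ ha0] at this
    linarith
  have hqa0 : 0 ≤ (q : ℝ) * a := by positivity
  have hβ1 : β ≤ 1 := by linarith
  have hn'n : (n' : ℝ) ≤ 2 * n := by
    have := mul_le_mul_of_nonneg_right hβ1 hn0.le
    linarith
  -- slope bounds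
  have hxl : 1.004 ≤ x := by
    have : 1.005 * (n' : ℝ) < (x + η) * n' := lt_of_le_of_lt hM1 hx2
    have := lt_of_mul_lt_mul_right this hn'0.le
    linarith
  have hxu : x ≤ 3 - 2 * δ := le_of_mul_le_mul_right (hx1.trans hM2) hn'0
  have hqb1 : (q : ℝ) * b ≤ (x + η) * (q * a) := by
    have := mul_le_mul_of_nonneg_left hab2.le (Nat.cast_nonneg (α := ℝ) q); linarith
  have hqb2 : x * (q * a) ≤ (q : ℝ) * b := by
    have := mul_le_mul_of_nonneg_left hab1 (Nat.cast_nonneg (α := ℝ) q); linarith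
  -- the remainder
  obtain ⟨hr, hlow, hup⟩ := cell_arith hδ hβ hη hηβ hθδ hθβ hθ1 hnβ hn0 hj0
    (Nat.cast_nonneg k) hj hk hn'r hMr hx1 hx2 hxl hxu hqa0 hq1 hqb1 hqb2
  obtain ⟨r, hr'⟩ : ∃ r : ℕ, q * a + r = n := by
    have : q * a ≤ n := by
      have : (q : ℝ) * a ≤ n := by linarith
      exact_mod_cast this
    exact ⟨n - q * a, by omega⟩
  obtain ⟨w, hw'⟩ : ∃ w : ℕ, q * b + w = m + 1 := by
    have : q * b ≤ m + 1 := by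
      have : (q : ℝ) * b ≤ m + 1 := by linarith
      exact_mod_cast this
    exact ⟨m + 1 - q * b, by omega⟩
  have hrr : (r : ℝ) = n - q * a := by rw [← hr']; push_cast; ring
  have hwr : (w : ℝ) = m + 1 - q * b := by
    have : ((q * b + w : ℕ) : ℝ) = (m + 1 : ℕ) := by rw [hw']
    push_cast at this; linarith
  rw [← hrr] at hr hup hlow
  rw [← hwr] at hup hlow
  have hr20 : 20 ≤ r := by exact_mod_cast hr
  have hrw : r ≤ w := by exact_mod_cast hlow
  have hwr3 : w + 5 ≤ 3 * r := by exact_mod_cast hup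
  have key := phi_pow ha hb hr20 (show 1 ≤ w by omega) q
  rw [hr', hw'] at key
  have hge := phi_ge (show 3 ≤ r by omega) hrw hwr3
  have hphiq : phi a b ^ q ≤ (n : ℝ) ^ 3 * phi n (m + 1) := by
    have hq0 : 0 ≤ phi a b ^ q := pow_nonneg (phi_nonneg _ _) _
    have hrn : (r : ℝ) ^ 3 ≤ (n : ℝ) ^ 3 := by
      have : r ≤ n := by omega
      gcongr
    calc phi a b ^ q ≤ phi a b ^ q * ((r : ℝ) ^ 3 * phi r w) := le_mul_of_one_le_right hq0 hge
      _ = (r : ℝ) ^ 3 * (phi a b ^ q * phi r w) := by ring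
      _ ≤ (n : ℝ) ^ 3 * phi n (m + 1) := by
        refine mul_le_mul hrn key (mul_nonneg hq0 (phi_nonneg _ _)) (by positivity)
  have hmem : ((n', M) : ℕ × ℕ) ∈ S := ⟨by simp only; omega, by simp only; omega, hx1, hx2⟩
  have h1 := hgle _ hmem
  simp only at h1
  have hqan : q * a ≤ n' := by omega
  obtain ⟨d, hd⟩ : ∃ d, q * a + d = n' := ⟨n' - q * a, by omega⟩
  have hdr : (d : ℝ) ≤ θ * n' + a := by
    have : (n' : ℝ) = q * a + d := by rw [← hd]; push_cast; ring
    linarith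
  have hC0 : (0 : ℝ) < gC := by linarith [one_le_gC]
  have hL0 : 0 ≤ Real.log gC := Real.log_nonneg one_le_gC
  have h2 : g ^ n' ≤ phi a b ^ q * Real.exp (Real.log gC * (θ * n' + a)) := by
    rw [← hd, pow_add, mul_comm q a, pow_mul, hga]
    refine mul_le_mul_of_nonneg_left ?_ (pow_nonneg (phi_nonneg _ _) _)
    calc g ^ d ≤ gC ^ d := pow_le_pow_left₀ hg0 hgC d
      _ = Real.exp (Real.log gC * d) := by rw [mul_comm, Real.exp_nat_mul, Real.exp_log hC0]
      _ ≤ _ := by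
        apply Real.exp_le_exp.2
        rw [mul_comm a q, hd]
        exact mul_le_mul_of_nonneg_left hdr hL0
  have h3 : (1 + β) ^ n' ≤ Real.exp (β * n') := by
    calc (1 + β) ^ n' ≤ (Real.exp β) ^ n' := by
          apply pow_le_pow_left₀ (by linarith)
          linarith [Real.add_one_le_exp β]
      _ = _ := by rw [← Real.exp_nat_mul, mul_comm]
  have h4 := hN1 n hnN1
  calc phi n' M ≤ ((1 + β) * g) ^ n' := h1
    _ = (1 + β) ^ n' * g ^ n' := mul_pow _ _ _
    _ ≤ Real.exp (β * n') * (phi a b ^ q * Real.exp (Real.log gC * (θ * n' + a))) :=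
        mul_le_mul h3 h2 (by positivity) (Real.exp_nonneg _)
    _ ≤ Real.exp (β * n') * (((n : ℝ) ^ 3 * phi n (m + 1)) *
          Real.exp (Real.log gC * (θ * n' + a))) := by gcongr
    _ = (Real.exp (β * n') * Real.exp (Real.log gC * (θ * n'))) *
          (Real.exp (Real.log gC * a) * (n : ℝ) ^ 3) * phi n (m + 1) := by
        rw [mul_add, Real.exp_add]; ring
    _ ≤ (Real.exp (β * n') * Real.exp (Real.log gC * (θ * n'))) *
          Real.exp (β * n) * phi n (m + 1) := by
        gcongr
        exact phi_nonneg _ _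
    _ = Real.exp (β * n' + Real.log gC * (θ * n') + β * n) * phi n (m + 1) := by
        rw [Real.exp_add, Real.exp_add]
    _ ≤ _ := by
        refine mul_le_mul_of_nonneg_right (Real.exp_le_exp.2 ?_) (phi_nonneg _ _)
        have h5 : β * n' ≤ 2 * (β * n) := by
          have := mul_le_mul_of_nonneg_left hn'n hβ.le; linarith
        have h6 : Real.log gC * (θ * n') ≤ Real.log gC * (θ * (2 * n)) := by gcongr
        have h7 : Real.log gC * (θ * (2 * n)) = 4 * Real.log gC / δ * (β * n) := by
          rw [hθ]; field_simp; ring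
        linarith

theorem factorial_add_le (n j : ℕ) (hj : j ≤ n) :
    (n + j).factorial ≤ (2 * n) ^ j * n.factorial := by
  rw [← Nat.factorial_mul_ascFactorial, mul_comm]
  refine Nat.mul_le_mul_right _ ((Nat.ascFactorial_le_pow_add n j).trans ?_)
  exact Nat.pow_le_pow_left (by omega) j

theorem phi_mul_factorial (n m : ℕ) : phi n (m + 1) * n.factorial = (CF n m).card := by
  unfold phi
  rw [Nat.add_sub_cancel]
  field_simp

theorem KF_le_phi (n m k : ℕ) :
    ((KF n m k).card : ℝ) ≤ 8 ^ k / k.factorial * (phi n (m + k + 1) * n.factorial) := by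
  have h : ((KF n m k).card : ℝ) * k.factorial ≤ 8 ^ k * (CF n (m + k)).card := by
    exact_mod_cast KF_le n m k
  rw [phi_mul_factorial, div_mul_eq_mul_div, le_div_iff₀ (by positivity)]
  exact h

set_option maxHeartbeats 1000000 in
/-- The counts at `(n + j, m + j)` and `(n, m)` differ at most by the trivial factor `(2n)^j` and
a factor exponential in `βn`, with a rate linear in `β`. -/
theorem PF_lipschitz {B : ℝ} (hB2 : 2 ≤ B) (hB : B < 3) : ∃ C0 : ℝ, 0 ≤ C0 ∧ ∃ β0 : ℝ, 0 < β0 ∧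
    ∀ β : ℝ, 0 < β → β ≤ β0 → ∃ N : ℕ, ∀ n m j : ℕ, N ≤ n → (j : ℝ) ≤ β * n →
      1.01 * (n : ℝ) ≤ m → (m : ℝ) ≤ B * n →
      ((PF (n + j) (m + j)).card : ℝ) ≤
        Real.exp (C0 * (β * n)) * (2 * (n : ℝ)) ^ j * (PF n m).card := by
  set δ := (3 - B) / 4 with hδ
  have hδ0 : 0 < δ := by rw [hδ]; linarith
  have hBδ : B = 3 - 4 * δ := by rw [hδ]; ring
  have hδ1 : δ ≤ 1 / 4 := by linarith
  have hL0 : 0 ≤ Real.log gC := Real.log_nonneg one_le_gC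
  refine ⟨4 + 4 * Real.log gC / δ, by positivity, δ / 4, by positivity, ?_⟩
  intro β hβ hβδ
  set η := β / 1000 with hη
  have hη0 : 0 < η := by positivity
  obtain ⟨p, hp⟩ := exists_nat_ge (1 / η)
  rw [div_le_iff₀ hη0] at hp
  set Y := (2 * gC) ^ p with hY
  have hg1 := one_le_gC
  have hY0 : 0 < Y := by positivity
  obtain ⟨K0, hK0⟩ := eventually_atTop.1
    ((FloorSemiring.tendsto_pow_div_factorial_atTop (8 * Y)).eventually (gt_mem_nhds one_pos))
  choose Ni hNi using fun i : ℕ => phi_cell (δ := δ) (β := β) (η := η) (x := i * η) hδ0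
    (by linarith) hβ (by linarith) hη0 (by rw [hη]; linarith)
  set I := ⌈3 / η⌉₊ + 1 with hI
  obtain ⟨N1, hN1⟩ := eventually_const_mul_cube_le (2 * Real.exp 8) β hβ
  obtain ⟨N2, hN2⟩ := eventually_const_mul_cube_le 1 (Real.log 2) (Real.log_pos (by norm_num))
  obtain ⟨N3, hN3⟩ := exists_nat_ge (K0 / η)
  obtain ⟨N4, hN4⟩ := exists_nat_ge (6 / δ)
  refine ⟨(Finset.range I).sup Ni + N1 + N2 + N3 + N4 + 3, ?_⟩
  intro n m j hn hj hm1 hm2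
  have hn3 : 3 ≤ n := by omega
  have hn0 : (0 : ℝ) < n := by positivity
  have hn1 : (1 : ℝ) ≤ n := by exact_mod_cast (by omega : 1 ≤ n)
  have hKn : (K0 : ℝ) ≤ η * n := by
    rw [div_le_iff₀ hη0] at hN3
    have : (N3 : ℝ) ≤ n := by exact_mod_cast (by omega : N3 ≤ n)
    nlinarith
  have hδn : 6 ≤ δ * n := by
    rw [div_le_iff₀ hδ0] at hN4
    have : (N4 : ℝ) ≤ n := by exact_mod_cast (by omega : N4 ≤ n)
    nlinarith
  have hj0 : (0 : ℝ) ≤ j := by positivity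
  have hβ1 : β ≤ 1 := by linarith
  have hjn : (j : ℝ) ≤ n := by nlinarith
  have hjn' : j ≤ n := by exact_mod_cast hjn
  set E := Real.exp ((3 + 4 * Real.log gC / δ) * (β * n)) with hE
  have hE1 : 1 ≤ E := Real.one_le_exp (by positivity)
  have he8 : 1 ≤ Real.exp 8 := Real.one_le_exp (by norm_num)
  have hfac : ((n + j).factorial : ℝ) ≤ (2 * n) ^ j * n.factorial := by
    exact_mod_cast factorial_add_le n j hjn'
  have hCP : ((CF n m).card : ℝ) ≤ (PF n m).card := by
    exact_mod_cast Finset.card_le_card (CF_subset_PF n m)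
  have hterm : ∀ k, ((KF (n + j) (m + j) k).card : ℝ) ≤
      Real.exp 8 * E * ((2 * (n : ℝ)) ^ j * (PF n m).card) := by
    intro k
    refine (KF_le_phi _ _ k).trans ?_
    rcases le_or_gt (k : ℝ) (η * (n + j : ℕ)) with hk | hk
    · -- few components: compare the connected counts within a thin cone
      set M := m + j + k + 1 with hM
      have hMr : (M : ℝ) = m + j + k + 1 := by rw [hM]; push_cast; ring
      have hn'r : ((n + j : ℕ) : ℝ) = n + j := by push_cast; ring
      have hn'0 : (0 : ℝ) < (n + j : ℕ) := by rw [hn'r]; linarith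
      have hk0 : (0 : ℝ) ≤ k := by positivity
      have hM1 : 1.005 * ((n + j : ℕ) : ℝ) ≤ M := by rw [hn'r, hMr]; linarith
      have hM2 : (M : ℝ) ≤ (3 - 2 * δ) * (n + j : ℕ) := by
        have h1 : η * ((n + j : ℕ) : ℝ) ≤ δ * n := by
          calc η * ((n + j : ℕ) : ℝ) ≤ (δ / 2) * (2 * n) := by
                apply mul_le_mul _ (by rw [hn'r]; linarith) hn'0.le (by linarith)
                rw [hη]; linarith
            _ = _ := by ring
        have h2 : δ * j ≤ j * 1 := by nlinarith
        rw [hn'r, hMr]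
        rw [hBδ] at hm2
        linarith
      set i := ⌊(M : ℝ) / (η * (n + j : ℕ))⌋₊ with hi
      have hηn' : 0 < η * ((n + j : ℕ) : ℝ) := by positivity
      have hi1 : (i : ℝ) * η * (n + j : ℕ) ≤ M := by
        have := Nat.floor_le (show 0 ≤ (M : ℝ) / (η * (n + j : ℕ)) by positivity)
        rw [le_div_iff₀ hηn'] at this
        linarith
      have hi2 : (M : ℝ) < ((i : ℝ) * η + η) * (n + j : ℕ) := by
        have := Nat.lt_floor_add_one ((M : ℝ) / (η * (n + j : ℕ)))
        rw [div_lt_iff₀ hηn'] at this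
        linarith
      have hiI : i < I := by
        rw [hI, Nat.lt_succ_iff]
        have h1 : (i : ℝ) * η ≤ 3 := by
          refine le_of_mul_le_mul_right (hi1.trans (hM2.trans ?_)) hn'0
          exact mul_le_mul_of_nonneg_right (by linarith) hn'0.le
        have h2 : (i : ℝ) ≤ 3 / η := by rw [le_div_iff₀ hη0]; exact h1
        exact_mod_cast h2.trans (Nat.le_ceil _)
      have hNn : Ni i ≤ n := by
        have := Finset.le_sup (f := Ni) (Finset.mem_range.2 hiI)
        omega
      have hcell := hNi i n m j k hNn hj hk hM1 hM2 hi1 hi2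
      have h8 := Real.pow_div_factorial_le_exp 8 (by norm_num) k
      calc _ ≤ Real.exp 8 * (E * phi n (m + 1) * ((2 * n) ^ j * n.factorial)) := by
            refine mul_le_mul h8 ?_ (mul_nonneg (phi_nonneg _ _) (by positivity)) (by positivity)
            exact mul_le_mul hcell hfac (by positivity) (mul_nonneg (by positivity) (phi_nonneg _ _))
        _ = Real.exp 8 * E * ((2 * n) ^ j * (phi n (m + 1) * n.factorial)) := by ring
        _ ≤ _ := by
            rw [phi_mul_factorial]
            gcongr
    · -- many components: this number is superexponentially small
      have hn'r : ((n + j : ℕ) : ℝ) = n + j := by push_cast; ring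
      have hk1 : K0 ≤ k := by
        have : (K0 : ℝ) ≤ k := by
          rw [hn'r] at hk
          have : 0 ≤ η * j := by positivity
          linarith
        exact_mod_cast this
      have h1 := hK0 k hk1
      rw [mul_pow, mul_div_right_comm, mul_comm, ← lt_div_iff₀' (by positivity)] at h1
      have hpk : n + j ≤ p * k := by
        have : ((n + j : ℕ) : ℝ) ≤ p * k := by
          calc ((n + j : ℕ) : ℝ) ≤ (p * η) * (n + j : ℕ) := le_mul_of_one_le_left (by positivity) hp
            _ = p * (η * (n + j : ℕ)) := by ring
            _ ≤ _ := by gcongr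
        exact_mod_cast this
      have h2 : 8 ^ k / (k.factorial : ℝ) * gC ^ (n + j) ≤ (1 / 2) ^ n := by
        have h3 : (2 * gC) ^ (n + j) ≤ Y ^ k := by
          rw [hY, ← pow_mul]
          exact pow_le_pow_right₀ (by linarith) hpk
        calc 8 ^ k / (k.factorial : ℝ) * gC ^ (n + j) ≤ 1 / Y ^ k * gC ^ (n + j) := by gcongr
          _ ≤ 1 / (2 * gC) ^ (n + j) * gC ^ (n + j) := by gcongr
          _ = (1 / 2) ^ (n + j) := by
              rw [mul_pow, one_div, mul_inv, one_div, inv_pow]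
              field_simp
          _ ≤ _ := pow_le_pow_of_le_one (by norm_num) (by norm_num) (by omega)
      have h4 : (n.factorial : ℝ) * (1 / 2) ^ n ≤ (CF n m).card := by
        have h5 : n - 1 ≤ m := by
          have : (n : ℝ) ≤ m := by linarith
          have : n ≤ m := by exact_mod_cast this
          omega
        have h6 : m ≤ 3 * n - 6 := by
          have : (m : ℝ) + 6 ≤ 3 * n := by rw [hBδ] at hm2; linarith
          have : m + 6 ≤ 3 * n := by exact_mod_cast this
          omega
        have h7 : (n.factorial : ℝ) ≤ n ^ 3 * (CF n m).card := by
          exact_mod_cast CF_lower hn3 h5 h6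
        have h8 := hN2 n (by omega)
        rw [one_mul, mul_comm, Real.exp_nat_mul, Real.exp_log (by norm_num)] at h8
        rw [one_div, inv_pow, ← div_eq_mul_inv, div_le_iff₀ (by positivity)]
        calc (n.factorial : ℝ) ≤ n ^ 3 * (CF n m).card := h7
          _ ≤ 2 ^ n * (CF n m).card := mul_le_mul_of_nonneg_right h8 (Nat.cast_nonneg _)
          _ = _ := by ring
      calc _ ≤ 8 ^ k / (k.factorial : ℝ) * (gC ^ (n + j) * ((2 * n) ^ j * n.factorial)) := by
            gcongr
            exact phi_le _ _
        _ = (8 ^ k / (k.factorial : ℝ) * gC ^ (n + j)) * ((2 * n) ^ j * n.factorial) := by ring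
        _ ≤ (1 / 2) ^ n * ((2 * n) ^ j * n.factorial) :=
            mul_le_mul_of_nonneg_right h2 (by positivity)
        _ = (2 * n) ^ j * (n.factorial * (1 / 2) ^ n) := by ring
        _ ≤ (2 * n) ^ j * (PF n m).card := by
            gcongr
            exact h4.trans hCP
        _ ≤ _ := le_mul_of_one_le_left (mul_nonneg (by positivity) (Nat.cast_nonneg _))
            (one_le_mul_of_one_le_of_one_le he8 hE1)
  have hsum : ((PF (n + j) (m + j)).card : ℝ) ≤
      ∑ k ∈ Finset.range (n + j), ((KF (n + j) (m + j) k).card : ℝ) := by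
    exact_mod_cast PF_le_sum (show 1 ≤ n + j by omega) (m + j)
  refine hsum.trans ((Finset.sum_le_sum fun k _ => hterm k).trans ?_)
  rw [Finset.sum_const, Finset.card_range, nsmul_eq_mul]
  have h9 : ((n + j : ℕ) : ℝ) * Real.exp 8 ≤ Real.exp (β * n) := by
    refine le_trans ?_ (hN1 n (by omega))
    have : (n : ℝ) ≤ n ^ 3 := le_self_pow₀ hn1 (by norm_num)
    push_cast
    nlinarith
  calc ((n + j : ℕ) : ℝ) * (Real.exp 8 * E * ((2 * (n : ℝ)) ^ j * (PF n m).card)) =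
      (((n + j : ℕ) : ℝ) * Real.exp 8) * E * ((2 * (n : ℝ)) ^ j * (PF n m).card) := by ring
    _ ≤ Real.exp (β * n) * E * ((2 * (n : ℝ)) ^ j * (PF n m).card) :=
      mul_le_mul_of_nonneg_right (mul_le_mul_of_nonneg_right h9 (by positivity))
        (mul_nonneg (by positivity) (Nat.cast_nonneg _))
    _ = _ := by
      rw [hE, ← Real.exp_add, ← mul_assoc]
      congr 3
      ring

/-! ### Leaves -/

/-- The set of vertices of degree one. -/
noncomputable def leavesF {V : Type*} [Fintype V] (G : SimpleGraph V) : Finset V :=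
  (Set.toFinite {v | vertexDegree G v = 1}).toFinset

theorem mem_leavesF {V : Type*} [Fintype V] {G : SimpleGraph V} {v : V} :
    v ∈ leavesF G ↔ vertexDegree G v = 1 := by simp [leavesF]

theorem vertexDegree_eq_one {V : Type*} {G : SimpleGraph V} {v : V} :
    vertexDegree G v = 1 ↔ ∃ u, ∀ y, G.Adj v y ↔ y = u := by
  unfold vertexDegree
  rw [Set.ncard_eq_one]
  refine exists_congr fun u => ?_
  rw [Set.ext_iff]
  exact Iff.rfl

/-- Delete the vertex `v`, relabelling the remaining vertices increasingly. -/
def dropV {n : ℕ} (G : SimpleGraph (Fin (n + 1))) (v : Fin (n + 1)) : SimpleGraph (Fin n) :=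
  G.comap v.succAbove

/-- Insert a new vertex with label `v`, joined to the vertex `u` only. -/
def addLeaf {n : ℕ} (v : Fin (n + 1)) (u : Fin n) (G : SimpleGraph (Fin n)) :
    SimpleGraph (Fin (n + 1)) :=
  G.map v.succAboveEmb ⊔ edge v (v.succAbove u)

theorem dropV_adj {n : ℕ} {G : SimpleGraph (Fin (n + 1))} {v : Fin (n + 1)} {x y : Fin n} :
    (dropV G v).Adj x y ↔ G.Adj (v.succAbove x) (v.succAbove y) := Iff.rfl

theorem addLeaf_adj_v {n : ℕ} {v : Fin (n + 1)} {u : Fin n} {G : SimpleGraph (Fin n)}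
    {y : Fin (n + 1)} : (addLeaf v u G).Adj v y ↔ y = v.succAbove u := by
  have h1 := Fin.succAbove_ne v u
  constructor
  · rintro (⟨_, a, b, h, ha, hb⟩ | h)
    · exact absurd ha (Fin.succAbove_ne v a)
    · rw [edge_adj] at h
      grind
  · rintro rfl
    exact Or.inr (by rw [edge_adj]; grind)

theorem addLeaf_adj {n : ℕ} {v : Fin (n + 1)} {u : Fin n} {G : SimpleGraph (Fin n)}
    {x y : Fin n} : (addLeaf v u G).Adj (v.succAbove x) (v.succAbove y) ↔ G.Adj x y := by
  have h1 := Fin.succAbove_ne v x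
  have h2 := Fin.succAbove_ne v y
  constructor
  · rintro (h | h)
    · exact (SimpleGraph.map_adj_apply (f := v.succAboveEmb)).1 h
    · rw [edge_adj] at h
      grind
  · intro h
    exact Or.inl ((SimpleGraph.map_adj_apply (f := v.succAboveEmb)).2 h)

theorem dropV_addLeaf {n : ℕ} (v : Fin (n + 1)) (u : Fin n) (G : SimpleGraph (Fin n)) :
    dropV (addLeaf v u G) v = G := by
  ext x y
  exact addLeaf_adj

theorem eq_of_dropV {n : ℕ} {G K : SimpleGraph (Fin (n + 1))} {v : Fin (n + 1)}
    (h : dropV G v = dropV K v) (h2 : ∀ y, G.Adj v y ↔ K.Adj v y) : G = K := by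
  ext x y
  rcases Fin.eq_self_or_eq_succAbove v x with rfl | ⟨x, rfl⟩
  · exact h2 y
  rcases Fin.eq_self_or_eq_succAbove v y with rfl | ⟨y, rfl⟩
  · rw [G.adj_comm, K.adj_comm]; exact h2 _
  rw [← dropV_adj, h, dropV_adj]

theorem edgeCount_dropV {n : ℕ} (G : SimpleGraph (Fin (n + 1))) (v : Fin (n + 1)) :
    edgeCount G = edgeCount (dropV G v) + vertexDegree G v :=
  edgeCount_comap G v.succAbove Fin.succAbove_right_injective v (Fin.range_succAbove v)

theorem IsPlanar.dropV {n : ℕ} {G : SimpleGraph (Fin (n + 1))} (hG : IsPlanar G)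
    (v : Fin (n + 1)) : IsPlanar (dropV G v) :=
  hG.of_injective v.succAbove Fin.succAbove_right_injective (fun _ _ h => h)

/-- Deleting `v` with relabelling agrees with the induced subgraph on the other vertices. -/
noncomputable def dropVIso {n : ℕ} (G : SimpleGraph (Fin (n + 1))) (v : Fin (n + 1)) :
    G.induce ({v}ᶜ : Set (Fin (n + 1))) ≃g dropV G v where
  toEquiv := ((Equiv.ofInjective v.succAbove Fin.succAbove_right_injective).trans
    (Equiv.setCongr (Fin.range_succAbove v))).symm
  map_rel_iff' := by
    intro a b
    obtain ⟨a, rfl⟩ := ((Equiv.ofInjective v.succAbove Fin.succAbove_right_injective).trans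
      (Equiv.setCongr (Fin.range_succAbove v))).surjective a
    obtain ⟨b, rfl⟩ := ((Equiv.ofInjective v.succAbove Fin.succAbove_right_injective).trans
      (Equiv.setCongr (Fin.range_succAbove v))).surjective b
    rw [Equiv.symm_apply_apply, Equiv.symm_apply_apply]
    exact Iff.rfl

theorem vertexDegree_addLeaf {n : ℕ} (v : Fin (n + 1)) (u : Fin n) (G : SimpleGraph (Fin n)) :
    vertexDegree (addLeaf v u G) v = 1 :=
  vertexDegree_eq_one.2 ⟨_, fun _ => addLeaf_adj_v⟩

theorem addLeaf_mem_PF {n m : ℕ} {v : Fin (n + 1)} {u : Fin n} {G : SimpleGraph (Fin n)}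
    (hG : G ∈ PF n m) : addLeaf v u G ∈ PF (n + 1) (m + 1) := by
  rw [mem_PF] at hG ⊢
  refine ⟨IsPlanar.add_leaf v (v.succAbove u) (fun y hy => addLeaf_adj_v.1 hy) ?_, ?_⟩
  · refine IsPlanar.iso ?_ (dropVIso _ v)
    rw [dropV_addLeaf]; exact hG.1
  · rw [edgeCount_dropV _ v, dropV_addLeaf, vertexDegree_addLeaf, hG.2]

theorem dropV_mem_PF {n m : ℕ} {G : SimpleGraph (Fin (n + 1))} {v : Fin (n + 1)}
    (hG : G ∈ PF (n + 1) (m + 1)) (hv : vertexDegree G v = 1) : dropV G v ∈ PF n m := by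
  rw [mem_PF] at hG ⊢
  refine ⟨hG.1.dropV v, ?_⟩
  have := edgeCount_dropV G v
  omega

theorem exists_eq_addLeaf {n : ℕ} {G : SimpleGraph (Fin (n + 1))} {v : Fin (n + 1)}
    (hv : vertexDegree G v = 1) : ∃ u, G = addLeaf v u (dropV G v) := by
  obtain ⟨w, hw⟩ := vertexDegree_eq_one.1 hv
  rcases Fin.eq_self_or_eq_succAbove v w with rfl | ⟨u, rfl⟩
  · exact absurd ((hw w).2 rfl) (G.irrefl)
  · exact ⟨u, eq_of_dropV (dropV_addLeaf v u _).symm fun y => by rw [hw, addLeaf_adj_v]⟩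

/-- Deleting and inserting leaves: the pairs (graph, leaf of it) correspond to the smaller graphs
with a chosen new label and a chosen neighbour. -/
theorem sum_leaves (n m : ℕ) (g : SimpleGraph (Fin n) → ℕ) :
    ∑ G ∈ PF (n + 1) (m + 1), ∑ v ∈ leavesF G, g (dropV G v) =
      (n + 1) * n * ∑ G ∈ PF n m, g G := by
  rw [Finset.sum_sigma']
  have h : ∑ z ∈ (Finset.univ : Finset (Fin (n + 1))) ×ˢ ((Finset.univ : Finset (Fin n)) ×ˢ PF n m),
      g z.2.2 = ∑ z ∈ (PF (n + 1) (m + 1)).sigma fun G => leavesF G, g (dropV z.1 z.2) := by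
    refine Finset.sum_bij (fun z _ => ⟨addLeaf z.1 z.2.1 z.2.2, z.1⟩) ?_ ?_ ?_ ?_
    · rintro ⟨v, u, G⟩ hz
      rw [Finset.mem_product, Finset.mem_product] at hz
      rw [Finset.mem_sigma]
      exact ⟨addLeaf_mem_PF hz.2.2, mem_leavesF.2 (vertexDegree_addLeaf _ _ _)⟩
    · rintro ⟨v, u, G⟩ hz ⟨v', u', G'⟩ hz' h
      simp only [Sigma.mk.injEq, heq_eq_eq] at h
      obtain ⟨h1, rfl⟩ := h
      have h2 : G = G' := by
        have := congrArg (fun K => dropV K v) h1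
        simpa only [dropV_addLeaf] using this
      have h3 : (addLeaf v u' G').Adj v (v.succAbove u) := by
        rw [← h1]; exact addLeaf_adj_v.2 rfl
      rw [addLeaf_adj_v] at h3
      rw [h2, Fin.succAbove_right_injective h3]
    · rintro ⟨G, v⟩ hz
      rw [Finset.mem_sigma] at hz
      have hv := mem_leavesF.1 hz.2
      obtain ⟨u, hu⟩ := exists_eq_addLeaf hv
      refine ⟨(v, u, dropV G v), ?_, ?_⟩
      · simp only [Finset.mem_product, Finset.mem_univ, true_and]
        exact dropV_mem_PF hz.1 hv
      · simp only at hu ⊢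
        rw [← hu]
    · rintro ⟨v, u, G⟩ hz
      simp only [dropV_addLeaf]
  rw [← h, Finset.sum_product]
  simp only [Finset.sum_product, Finset.sum_const, Finset.card_univ, Fintype.card_fin, smul_eq_mul]
  ring

/-- Deleting a leaf destroys at most two leaves: itself and possibly its neighbour. -/
theorem leavesF_dropV {n : ℕ} {G : SimpleGraph (Fin (n + 1))} {v : Fin (n + 1)}
    (hv : vertexDegree G v = 1) : (leavesF G).card ≤ (leavesF (dropV G v)).card + 2 := by
  obtain ⟨w, hw⟩ := vertexDegree_eq_one.1 hv
  have hsub : leavesF G ⊆ (leavesF (dropV G v)).image v.succAbove ∪ {v, w} := by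
    intro x hx
    by_cases hxv : x = v
    · simp [hxv]
    by_cases hxw : x = w
    · simp [hxw]
    refine Finset.mem_union_left _ (Finset.mem_image.2 ?_)
    obtain ⟨x, rfl⟩ := (Fin.eq_self_or_eq_succAbove v x).resolve_left hxv
    refine ⟨x, ?_, rfl⟩
    rw [mem_leavesF, vertexDegree_eq_one] at hx ⊢
    obtain ⟨u, hu⟩ := hx
    have huv : u ≠ v := by
      rintro rfl
      exact hxw ((hw _).1 ((hu _).2 rfl).symm)
    obtain ⟨u, rfl⟩ := (Fin.eq_self_or_eq_succAbove v u).resolve_left huv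
    refine ⟨u, fun y => ?_⟩
    rw [dropV_adj, hu]
    exact Fin.succAbove_right_injective.eq_iff
  refine (Finset.card_le_card hsub).trans ((Finset.card_union_le _ _).trans ?_)
  exact Nat.add_le_add Finset.card_image_le Finset.card_le_two

/-- The total number of leaves over all graphs in `𝒫(n,m)`. -/
noncomputable def leafSum (n m : ℕ) : ℕ := ∑ G ∈ PF n m, (leavesF G).card

theorem leafSum_succ (n m : ℕ) : leafSum (n + 1) (m + 1) = (n + 1) * n * (PF n m).card := by
  have := sum_leaves n m (fun _ => 1)
  simpa [leafSum] using this

/-- The average number of leaves increases by at most two from `(n,m)` to `(n+1,m+1)`: this is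
Cauchy–Schwarz applied to the leaf deletion correspondence. -/
theorem leaf_avg_succ {n m : ℕ} {a : ℝ} (ha : 0 ≤ a)
    (h : (leafSum n m : ℝ) ≤ a * (PF n m).card) :
    (leafSum (n + 1) (m + 1) : ℝ) ≤ (a + 2) * (PF (n + 1) (m + 1)).card := by
  have h1 : (leafSum (n + 1) (m + 1) : ℝ) = (n + 1) * n * (PF n m).card := by
    exact_mod_cast leafSum_succ n m
  set S := (leafSum (n + 1) (m + 1) : ℝ) with hS
  set F := ((PF (n + 1) (m + 1)).card : ℝ) with hF
  set Q : ℝ := ∑ G ∈ PF (n + 1) (m + 1), ((leavesF G).card : ℝ) ^ 2 with hQ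
  have hS' : S = ∑ G ∈ PF (n + 1) (m + 1), ((leavesF G).card : ℝ) := by
    rw [hS, leafSum]; push_cast; rfl
  have hcs : S ^ 2 ≤ F * Q := by
    rw [hS']
    exact sq_sum_le_card_mul_sum_sq
  have h2 : Q ≤ (n + 1) * n * leafSum n m + 2 * S := by
    have h3 : ∑ G ∈ PF (n + 1) (m + 1), (leavesF G).card ^ 2 ≤
        (n + 1) * n * leafSum n m + 2 * leafSum (n + 1) (m + 1) := by
      rw [leafSum, leafSum, ← sum_leaves, Finset.mul_sum, ← Finset.sum_add_distrib]
      refine Finset.sum_le_sum fun G _ => ?_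
      calc (leavesF G).card ^ 2 = ∑ v ∈ leavesF G, (leavesF G).card := by
            rw [Finset.sum_const, smul_eq_mul, sq]
        _ ≤ ∑ v ∈ leavesF G, ((leavesF (dropV G v)).card + 2) :=
            Finset.sum_le_sum fun v hv => leavesF_dropV (mem_leavesF.1 hv)
        _ = _ := by rw [Finset.sum_add_distrib, Finset.sum_const, smul_eq_mul, mul_comm]
    rw [hQ, hS]
    exact_mod_cast h3
  have h4 : Q ≤ (a + 2) * S := by
    refine h2.trans ?_
    have : ((n : ℝ) + 1) * n * leafSum n m ≤ (n + 1) * n * (a * (PF n m).card) := by gcongr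
    calc _ ≤ a * ((n + 1) * n * (PF n m).card) + 2 * S := by linarith
      _ = _ := by rw [← h1]; ring
  have hS0 : 0 ≤ S := by positivity
  have hF0 : 0 ≤ F := by positivity
  rcases hS0.eq_or_lt with h0 | h0
  · rw [← h0]; positivity
  · have h5 : S * S ≤ S * ((a + 2) * F) := by
      calc S * S = S ^ 2 := by ring
        _ ≤ F * Q := hcs
        _ ≤ F * ((a + 2) * S) := mul_le_mul_of_nonneg_left h4 hF0
        _ = _ := by ring
    exact le_of_mul_le_mul_left h5 h0

theorem leaf_avg_add {n m : ℕ} {a : ℝ} (ha : 0 ≤ a) (h : (leafSum n m : ℝ) ≤ a * (PF n m).card)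
    (j : ℕ) : (leafSum (n + j) (m + j) : ℝ) ≤ (a + 2 * j) * (PF (n + j) (m + j)).card := by
  induction j with
  | zero => simpa using h
  | succ j ih =>
    have := leaf_avg_succ (by positivity) ih
    rw [← add_assoc, ← add_assoc]
    refine this.trans_eq ?_
    push_cast; ring

/-- If the average number of leaves is small, then the counts grow quickly along the diagonal. -/
theorem PF_growth_of_few_leaves {n m : ℕ} {a : ℝ} (ha : 0 ≤ a)
    (h : (leafSum n m : ℝ) ≤ a * (PF n m).card) (J : ℕ) :
    ((n : ℝ) ^ 2) ^ J * (PF n m).card ≤ (a + 2 * J) ^ J * (PF (n + J) (m + J)).card := by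
  have key : ∀ j ≤ J, ((n : ℝ) ^ 2) ^ j * (PF n m).card ≤
      (a + 2 * J) ^ j * (PF (n + j) (m + j)).card := by
    intro j
    induction j with
    | zero => intro _; simp
    | succ j ih =>
      intro hj
      have h1 := ih (by omega)
      have h2 := leaf_avg_add ha h (j + 1)
      rw [← add_assoc, ← add_assoc, leafSum_succ] at h2
      have hjJ : ((j + 1 : ℕ) : ℝ) ≤ J := by exact_mod_cast hj
      have h3 : (n : ℝ) ^ 2 * (PF (n + j) (m + j)).card ≤
          (a + 2 * J) * (PF (n + j + 1) (m + j + 1)).card := by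
        calc (n : ℝ) ^ 2 * (PF (n + j) (m + j)).card
            ≤ (((n + j + 1) * (n + j) * (PF (n + j) (m + j)).card : ℕ) : ℝ) := by
              push_cast
              refine mul_le_mul_of_nonneg_right ?_ (Nat.cast_nonneg _)
              have : (0 : ℝ) ≤ n := by positivity
              have : (0 : ℝ) ≤ j := by positivity
              nlinarith
          _ ≤ _ := h2
          _ ≤ _ := by gcongr
      calc ((n : ℝ) ^ 2) ^ (j + 1) * (PF n m).card =
          (n : ℝ) ^ 2 * (((n : ℝ) ^ 2) ^ j * (PF n m).card) := by ring
        _ ≤ (n : ℝ) ^ 2 * ((a + 2 * J) ^ j * (PF (n + j) (m + j)).card) := by gcongr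
        _ = (a + 2 * J) ^ j * ((n : ℝ) ^ 2 * (PF (n + j) (m + j)).card) := by ring
        _ ≤ (a + 2 * J) ^ j * ((a + 2 * J) * (PF (n + j + 1) (m + j + 1)).card) := by gcongr
        _ = _ := by rw [← add_assoc, ← add_assoc]; ring
  exact key J le_rfl

theorem PF_pos {B : ℝ} (hB : B < 3) : ∃ N : ℕ, ∀ n m : ℕ, N ≤ n → 1.01 * (n : ℝ) ≤ m →
    (m : ℝ) ≤ B * n → 0 < (PF n m).card := by
  obtain ⟨N, hN⟩ := exists_nat_ge (6 / (3 - B))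
  have hB' : 0 < 3 - B := by linarith
  rw [div_le_iff₀ hB'] at hN
  refine ⟨N + 3, fun n m hn h1 h2 => ?_⟩
  have hNn : (N : ℝ) ≤ n := by exact_mod_cast (by omega : N ≤ n)
  have h5 : n - 1 ≤ m := by
    have : (n : ℝ) ≤ m := by have : (0 : ℝ) ≤ n := by positivity
                             linarith
    have : n ≤ m := by exact_mod_cast this
    omega
  have h6 : m ≤ 3 * n - 6 := by
    have : (m : ℝ) + 6 ≤ 3 * n := by nlinarith
    have : m + 6 ≤ 3 * n := by exact_mod_cast this
    omega
  have h7 := CF_lower (show 3 ≤ n by omega) h5 h6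
  have h8 : 0 < (CF n m).card := by
    by_contra h
    have h9 : (CF n m).card = 0 := by omega
    rw [h9] at h7
    have := Nat.factorial_pos n
    omega
  exact h8.trans_le (Finset.card_le_card (CF_subset_PF n m))

/-- In the dense range the average number of leaves is linear. -/
theorem leafSum_dense {B : ℝ} (hB2 : 2 ≤ B) (hB : B < 3) : ∃ α : ℝ, 0 < α ∧ ∃ N : ℕ,
    ∀ n m : ℕ, N ≤ n → 1.01 * (n : ℝ) ≤ m → (m : ℝ) ≤ B * n →
      α * n * (PF n m).card ≤ leafSum n m := by
  obtain ⟨C0, hC0, β0, hβ0, hL⟩ := PF_lipschitz hB2 hB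
  set β := min β0 (Real.exp (-(2 * C0 + 1)) / 6) with hβ
  have hβpos : 0 < β := lt_min hβ0 (by positivity)
  have hβ6 : 6 * β ≤ Real.exp (-(2 * C0 + 1)) := by
    have := min_le_right β0 (Real.exp (-(2 * C0 + 1)) / 6)
    rw [← hβ] at this
    linarith
  obtain ⟨N1, hN1⟩ := hL β hβpos (min_le_left _ _)
  obtain ⟨N2, hN2⟩ := PF_pos hB
  obtain ⟨N3, hN3⟩ := exists_nat_ge (2 / β)
  rw [div_le_iff₀ hβpos] at hN3
  refine ⟨β, hβpos, N1 + N2 + N3, fun n m hn hm1 hm2 => ?_⟩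
  by_contra hcon
  push Not at hcon
  have hF := hN2 n m (by omega) hm1 hm2
  have hF' : (0 : ℝ) < (PF n m).card := by exact_mod_cast hF
  have hnβ : 2 ≤ β * n := by
    have : (N3 : ℝ) ≤ n := by exact_mod_cast (by omega : N3 ≤ n)
    nlinarith
  have hn0 : (0 : ℝ) < n := by
    by_contra h
    have h1 : (n : ℝ) = 0 := le_antisymm (not_lt.1 h) (by positivity)
    rw [h1] at hnβ; linarith
  set J := ⌊β * n⌋₊ with hJ
  have hJ1 : (J : ℝ) ≤ β * n := Nat.floor_le (by positivity)
  have hJ2 : β * n / 2 ≤ J := by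
    have := Nat.lt_floor_add_one (β * n)
    linarith
  have h1 := PF_growth_of_few_leaves (a := β * n) (by positivity) hcon.le J
  have h2 := hN1 n m J (by omega) hJ1 hm1 hm2
  have h3 : (β * n + 2 * J : ℝ) ≤ 3 * β * n := by linarith
  have h4 : ((n : ℝ) ^ 2) ^ J * (PF n m).card ≤
      ((6 * β) ^ J * Real.exp (C0 * (β * n))) * (((n : ℝ) ^ 2) ^ J * (PF n m).card) := by
    calc ((n : ℝ) ^ 2) ^ J * (PF n m).card ≤ _ := h1
      _ ≤ (3 * β * n) ^ J * (Real.exp (C0 * (β * n)) * (2 * (n : ℝ)) ^ J * (PF n m).card) := by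
          refine mul_le_mul (pow_le_pow_left₀ (by positivity) h3 J) h2 (Nat.cast_nonneg _)
            (by positivity)
      _ = (6 * β * n ^ 2) ^ J * (Real.exp (C0 * (β * n)) * (PF n m).card) := by
          rw [show 6 * β * (n : ℝ) ^ 2 = (3 * β * n) * (2 * n) by ring, mul_pow (3 * β * (n : ℝ))]
          ring
      _ = _ := by rw [mul_pow (6 * β)]; ring
  have hpos : 0 < ((n : ℝ) ^ 2) ^ J * (PF n m).card := by positivity
  have h5 : (6 * β) ^ J * Real.exp (C0 * (β * n)) < 1 := by
    calc (6 * β) ^ J * Real.exp (C0 * (β * n))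
        ≤ Real.exp (-(2 * C0 + 1)) ^ J * Real.exp (C0 * (β * n)) := by gcongr
      _ = Real.exp (-(2 * C0 + 1) * J + C0 * (β * n)) := by
          rw [Real.exp_add, ← Real.exp_nat_mul, mul_comm (J : ℝ)]
      _ < 1 := by
          rw [Real.exp_lt_one_iff]
          nlinarith
  have h6 := mul_lt_mul_of_pos_right h5 hpos
  linarith

/-! ### Leaves in the sparse range -/

/-- Double counting through an injection. -/
theorem sum_card_le {α β γ : Type*} (S : Finset α) (T : α → Finset β) (U : Finset γ)
    (f : α → β → γ) (hf : ∀ a ∈ S, ∀ b ∈ T a, f a b ∈ U)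
    (hinj : ∀ a ∈ S, ∀ b ∈ T a, ∀ a' ∈ S, ∀ b' ∈ T a', f a b = f a' b' → a = a' ∧ b = b') :
    ∑ a ∈ S, (T a).card ≤ U.card := by
  rw [← Finset.card_sigma]
  refine Finset.card_le_card_of_injOn (fun z => f z.1 z.2) ?_ ?_
  · rintro ⟨a, b⟩ hz
    rw [Finset.mem_coe, Finset.mem_sigma] at hz
    exact hf a hz.1 b hz.2
  · rintro ⟨a, b⟩ hz ⟨a', b'⟩ hz' h
    rw [Finset.mem_coe, Finset.mem_sigma] at hz hz'
    obtain ⟨rfl, rfl⟩ := hinj a hz.1 b hz.2 a' hz'.1 b' hz'.2 h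
    rfl

/-- The neighbours of `v` are exactly `a` and `b`. -/
def TwoNbrs {V : Type*} (G : SimpleGraph V) (v a b : V) : Prop :=
  a ≠ b ∧ ∀ y, G.Adj v y ↔ y = a ∨ y = b

theorem vertexDegree_eq_two {V : Type*} {G : SimpleGraph V} {v : V} :
    vertexDegree G v = 2 ↔ ∃ a b, TwoNbrs G v a b := by
  unfold vertexDegree TwoNbrs
  rw [Set.ncard_eq_two]
  refine exists_congr fun a => exists_congr fun b => and_congr Iff.rfl ?_
  rw [Set.ext_iff]
  exact Iff.rfl

/-- Isolated vertices. -/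
noncomputable def isoF {V : Type*} [Fintype V] (G : SimpleGraph V) : Finset V :=
  (Set.toFinite {v | vertexDegree G v = 0}).toFinset

/-- Vertices of degree two with non-adjacent neighbours. -/
noncomputable def pathF {V : Type*} [Fintype V] (G : SimpleGraph V) : Finset V :=
  (Set.toFinite {v | ∃ a b, TwoNbrs G v a b ∧ ¬ G.Adj a b}).toFinset

/-- Vertices of triangle components. -/
noncomputable def triF {V : Type*} [Fintype V] (G : SimpleGraph V) : Finset V :=
  (Set.toFinite {v | ∃ a b, TwoNbrs G v a b ∧ TwoNbrs G a v b ∧ TwoNbrs G b v a}).toFinset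

theorem mem_isoF {V : Type*} [Fintype V] {G : SimpleGraph V} {v : V} :
    v ∈ isoF G ↔ vertexDegree G v = 0 := by simp [isoF]

theorem mem_pathF {V : Type*} [Fintype V] {G : SimpleGraph V} {v : V} :
    v ∈ pathF G ↔ ∃ a b, TwoNbrs G v a b ∧ ¬ G.Adj a b := by simp [pathF]

theorem mem_triF {V : Type*} [Fintype V] {G : SimpleGraph V} {v : V} :
    v ∈ triF G ↔ ∃ a b, TwoNbrs G v a b ∧ TwoNbrs G a v b ∧ TwoNbrs G b v a := by simp [triF]

theorem twoNbrs_of_adj {V : Type*} [Finite V] {G : SimpleGraph V} {v a b : V} (hab : a ≠ b)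
    (h1 : G.Adj v a) (h2 : G.Adj v b) (h : vertexDegree G v ≤ 2) : TwoNbrs G v a b := by
  refine ⟨hab, fun y => ⟨fun hy => ?_, ?_⟩⟩
  · by_contra hc
    push Not at hc
    have h3 : ({a, b, y} : Set V) ⊆ G.neighborSet v := by
      rintro z (rfl | rfl | rfl) <;> assumption
    have h4 := Set.ncard_le_ncard h3 (Set.toFinite _)
    rw [Set.ncard_eq_three.2 ⟨a, b, y, hab, hc.1.symm, hc.2.symm, rfl⟩] at h4
    unfold vertexDegree at h
    omega
  · rintro (rfl | rfl) <;> assumption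

/-- A graph of average degree about two has many vertices of one of four types. -/
theorem low_degree_structure {N : ℕ} (G : SimpleGraph (Fin N)) (h : 100 * edgeCount G ≤ 101 * N) :
    N ≤ 100 * ((isoF G).card + (leavesF G).card + (pathF G).card + (triF G).card) := by
  classical
  set D2 := Finset.univ.filter fun v => vertexDegree G v = 2 with hD2
  set D3 := Finset.univ.filter fun v => 3 ≤ vertexDegree G v with hD3
  set S3 := ∑ v ∈ D3, vertexDegree G v with hS3
  have hI : isoF G = Finset.univ.filter fun v => vertexDegree G v = 0 := by
    ext v; simp [mem_isoF]
  have hL : leavesF G = Finset.univ.filter fun v => vertexDegree G v = 1 := by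
    ext v; simp [mem_leavesF]
  have hcount : N = (isoF G).card + (leavesF G).card + D2.card + D3.card := by
    have h1 : ∑ v : Fin N, 1 = ∑ v : Fin N, ((if vertexDegree G v = 0 then 1 else 0) +
        (if vertexDegree G v = 1 then 1 else 0) + (if vertexDegree G v = 2 then 1 else 0) +
        (if 3 ≤ vertexDegree G v then 1 else 0)) := by
      refine Finset.sum_congr rfl fun v _ => ?_
      split_ifs <;> omega
    rw [Finset.sum_add_distrib, Finset.sum_add_distrib, Finset.sum_add_distrib] at h1
    simp only [← Finset.card_filter] at h1
    rw [hI, hL, hD2, hD3, ← h1]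
    simp
  have hdeg : 2 * edgeCount G = (leavesF G).card + 2 * D2.card + S3 := by
    rw [← sum_vertexDegree]
    have h1 : ∑ v : Fin N, vertexDegree G v = ∑ v : Fin N, (
        (if vertexDegree G v = 1 then 1 else 0) + (if vertexDegree G v = 2 then 2 else 0) +
        (if 3 ≤ vertexDegree G v then vertexDegree G v else 0)) := by
      refine Finset.sum_congr rfl fun v _ => ?_
      split_ifs <;> omega
    rw [h1, Finset.sum_add_distrib, Finset.sum_add_distrib, hL, Finset.card_filter, hS3, hD3,
      ← Finset.sum_filter, ← Finset.sum_filter, ← Finset.sum_filter, hD2, Finset.sum_const,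
      Finset.sum_const]
    simp [mul_comm]
  have h3 : 3 * D3.card ≤ S3 := by
    rw [mul_comm, ← smul_eq_mul]
    exact Finset.card_nsmul_le_sum _ _ _ fun v hv => (Finset.mem_filter.1 hv).2
  have h2 : D2.card ≤ (pathF G).card + (triF G).card + S3 := by
    have hsub : D2 ⊆ pathF G ∪ triF G ∪ D3.biUnion (nb G) := by
      intro v hv
      obtain ⟨a, b, hvab⟩ := vertexDegree_eq_two.1 (Finset.mem_filter.1 hv).2
      by_cases hab : G.Adj a b
      · have hva : G.Adj v a := (hvab.2 a).2 (Or.inl rfl)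
        have hvb : G.Adj v b := (hvab.2 b).2 (Or.inr rfl)
        by_cases ha : 3 ≤ vertexDegree G a
        · refine Finset.mem_union_right _ (Finset.mem_biUnion.2 ⟨a, by simp [hD3, ha], ?_⟩)
          simpa using hva.symm
        by_cases hb : 3 ≤ vertexDegree G b
        · refine Finset.mem_union_right _ (Finset.mem_biUnion.2 ⟨b, by simp [hD3, hb], ?_⟩)
          simpa using hvb.symm
        refine Finset.mem_union_left _ (Finset.mem_union_right _ (mem_triF.2 ⟨a, b, hvab, ?_, ?_⟩))
        · exact twoNbrs_of_adj hvb.ne hva.symm hab (by omega)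
        · exact twoNbrs_of_adj hva.ne hvb.symm hab.symm (by omega)
      · exact Finset.mem_union_left _ (Finset.mem_union_left _ (mem_pathF.2 ⟨a, b, hvab, hab⟩))
    refine (Finset.card_le_card hsub).trans ((Finset.card_union_le _ _).trans ?_)
    refine Nat.add_le_add (Finset.card_union_le _ _) (Finset.card_biUnion_le.trans ?_)
    rw [hS3]
    exact (Finset.sum_congr rfl fun v _ => card_nb G v).le
  omega

theorem sum_isoF_le (n m : ℕ) : (∑ G ∈ PF (n + 1) (m + 1), (isoF G).card) * (2 * (m + 1)) ≤
    (n + 1) * (n * (n * (PF n m).card)) := by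
  have h := sum_card_le (PF (n + 1) (m + 1))
    (fun G => (isoF G).sigma fun v => dartsF (dropV G v))
    ((Finset.univ : Finset (Fin (n + 1))) ×ˢ (Finset.univ : Finset (Fin n)) ×ˢ
      (Finset.univ : Finset (Fin n)) ×ˢ PF n m)
    (fun G z => (z.1, z.2.1, z.2.2, dropV G z.1 \ edge z.2.1 z.2.2)) ?_ ?_
  · simp only [Finset.card_product, Finset.card_univ, Fintype.card_fin] at h
    refine le_trans (le_of_eq ?_) h
    rw [Finset.sum_mul]
    refine Finset.sum_congr rfl fun G hG => ?_
    rw [Finset.card_sigma, ← smul_eq_mul, ← Finset.sum_const]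
    refine Finset.sum_congr rfl fun v hv => ?_
    rw [card_dartsF]
    have h1 := edgeCount_dropV G v
    rw [mem_isoF.1 hv, (mem_PF.1 hG).2] at h1
    omega
  · rintro G hG ⟨v, a, b⟩ hz
    rw [Finset.mem_sigma, mem_isoF, mem_dartsF] at hz
    simp only at hz
    simp only [Finset.mem_product, Finset.mem_univ, true_and]
    rw [mem_PF] at hG ⊢
    refine ⟨(hG.1.dropV v).mono sdiff_le, ?_⟩
    have h1 := edgeCount_dropV G v
    have h2 : (dropV G v \ edge a b) ⊔ edge a b = dropV G v := by
      rw [sdiff_sup_self, sup_eq_left, edge_le_iff]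
      exact Or.inr hz.2
    have h3 : ¬ (dropV G v \ edge a b).Adj a b := by
      rw [sdiff_adj, edge_adj]
      rintro ⟨h, h'⟩
      exact h' ⟨Or.inl ⟨rfl, rfl⟩, h.ne⟩
    have h4 := edgeCount_sup_edge hz.2.ne h3
    rw [h2] at h4
    omega
  · rintro G hG ⟨v, a, b⟩ hz G' hG' ⟨v', a', b'⟩ hz' h
    rw [Finset.mem_sigma, mem_isoF, mem_dartsF] at hz hz'
    simp only at hz hz'
    simp only [Prod.mk.injEq] at h
    obtain ⟨rfl, rfl, rfl, h⟩ := h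
    refine ⟨?_, rfl⟩
    have hiso : ∀ K : SimpleGraph (Fin (n + 1)), vertexDegree K v = 0 → ∀ y, ¬ K.Adj v y := by
      intro K hK y hy
      unfold vertexDegree at hK
      rw [Set.ncard_eq_zero (Set.toFinite _)] at hK
      exact (Set.eq_empty_iff_forall_notMem.1 hK y) hy
    refine eq_of_dropV (v := v) ?_ fun y => ?_
    · have h5 := congrArg (· ⊔ edge a b) h
      have e1 : dropV G v ⊔ edge a b = dropV G v := by
        rw [sup_eq_left, edge_le_iff]; exact Or.inr hz.2
      have e2 : dropV G' v ⊔ edge a b = dropV G' v := by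
        rw [sup_eq_left, edge_le_iff]; exact Or.inr hz'.2
      simpa [sdiff_sup_self, e1, e2] using h5
    · exact iff_of_false (hiso G hz.1 y) (hiso G' hz'.1 y)

/-- Suppressing a vertex of degree two yields a minor. -/
theorem IsPlanar.suppress {n : ℕ} {G : SimpleGraph (Fin (n + 1))} (hG : IsPlanar G)
    {v : Fin (n + 1)} {a b : Fin n} (h1 : G.Adj v (v.succAbove a)) (h2 : G.Adj v (v.succAbove b)) :
    IsPlanar (_root_.dropV G v ⊔ edge a b) := by
  refine (hG.of_isMinor (contract_isMinor h1)).of_injective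
    (fun x => ⟨v.succAbove x, Fin.succAbove_ne v x⟩) ?_ ?_
  · intro x y h
    exact Fin.succAbove_right_injective (congrArg Subtype.val h)
  · intro x y h
    have hne : x ≠ y := h.ne
    refine ⟨fun h' => hne (Fin.succAbove_right_injective (congrArg Subtype.val h')), ?_⟩
    rcases h with h | h
    · exact Or.inl h
    · rw [edge_adj] at h
      rcases h.1 with ⟨rfl, rfl⟩ | ⟨rfl, rfl⟩
      · exact Or.inr (Or.inl ⟨rfl, h2⟩)
      · exact Or.inr (Or.inr ⟨rfl, h2⟩)

/-- The triples `(v, a, b)` where `a`, `b` are the (relabelled) neighbours of `v`. -/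
noncomputable def tripF {n : ℕ} (G : SimpleGraph (Fin (n + 1))) :
    Finset (Fin (n + 1) × Fin n × Fin n) :=
  (Set.toFinite {t | TwoNbrs G t.1 (t.1.succAbove t.2.1) (t.1.succAbove t.2.2)}).toFinset

theorem mem_tripF {n : ℕ} {G : SimpleGraph (Fin (n + 1))} {t : Fin (n + 1) × Fin n × Fin n} :
    t ∈ tripF G ↔ TwoNbrs G t.1 (t.1.succAbove t.2.1) (t.1.succAbove t.2.2) := by simp [tripF]

theorem TwoNbrs.exists_succAbove {n : ℕ} {G : SimpleGraph (Fin (n + 1))} {v a b : Fin (n + 1)}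
    (h : TwoNbrs G v a b) : ∃ a' b', a = v.succAbove a' ∧ b = v.succAbove b' := by
  have hva : G.Adj v a := (h.2 a).2 (Or.inl rfl)
  have hvb : G.Adj v b := (h.2 b).2 (Or.inr rfl)
  obtain ⟨a', rfl⟩ := (Fin.eq_self_or_eq_succAbove v a).resolve_left hva.ne'
  obtain ⟨b', rfl⟩ := (Fin.eq_self_or_eq_succAbove v b).resolve_left hvb.ne'
  exact ⟨a', b', rfl, rfl⟩

theorem edgeCount_dropV_two {n : ℕ} {G : SimpleGraph (Fin (n + 1))} {v a b : Fin (n + 1)}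
    (h : TwoNbrs G v a b) : edgeCount G = edgeCount (dropV G v) + 2 := by
  rw [edgeCount_dropV G v, vertexDegree_eq_two.2 ⟨a, b, h⟩]

theorem sum_pathF_le (n m : ℕ) : ∑ G ∈ PF (n + 1) (m + 1), (pathF G).card ≤
    (n + 1) * ((PF n m).card * (2 * m)) := by
  classical
  have h := sum_card_le (PF (n + 1) (m + 1))
    (fun G => (tripF G).filter fun t => ¬ (dropV G t.1).Adj t.2.1 t.2.2)
    ((Finset.univ : Finset (Fin (n + 1))) ×ˢ (PF n m).sigma fun G => dartsF G)
    (fun G z => (z.1, ⟨dropV G z.1 ⊔ edge z.2.1 z.2.2, (z.2.1, z.2.2)⟩)) ?_ ?_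
  · simp only [Finset.card_product, Finset.card_univ, Fintype.card_fin, Finset.card_sigma] at h
    have hd : ∑ G ∈ PF n m, (dartsF G).card = (PF n m).card * (2 * m) := by
      rw [← smul_eq_mul, ← Finset.sum_const]
      exact Finset.sum_congr rfl fun G hG => by rw [card_dartsF, (mem_PF.1 hG).2]
    rw [hd] at h
    refine le_trans (Finset.sum_le_sum fun G _ => ?_) h
    refine (Finset.card_le_card ?_).trans (Finset.card_image_le (f := Prod.fst))
    intro v hv
    obtain ⟨a, b, hab, hnab⟩ := mem_pathF.1 hv
    obtain ⟨a', b', rfl, rfl⟩ := hab.exists_succAbove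
    exact Finset.mem_image.2 ⟨(v, a', b'), Finset.mem_filter.2 ⟨mem_tripF.2 hab, hnab⟩, rfl⟩
  · rintro G hG ⟨v, a, b⟩ hz
    rw [Finset.mem_filter, mem_tripF] at hz
    simp only at hz
    obtain ⟨hz1, hz2⟩ := hz
    have hne : a ≠ b := fun h => hz1.1 (by rw [h])
    simp only [Finset.mem_product, Finset.mem_univ, true_and, Finset.mem_sigma, mem_dartsF]
    rw [mem_PF] at hG ⊢
    refine ⟨⟨hG.1.suppress ((hz1.2 _).2 (Or.inl rfl)) ((hz1.2 _).2 (Or.inr rfl)), ?_⟩, ?_⟩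
    · have := edgeCount_dropV_two hz1
      rw [edgeCount_sup_edge hne hz2]
      omega
    · exact Or.inr (by rw [edge_adj]; exact ⟨Or.inl ⟨rfl, rfl⟩, hne⟩)
  · rintro G hG ⟨v, a, b⟩ hz G' hG' ⟨v', a', b'⟩ hz' h
    rw [Finset.mem_filter, mem_tripF] at hz hz'
    simp only at hz hz'
    simp only [Prod.mk.injEq, Sigma.mk.injEq, heq_eq_eq] at h
    obtain ⟨rfl, h, rfl, rfl⟩ := h
    refine ⟨eq_of_dropV (sup_edge_injective hz.2 hz'.2 h) fun y => ?_, rfl⟩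
    rw [hz.1.2, hz'.1.2]

theorem sum_triF_le (n m : ℕ) : (∑ G ∈ PF (n + 1) (m + 1), (triF G).card) * (n - 2) ≤
    (n + 1) * (n * (PF n m).card) := by
  classical
  have h := sum_card_le (PF (n + 1) (m + 1))
    (fun G => ((tripF G).filter fun t => (∀ y, (dropV G t.1).Adj t.2.1 y ↔ y = t.2.2) ∧
      ∀ y, (dropV G t.1).Adj t.2.2 y ↔ y = t.2.1).sigma
        fun t => ((Finset.univ : Finset (Fin n)) \ {t.2.1, t.2.2}))
    ((Finset.univ : Finset (Fin (n + 1))) ×ˢ (Finset.univ : Finset (Fin n)) ×ˢ PF n m)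
    (fun G z => (z.1.1, z.1.2.2, dropV G z.1.1 ⊔ edge z.1.2.1 z.2)) ?_ ?_
  · simp only [Finset.card_product, Finset.card_univ, Fintype.card_fin, Finset.card_sigma] at h
    refine le_trans ?_ h
    rw [Finset.sum_mul]
    refine Finset.sum_le_sum fun G _ => ?_
    refine le_trans ?_ (Finset.card_nsmul_le_sum _ _ (n - 2) ?_)
    · rw [smul_eq_mul]
      refine Nat.mul_le_mul_right _ ?_
      refine (Finset.card_le_card ?_).trans (Finset.card_image_le (f := Prod.fst))
      intro v hv
      obtain ⟨a, b, hab, ha, hb⟩ := mem_triF.1 hv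
      obtain ⟨a', b', rfl, rfl⟩ := hab.exists_succAbove
      refine Finset.mem_image.2 ⟨(v, a', b'), Finset.mem_filter.2 ⟨mem_tripF.2 hab, ?_, ?_⟩, rfl⟩
      · intro y
        simp only
        rw [dropV_adj, ha.2, Fin.succAbove_right_injective.eq_iff]
        simp [Fin.succAbove_ne]
      · intro y
        simp only
        rw [dropV_adj, hb.2, Fin.succAbove_right_injective.eq_iff]
        simp [Fin.succAbove_ne]
    · intro t _
      have h1 := Finset.le_card_sdiff ({t.2.1, t.2.2} : Finset (Fin n)) Finset.univ
      rw [Finset.card_univ, Fintype.card_fin] at h1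
      have h2 : ({t.2.1, t.2.2} : Finset (Fin n)).card ≤ 2 := Finset.card_le_two
      omega
  · rintro G hG ⟨⟨v, a, b⟩, x⟩ hz
    rw [Finset.mem_sigma, Finset.mem_filter, mem_tripF] at hz
    simp only [Finset.mem_sdiff, Finset.mem_univ, true_and, Finset.mem_insert,
      Finset.mem_singleton, not_or] at hz
    obtain ⟨⟨hz1, hza, hzb⟩, hxa, hxb⟩ := hz
    simp only [Finset.mem_product, Finset.mem_univ, true_and]
    rw [mem_PF] at hG ⊢
    have hreach : ∀ y, (dropV G v).Reachable a y → y = a ∨ y = b := by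
      rintro y ⟨w⟩
      have : ∀ z y, (dropV G v).Walk z y → (z = a ∨ z = b) → (y = a ∨ y = b) := by
        intro z y w
        induction w with
        | nil => exact id
        | cons hadj _ ih =>
          rintro (rfl | rfl)
          · exact ih (Or.inr ((hza _).1 hadj))
          · exact ih (Or.inl ((hzb _).1 hadj))
      exact this a y w (Or.inl rfl)
    have hnr : ¬ (dropV G v).Reachable a x := fun hr => by
      rcases hreach x hr with h | h
      · exact hxa h
      · exact hxb h
    refine ⟨(hG.1.dropV v).sup_edge hnr, ?_⟩
    have := edgeCount_dropV_two hz1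
    rw [edgeCount_sup_edge (Ne.symm hxa) (fun h => hnr h.reachable)]
    omega
  · rintro G hG ⟨⟨v, a, b⟩, x⟩ hz G' hG' ⟨⟨v', a', b'⟩, x'⟩ hz' h
    rw [Finset.mem_sigma, Finset.mem_filter, mem_tripF] at hz hz'
    simp only [Finset.mem_sdiff, Finset.mem_univ, true_and, Finset.mem_insert,
      Finset.mem_singleton, not_or] at hz hz'
    obtain ⟨⟨hz1, hza, hzb⟩, hxa, hxb⟩ := hz
    obtain ⟨⟨hz1', hza', hzb'⟩, hxa', hxb'⟩ := hz'
    simp only [Prod.mk.injEq] at h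
    obtain ⟨rfl, rfl, h⟩ := h
    have hab : a ≠ b := fun h => hz1.1 (by rw [h])
    have hab' : a' ≠ b := fun h => hz1'.1 (by rw [h])
    -- the only neighbour of `b` in the new graph is `a`, so `a` is determined
    have ha : a = a' := by
      have h1 : (dropV G v ⊔ edge a x).Adj b a := Or.inl ((hzb a).2 rfl)
      rw [h] at h1
      rcases h1 with h1 | h1
      · exact (hzb' a).1 h1
      · rw [edge_adj] at h1
        grind
    subst ha
    have hx : x = x' := by
      have h1 : (dropV G v ⊔ edge a x).Adj a x :=
        Or.inr (by rw [edge_adj]; exact ⟨Or.inl ⟨rfl, rfl⟩, Ne.symm hxa⟩)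
      rw [h] at h1
      rcases h1 with h1 | h1
      · exact absurd ((hza' x).1 h1) hxb
      · rw [edge_adj] at h1
        grind
    subst hx
    have n1 : ¬ (dropV G v).Adj a x := fun h => hxb ((hza x).1 h)
    have n2 : ¬ (dropV G' v).Adj a x := fun h => hxb ((hza' x).1 h)
    refine ⟨eq_of_dropV (sup_edge_injective n1 n2 h) fun y => ?_, rfl⟩
    rw [hz1.2, hz1'.2]

/-- In the sparse range the average number of leaves is linear. -/
theorem leafSum_sparse {c : ℝ} (hc : 0 < c) : ∃ α : ℝ, 0 < α ∧ ∃ N : ℕ, ∀ n m : ℕ, N ≤ n →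
    c * n ≤ m → (m : ℝ) ≤ 1.01 * n → α * n * (PF n m).card ≤ leafSum n m := by
  set C : ℝ := 100 * (1 / (2 * c) + 8) with hC
  have hC0 : 0 < C := by positivity
  obtain ⟨N1, hN1⟩ := exists_nat_ge (1 / c)
  refine ⟨1 / C, by positivity, N1 + 10, ?_⟩
  intro n' m' hn hcm hm
  have hcn : 1 ≤ c * n' := by
    rw [div_le_iff₀ hc] at hN1
    have : (N1 : ℝ) ≤ n' := by exact_mod_cast (by omega : N1 ≤ n')
    nlinarith
  have hm0 : 1 ≤ m' := by
    have : (1 : ℝ) ≤ m' := by linarith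
    exact_mod_cast this
  obtain ⟨n, rfl⟩ : ∃ n, n' = n + 1 := ⟨n' - 1, by omega⟩
  obtain ⟨m, rfl⟩ : ∃ m, m' = m + 1 := ⟨m' - 1, by omega⟩
  have hmN : 100 * (m + 1) ≤ 101 * (n + 1) := by
    have : (100 : ℝ) * ((m + 1 : ℕ) : ℝ) ≤ 101 * ((n + 1 : ℕ) : ℝ) := by linarith
    exact_mod_cast this
  have hstruct : (n + 1) * (PF (n + 1) (m + 1)).card ≤ 100 * (
      (∑ G ∈ PF (n + 1) (m + 1), (isoF G).card) + leafSum (n + 1) (m + 1) +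
      (∑ G ∈ PF (n + 1) (m + 1), (pathF G).card) + ∑ G ∈ PF (n + 1) (m + 1), (triF G).card) := by
    rw [leafSum, ← Finset.sum_add_distrib, ← Finset.sum_add_distrib, ← Finset.sum_add_distrib,
      Finset.mul_sum, mul_comm, ← smul_eq_mul, ← Finset.sum_const]
    refine Finset.sum_le_sum fun G hG => low_degree_structure G ?_
    rw [(mem_PF.1 hG).2]
    exact hmN
  have hI := sum_isoF_le n m
  have hA := sum_pathF_le n m
  have hT := sum_triF_le n m
  have hL := leafSum_succ n m
  generalize (PF n m).card = F at *
  generalize (PF (n + 1) (m + 1)).card = F' at *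
  generalize ∑ G ∈ PF (n + 1) (m + 1), (isoF G).card = sI at *
  generalize ∑ G ∈ PF (n + 1) (m + 1), (pathF G).card = sA at *
  generalize ∑ G ∈ PF (n + 1) (m + 1), (triF G).card = sT at *
  generalize leafSum (n + 1) (m + 1) = sL at *
  have hn9 : 9 ≤ n := by omega
  have hsTle : sT ≤ sL := by
    rw [hL]
    calc sT ≤ sT * (n - 2) := Nat.le_mul_of_pos_right _ (by omega)
      _ ≤ _ := hT
      _ = _ := by ring
  have hsAle : sA ≤ 4 * sL := by
    rw [hL]
    calc sA ≤ (n + 1) * (F * (2 * m)) := hA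
      _ ≤ (n + 1) * (F * (4 * n)) := 
          Nat.mul_le_mul_left _ (Nat.mul_le_mul_left _ (by omega))
      _ = _ := by ring
  have hsIle : (sI : ℝ) ≤ 1 / (2 * c) * sL := by
    have h1 : (sI : ℝ) * (2 * ((m + 1 : ℕ) : ℝ)) ≤ (n + 1) * (n * (n * F)) := by exact_mod_cast hI
    have h2 : (sL : ℝ) = (n + 1) * n * F := by rw [hL]; push_cast; ring
    have h3 : (sI : ℝ) * (2 * (c * n)) ≤ (sL : ℝ) * n := by
      calc (sI : ℝ) * (2 * (c * n)) ≤ (sI : ℝ) * (2 * ((m + 1 : ℕ) : ℝ)) := by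
            gcongr
            refine le_trans ?_ hcm
            push_cast; nlinarith
        _ ≤ _ := h1
        _ = _ := by rw [h2]; ring
    have hn0 : (0 : ℝ) < n := by positivity
    rw [one_div, inv_mul_eq_div, le_div_iff₀ (by positivity)]
    refine le_of_mul_le_mul_right ?_ hn0
    linarith
  have hfin : ((n + 1 : ℕ) : ℝ) * F' ≤ C * sL := by
    have h1 : ((n + 1 : ℕ) : ℝ) * F' ≤ 100 * ((sI : ℝ) + sL + sA + sT) := by exact_mod_cast hstruct
    have h2 : (sA : ℝ) ≤ 4 * sL := by exact_mod_cast hsAle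
    have h3 : (sT : ℝ) ≤ sL := by exact_mod_cast hsTle
    have h4 : (0 : ℝ) ≤ sL := by positivity
    rw [hC]
    linarith
  rw [mul_assoc, one_div, inv_mul_eq_div, div_le_iff₀ hC0]
  linarith

/-! ### Components isomorphic to a fixed graph -/

/-- The vertex sets of the components of `G` with an order-preserving isomorphism to `H`. -/
noncomputable def compsF {h n : ℕ} (H : SimpleGraph (Fin h)) (G : SimpleGraph (Fin n)) :
    Finset (Finset (Fin n)) :=
  (Set.toFinite {W : Finset (Fin n) | IsComponent G W ∧ IsOrderCopy H G W}).toFinset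

theorem mem_compsF {h n : ℕ} {H : SimpleGraph (Fin h)} {G : SimpleGraph (Fin n)}
    {W : Finset (Fin n)} : W ∈ compsF H G ↔ IsComponent G W ∧ IsOrderCopy H G W := by
  simp [compsF]

theorem card_compsF {h n : ℕ} (H : SimpleGraph (Fin h)) (G : SimpleGraph (Fin n)) :
    (compsF H G).card = numOrderComponents H G := by
  rw [compsF, numOrderComponents, Set.ncard_eq_toFinset_card]

theorem isComponent_iff {V : Type*} {G : SimpleGraph V} {W : Finset V} :
    IsComponent G W ↔ ConnIn G W ∧ ∀ v ∈ W, ∀ u, G.Adj v u → u ∈ W := by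
  rw [IsComponent, conn_iff]

theorem IsComponent.eq_of_mem {V : Type*} {G : SimpleGraph V} {W W' : Finset V}
    (hW : IsComponent G W) (hW' : IsComponent G W') {x : V} (hx : x ∈ W) (hx' : x ∈ W') :
    W = W' := by
  rw [isComponent_iff] at hW hW'
  refine Finset.Subset.antisymm ?_ ?_
  · have := hW.1.2 (W' : Set V) ⟨x, hx, hx'⟩ (fun a _ b _ hab ha => hW'.2 a ha b hab)
    exact_mod_cast this
  · have := hW'.1.2 (W : Set V) ⟨x, hx', hx⟩ (fun a _ b _ hab ha => hW.2 a ha b hab)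
    exact_mod_cast this

/-- If `φ` carries the full adjacency of `G` at the vertices of `W` to that of `G'`, then `W` is an
`H`-component of `G` exactly when its image is one of `G'`. -/
theorem map_mem_compsF {h n n' : ℕ} {H : SimpleGraph (Fin h)} {G : SimpleGraph (Fin n)}
    {G' : SimpleGraph (Fin n')} (φ : Fin n ↪o Fin n') {W : Finset (Fin n)}
    (hφ : ∀ x ∈ W, ∀ y, G'.Adj (φ x) y ↔ ∃ z, φ z = y ∧ G.Adj x z) :
    W.map φ.toEmbedding ∈ compsF H G' ↔ W ∈ compsF H G := by
  have hadj : ∀ x ∈ W, ∀ y, G'.Adj (φ x) (φ y) ↔ G.Adj x y := by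
    intro x hx y
    rw [hφ x hx]
    constructor
    · rintro ⟨z, hz, h⟩
      rwa [← φ.injective hz]
    · exact fun h => ⟨y, rfl, h⟩
  have hmem : ∀ x, φ x ∈ W.map φ.toEmbedding ↔ x ∈ W := by
    intro x
    exact Finset.mem_map' φ.toEmbedding
  have hmem2 : ∀ y, y ∈ W.map φ.toEmbedding → ∃ x ∈ W, φ x = y := by
    intro y hy
    simpa using hy
  rw [mem_compsF, mem_compsF, isComponent_iff, isComponent_iff]
  refine and_congr (and_congr ?_ ?_) ?_
  · constructor
    · rintro ⟨⟨y, hy⟩, h⟩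
      obtain ⟨x, hx, rfl⟩ := hmem2 y hy
      refine ⟨⟨x, hx⟩, fun S ⟨a, ha, haS⟩ hS b hb => ?_⟩
      have := h (φ '' S) ⟨φ a, (hmem a).2 ha, a, haS, rfl⟩ ?_ ((hmem b).2 hb)
      · obtain ⟨b', hb', e⟩ := this
        rwa [← φ.injective e]
      · intro p hp q hq hpq hpS
        obtain ⟨p, hp', rfl⟩ := hmem2 p hp
        obtain ⟨q, hq', rfl⟩ := hmem2 q hq
        obtain ⟨p', hpS, e⟩ := hpS
        rw [φ.injective e] at hpS
        exact ⟨q, hS p hp' q hq' ((hadj p hp' q).1 hpq) hpS, rfl⟩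
    · rintro ⟨⟨x, hx⟩, h⟩
      refine ⟨⟨φ x, (hmem x).2 hx⟩, fun S ⟨a, ha, haS⟩ hS b hb => ?_⟩
      obtain ⟨a, ha', rfl⟩ := hmem2 a ha
      obtain ⟨b, hb', rfl⟩ := hmem2 b hb
      have := h (φ ⁻¹' S) ⟨a, ha', haS⟩ ?_ hb'
      · exact this
      · intro p hp q hq hpq hpS
        exact hS (φ p) ((hmem p).2 hp) (φ q) ((hmem q).2 hq) ((hadj p hp q).2 hpq) hpS
  · constructor
    · intro h v hv u hvu
      exact (hmem u).1 (h (φ v) ((hmem v).2 hv) (φ u) ((hadj v hv u).2 hvu))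
    · intro h v hv u hvu
      obtain ⟨v, hv', rfl⟩ := hmem2 v hv
      obtain ⟨z, rfl, hz⟩ := (hφ v hv' u).1 hvu
      exact (hmem z).2 (h v hv' z hz)
  · have hc : (W.map φ.toEmbedding).card = W.card := Finset.card_map _
    have key : ∀ (hW : W.card = h) (i : Fin h),
        (((W.map φ.toEmbedding).orderIsoOfFin (hc.trans hW) i : _) : Fin n') =
          φ (W.orderIsoOfFin hW i : Fin n) := by
      intro hW i
      have := Finset.orderEmbOfFin_unique (hc.trans hW)
        (f := fun i => φ (W.orderIsoOfFin hW i : Fin n))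
        (fun x => (hmem _).2 (W.orderIsoOfFin hW x).2)
        (fun a b hab => φ.strictMono ((W.orderIsoOfFin hW).strictMono hab))
      exact (congrFun this i).symm
    constructor
    · rintro ⟨hW, hH⟩
      have hW' : W.card = h := hc.symm.trans hW
      refine ⟨hW', fun i j => ?_⟩
      rw [hH i j, key hW' i, key hW' j]
      exact hadj _ (W.orderIsoOfFin hW' i).2 _
    · rintro ⟨hW', hH⟩
      refine ⟨hc.trans hW', fun i j => ?_⟩
      rw [hH i j, key hW' i, key hW' j]
      exact (hadj _ (W.orderIsoOfFin hW' i).2 _).symm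

/-- The `H`-components of `G` that meet `D`. -/
noncomputable def meetF {h n : ℕ} (H : SimpleGraph (Fin h)) (G : SimpleGraph (Fin n))
    (D : Finset (Fin n)) : Finset (Finset (Fin n)) :=
  (Set.toFinite {W : Finset (Fin n) | W ∈ compsF H G ∧ ∃ x ∈ D, x ∈ W}).toFinset

theorem mem_meetF {h n : ℕ} {H : SimpleGraph (Fin h)} {G : SimpleGraph (Fin n)}
    {D W : Finset (Fin n)} : W ∈ meetF H G D ↔ W ∈ compsF H G ∧ ∃ x ∈ D, x ∈ W := by
  simp [meetF]

theorem card_meetF_le {h n : ℕ} (H : SimpleGraph (Fin h)) (G : SimpleGraph (Fin n))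
    (D : Finset (Fin n)) : (meetF H G D).card ≤ D.card := by
  classical
  refine Finset.card_le_card_of_forall_subsingleton (fun W x => x ∈ W) ?_ ?_
  · intro W hW
    exact (mem_meetF.1 hW).2
  · rintro x - W ⟨hW, hx⟩ W' ⟨hW', hx'⟩
    exact (mem_compsF.1 (mem_meetF.1 hW).1).1.eq_of_mem (mem_compsF.1 (mem_meetF.1 hW').1).1 hx hx'

theorem meetF_eq_zero {h n : ℕ} {H : SimpleGraph (Fin h)} {G : SimpleGraph (Fin n)}
    {D : Finset (Fin n)} (hD : ∀ W ∈ compsF H G, ∀ x ∈ D, x ∉ W) : (meetF H G D).card = 0 := by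
  rw [Finset.card_eq_zero, Finset.eq_empty_iff_forall_notMem]
  intro W hW
  obtain ⟨h1, x, hx, hxW⟩ := mem_meetF.1 hW
  exact hD W h1 x hx hxW

/-- The components of `G` avoiding the modified vertices `D` survive in `G'`. -/
theorem num_le_of_embed {h n n' : ℕ} (H : SimpleGraph (Fin h)) {G : SimpleGraph (Fin n)}
    {G' : SimpleGraph (Fin n')} (φ : Fin n ↪o Fin n') (D : Finset (Fin n))
    (hφ : ∀ x, x ∉ D → ∀ y, G'.Adj (φ x) y ↔ ∃ z, φ z = y ∧ G.Adj x z) :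
    (compsF H G).card ≤ (compsF H G').card + (meetF H G D).card := by
  classical
  have h1 : (compsF H G).card ≤ (compsF H G \ meetF H G D).card + (meetF H G D).card :=
    Finset.card_le_card_sdiff_add_card
  refine h1.trans (Nat.add_le_add_right ?_ _)
  refine Finset.card_le_card_of_injOn (fun W => W.map φ.toEmbedding) ?_
    (fun a _ b _ hab => Finset.map_injective _ hab)
  intro W hW
  rw [Finset.mem_coe, Finset.mem_sdiff, mem_meetF] at hW
  refine (map_mem_compsF φ fun x hx => hφ x fun hxD => hW.2 ⟨hW.1, x, hxD, hx⟩).2 hW.1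

/-- The components of `G'` avoiding the set `E`, which contains everything outside the image of the
unmodified vertices, come from `G`. -/
theorem num_le_of_embed' {h n n' : ℕ} (H : SimpleGraph (Fin h)) {G : SimpleGraph (Fin n)}
    {G' : SimpleGraph (Fin n')} (φ : Fin n ↪o Fin n') (D : Finset (Fin n)) (E : Finset (Fin n'))
    (hφ : ∀ x, x ∉ D → ∀ y, G'.Adj (φ x) y ↔ ∃ z, φ z = y ∧ G.Adj x z)
    (hE : ∀ y, y ∉ E → ∃ x, x ∉ D ∧ φ x = y) :
    (compsF H G').card ≤ (compsF H G).card + (meetF H G' E).card := by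
  classical
  have h1 : (compsF H G').card ≤ (compsF H G' \ meetF H G' E).card + (meetF H G' E).card :=
    Finset.card_le_card_sdiff_add_card
  refine h1.trans (Nat.add_le_add_right ?_ _)
  have hsub : compsF H G' \ meetF H G' E ⊆ (compsF H G).image (fun W => W.map φ.toEmbedding) := by
    intro W hW
    rw [Finset.mem_sdiff, mem_meetF] at hW
    have hWE : ∀ y ∈ W, y ∉ E := fun y hy hyE => hW.2 ⟨hW.1, y, hyE, hy⟩
    have hmap : (Finset.univ.filter fun x => φ x ∈ W).map φ.toEmbedding = W := by
      ext y
      simp only [Finset.mem_map, Finset.mem_filter, Finset.mem_univ, true_and]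
      constructor
      · rintro ⟨x, hx, rfl⟩
        exact hx
      · intro hy
        obtain ⟨x, -, rfl⟩ := hE y (hWE y hy)
        exact ⟨x, hy, rfl⟩
    rw [Finset.mem_image]
    refine ⟨_, ?_, hmap⟩
    rw [← map_mem_compsF φ, hmap]
    · exact hW.1
    · intro x hx
      rw [Finset.mem_filter] at hx
      obtain ⟨x', hx', e⟩ := hE _ (hWE _ hx.2)
      rw [← φ.injective e]
      exact hφ x' hx'
  exact (Finset.card_le_card hsub).trans Finset.card_image_le

/-- The vertices lying in some `H`-component. -/
noncomputable def occF {h n : ℕ} (H : SimpleGraph (Fin h)) (G : SimpleGraph (Fin n)) :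
    Finset (Fin n) := (compsF H G).biUnion id

theorem mem_occF {h n : ℕ} {H : SimpleGraph (Fin h)} {G : SimpleGraph (Fin n)} {x : Fin n} :
    x ∈ occF H G ↔ ∃ W ∈ compsF H G, x ∈ W := by
  simp [occF]

theorem card_occF_le {h n : ℕ} (H : SimpleGraph (Fin h)) (G : SimpleGraph (Fin n)) :
    (occF H G).card ≤ (compsF H G).card * h := by
  refine Finset.card_biUnion_le_card_mul _ _ _ fun W hW => ?_
  obtain ⟨hW, -⟩ := (mem_compsF.1 hW).2
  exact hW.le

theorem notMem_occF_of_adj {h n : ℕ} {H : SimpleGraph (Fin h)} {G : SimpleGraph (Fin n)}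
    {x y : Fin n} (hxy : G.Adj x y) (hx : x ∉ occF H G) : y ∉ occF H G := by
  intro hy
  obtain ⟨W, hW, hyW⟩ := mem_occF.1 hy
  exact hx (mem_occF.2 ⟨W, hW, (mem_compsF.1 hW).1.2 y hyW x hxy.symm⟩)

theorem card_meetF_eq_zero_of_occF {h n : ℕ} {H : SimpleGraph (Fin h)} {G : SimpleGraph (Fin n)}
    {D : Finset (Fin n)} (hD : ∀ x ∈ D, x ∉ occF H G) : (meetF H G D).card = 0 :=
  meetF_eq_zero fun W hW x hx hxW => hD x hx (mem_occF.2 ⟨W, hW, hxW⟩)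

/-! ### The three local moves -/

/-- If `φ` carries the full adjacency at the vertices outside `D`, then only leaves in `D` can be
lost. -/
theorem leaves_le_of_embed {n n' : ℕ} {G : SimpleGraph (Fin n)}
    {G' : SimpleGraph (Fin n')} (φ : Fin n ↪o Fin n') (D : Finset (Fin n))
    (hφ : ∀ x, x ∉ D → ∀ y, G'.Adj (φ x) y ↔ ∃ z, φ z = y ∧ G.Adj x z) :
    (leavesF G).card ≤ (leavesF G').card + D.card := by
  classical
  have h1 : (leavesF G).card ≤ (leavesF G \ D).card + D.card := Finset.card_le_card_sdiff_add_card
  refine h1.trans (Nat.add_le_add_right ?_ _)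
  refine Finset.card_le_card_of_injOn φ ?_ φ.injective.injOn
  intro x hx
  rw [Finset.mem_coe, Finset.mem_sdiff, mem_leavesF] at hx
  rw [Finset.mem_coe, mem_leavesF, ← hx.1]
  unfold vertexDegree
  rw [← Set.ncard_image_of_injective (G.neighborSet x) φ.injective]
  congr 1
  ext y
  rw [mem_neighborSet, hφ x hx.2 y]
  constructor
  · rintro ⟨z, e, hz⟩; exact ⟨z, hz, e⟩
  · rintro ⟨z, hz, e⟩; exact ⟨z, e, hz⟩

/-- The planar graphs with at least `k` leaves, at least `T j` components isomorphic to `H j` for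
every `j`, and at most `M` components isomorphic to `H i`. -/
noncomputable def Cls {l : ℕ} {h : Fin l → ℕ} (H : ∀ j, SimpleGraph (Fin (h j))) (i : Fin l)
    (n m k : ℕ) (T : Fin l → ℕ) (M : ℕ) : Finset (SimpleGraph (Fin n)) :=
  (Set.toFinite {G | G ∈ PF n m ∧ k ≤ (leavesF G).card ∧ (∀ j, T j ≤ (compsF (H j) G).card) ∧
    (compsF (H i) G).card ≤ M}).toFinset

section moves
variable {l : ℕ} {h : Fin l → ℕ} {H : ∀ j, SimpleGraph (Fin (h j))} {i : Fin l}

theorem mem_Cls {n m k : ℕ} {T : Fin l → ℕ} {M : ℕ} {G : SimpleGraph (Fin n)} :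
    G ∈ Cls H i n m k T M ↔ G ∈ PF n m ∧ k ≤ (leavesF G).card ∧
      (∀ j, T j ≤ (compsF (H j) G).card) ∧ (compsF (H i) G).card ≤ M := by
  unfold Cls
  rw [Set.Finite.mem_toFinset]
  exact Iff.rfl

theorem card_free_leaves {n m k : ℕ} {T : Fin l → ℕ} {M : ℕ} {G : SimpleGraph (Fin n)}
    (hG : G ∈ Cls H i n m k T M) : k - M * h i ≤ (leavesF G \ occF (H i) G).card := by
  have h1 := Finset.le_card_sdiff (occF (H i) G) (leavesF G)
  have h2 := card_occF_le (H i) G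
  obtain ⟨-, h3, -, h4⟩ := mem_Cls.1 hG
  have h5 := Nat.mul_le_mul_right (h i) h4
  omega

open Classical in
/-- The neighbour of a leaf (the vertex itself when it is not a leaf). -/
noncomputable def leafNbr {n : ℕ} (G : SimpleGraph (Fin n)) (v : Fin n) : Fin n :=
  if hv : ∃ u, ∀ y, G.Adj v y ↔ y = u then hv.choose else v

theorem leafNbr_spec {n : ℕ} {G : SimpleGraph (Fin n)} {v : Fin n} (hv : vertexDegree G v = 1)
    (y : Fin n) : G.Adj v y ↔ y = leafNbr G v := by
  have := vertexDegree_eq_one.1 hv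
  rw [leafNbr, dif_pos this]
  exact this.choose_spec y

/-- Deleting a leaf outside the `H i`-components. -/
theorem move_drop (n m k : ℕ) (T T' : Fin l → ℕ) (M : ℕ) (hTi : T' i ≤ T i)
    (hT : ∀ j, j ≠ i → T' j ≤ T j - 2) :
    (Cls H i (n + 1) (m + 1) k T M).card * (k - M * h i) ≤
      (n + 1) * (n + 1) * (Cls H i n m (k - 2) T' (M + 1)).card := by
  classical
  calc (Cls H i (n + 1) (m + 1) k T M).card * (k - M * h i)
      ≤ ∑ G ∈ Cls H i (n + 1) (m + 1) k T M, (leavesF G \ occF (H i) G).card := by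
        rw [← smul_eq_mul, ← Finset.sum_const]
        exact Finset.sum_le_sum fun G hG => card_free_leaves hG
    _ ≤ ((Finset.univ : Finset (Fin (n + 1) × Fin (n + 1))) ×ˢ
          Cls H i n m (k - 2) T' (M + 1)).card := by
        refine sum_card_le _ _ _ (fun G v => ((v, leafNbr G v), dropV G v)) ?_ ?_
        · intro G hG v hv
          rw [Finset.mem_sdiff, mem_leavesF] at hv
          obtain ⟨hv, hocc⟩ := hv
          obtain ⟨hPF, hk, hTG, hM⟩ := mem_Cls.1 hG
          rw [Finset.mem_product]
          refine ⟨Finset.mem_univ _, mem_Cls.2 ⟨dropV_mem_PF hPF hv, ?_, ?_⟩⟩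
          · have := leavesF_dropV hv
            show k - 2 ≤ (leavesF (dropV G v)).card
            omega
          show (∀ j, T' j ≤ (compsF (H j) (dropV G v)).card) ∧
            (compsF (H i) (dropV G v)).card ≤ M + 1
          have hnb := leafNbr_spec hv
          have hvu : G.Adj v (leafNbr G v) := (hnb _).2 rfl
          generalize leafNbr G v = w at hnb hvu
          rcases Fin.eq_self_or_eq_succAbove v w with rfl | ⟨u, rfl⟩
          · exact absurd hvu G.irrefl
          have hφ : ∀ x, x ∉ ({u} : Finset (Fin n)) → ∀ y, G.Adj (v.succAboveOrderEmb x) y ↔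
              ∃ z, v.succAboveOrderEmb z = y ∧ (dropV G v).Adj x z := by
            intro x hx y
            rw [Finset.mem_singleton] at hx
            rcases Fin.eq_self_or_eq_succAbove v y with rfl | ⟨y, rfl⟩
            · constructor
              · intro hxy
                exact absurd (Fin.succAbove_right_injective ((hnb _).1 hxy.symm)) hx
              · rintro ⟨z, hz, -⟩
                exact absurd hz (Fin.succAbove_ne _ z)
            · constructor
              · exact fun hxy => ⟨y, rfl, hxy⟩
              · rintro ⟨z, hz, hxz⟩
                rw [← hz]
                exact hxz
          have hE : ∀ y, y ∉ ({v, v.succAbove u} : Finset (Fin (n + 1))) →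
              ∃ x, x ∉ ({u} : Finset (Fin n)) ∧ v.succAboveOrderEmb x = y := by
            intro y hy
            rcases Fin.eq_self_or_eq_succAbove v y with rfl | ⟨y, rfl⟩
            · simp at hy
            · refine ⟨y, ?_, rfl⟩
              rw [Finset.mem_singleton]
              rintro rfl
              simp at hy
          constructor
          · intro j
            have h1 := num_le_of_embed' (H j) v.succAboveOrderEmb {u} _ hφ hE
            have h2 := hTG j
            by_cases hj : j = i
            · subst hj
              have h3 : (meetF (H j) G {v, v.succAbove u}).card = 0 := by
                refine card_meetF_eq_zero_of_occF fun x hx => ?_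
                rw [Finset.mem_insert, Finset.mem_singleton] at hx
                rcases hx with rfl | rfl
                · exact hocc
                · exact notMem_occF_of_adj hvu hocc
              omega
            · have h3 := card_meetF_le (H j) G {v, v.succAbove u}
              have h4 : ({v, v.succAbove u} : Finset (Fin (n + 1))).card ≤ 2 := Finset.card_le_two
              have h5 := hT j hj
              omega
          · have h1 := num_le_of_embed (H i) v.succAboveOrderEmb {u} hφ
            have h2 := card_meetF_le (H i) (dropV G v) {u}
            rw [Finset.card_singleton] at h2
            omega
        · intro G hG v hv G' hG' v' hv' heq
          rw [Finset.mem_sdiff, mem_leavesF] at hv hv'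
          simp only [Prod.mk.injEq] at heq
          obtain ⟨⟨rfl, h1⟩, h2⟩ := heq
          refine ⟨eq_of_dropV h2 fun y => ?_, rfl⟩
          rw [leafNbr_spec hv.1, leafNbr_spec hv'.1, h1]
    _ = _ := by rw [Finset.card_product, Finset.card_univ, Fintype.card_prod, Fintype.card_fin]

/-- An edge can be added at any leaf `x` while keeping the graph planar: to a second neighbour of
the neighbour of `x`, or, if `x` lies in a `K₂`-component, to any vertex outside it. -/
theorem exists_partner {n h : ℕ} {H : SimpleGraph (Fin h)} {G : SimpleGraph (Fin n)}
    (hG : IsPlanar G) {x : Fin n} (hx : vertexDegree G x = 1) (hocc : x ∉ occF H G)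
    (hn : (occF H G).card + 2 < n) :
    ∃ w, w ≠ x ∧ ¬ G.Adj x w ∧ w ∉ occF H G ∧ IsPlanar (G ⊔ edge x w) := by
  classical
  obtain ⟨y, hy⟩ := vertexDegree_eq_one.1 hx
  have hxy : G.Adj x y := (hy y).2 rfl
  by_cases hw : ∃ w, w ≠ x ∧ G.Adj y w
  · obtain ⟨w, hwx, hyw⟩ := hw
    have hwy : w ≠ y := hyw.ne'
    refine ⟨w, hwx, fun hc => hwy ((hy w).1 hc),
      notMem_occF_of_adj hyw (notMem_occF_of_adj hxy hocc), ?_⟩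
    refine IsPlanar.add_deg_two x y w ?_ (Or.inl hyw) ?_
    · rintro z (hz | hz)
      · exact Or.inl ((hy z).1 hz)
      · rw [edge_adj] at hz
        right
        rcases hz.1 with ⟨-, rfl⟩ | ⟨rfl, rfl⟩
        · rfl
        · exact absurd rfl hz.2
    · refine hG.of_injective Subtype.val Subtype.val_injective ?_
      rintro ⟨a, ha⟩ ⟨b, hb⟩ hab
      rcases hab with hab | hab
      · exact hab
      · simp only [Function.Embedding.subtype_apply] at hab
        rw [edge_adj] at hab
        rcases hab.1 with ⟨rfl, -⟩ | ⟨-, rfl⟩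
        · exact absurd rfl ha
        · exact absurd rfl hb
  · push Not at hw
    have hcard : (occF H G ∪ {x, y}).card < (Finset.univ : Finset (Fin n)).card := by
      rw [Finset.card_univ, Fintype.card_fin]
      have h1 := Finset.card_union_le (occF H G) {x, y}
      have h2 : ({x, y} : Finset (Fin n)).card ≤ 2 := Finset.card_le_two
      omega
    obtain ⟨z, -, hz⟩ := Finset.exists_mem_notMem_of_card_lt_card hcard
    simp only [Finset.mem_union, Finset.mem_insert, Finset.mem_singleton, not_or] at hz
    refine ⟨z, hz.2.1, fun hc => hz.2.2 ((hy z).1 hc), hz.1, hG.sup_edge ?_⟩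
    rintro ⟨p⟩
    have key : ∀ a b (_ : G.Walk a b), (a = x ∨ a = y) → (b = x ∨ b = y) := by
      intro a b p
      induction p with
      | nil => exact id
      | cons hab _ ih =>
        intro ha
        apply ih
        rcases ha with rfl | rfl
        · exact Or.inr ((hy _).1 hab)
        · by_contra hc
          rw [not_or] at hc
          exact hw _ hc.1 hab
    rcases key x z p (Or.inl rfl) with h | h
    · exact hz.2.1 h
    · exact hz.2.2 h

/-- Adding an edge at a leaf outside the `H i`-components. -/
theorem move_edge (n m k : ℕ) (T T' : Fin l → ℕ) (M : ℕ) (hTi : T' i ≤ T i)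
    (hT : ∀ j, j ≠ i → T' j ≤ T j - 2) (hn : M * h i + 2 < n) :
    (Cls H i n m k T M).card * (k - M * h i) ≤
      (Cls H i n (m + 1) (k - 2) T' (M + 2)).card * (2 * (m + 1)) := by
  classical
  have hex : ∀ (G : SimpleGraph (Fin n)) (x : Fin n), ∃ w, G ∈ Cls H i n m k T M →
      x ∈ leavesF G \ occF (H i) G →
      w ≠ x ∧ ¬ G.Adj x w ∧ w ∉ occF (H i) G ∧ IsPlanar (G ⊔ edge x w) := by
    intro G x
    by_cases hG : G ∈ Cls H i n m k T M
    · by_cases hx : x ∈ leavesF G \ occF (H i) G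
      · obtain ⟨hPF, -, -, hM⟩ := mem_Cls.1 hG
        rw [Finset.mem_sdiff, mem_leavesF] at hx
        have h1 := card_occF_le (H i) G
        have h2 := Nat.mul_le_mul_right (h i) hM
        obtain ⟨w, hw⟩ := exists_partner (mem_PF.1 hPF).1 hx.1 hx.2 (by omega)
        exact ⟨w, fun _ _ => hw⟩
      · exact ⟨x, fun _ hx' => absurd hx' hx⟩
    · exact ⟨x, fun hG' => absurd hG' hG⟩
  choose w hw using hex
  calc (Cls H i n m k T M).card * (k - M * h i)
      ≤ ∑ G ∈ Cls H i n m k T M, (leavesF G \ occF (H i) G).card := by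
        rw [← smul_eq_mul, ← Finset.sum_const]
        exact Finset.sum_le_sum fun G hG => card_free_leaves hG
    _ ≤ ((Cls H i n (m + 1) (k - 2) T' (M + 2)).sigma fun G => dartsF G).card := by
        refine sum_card_le _ _ _ (fun G x => ⟨G ⊔ edge x (w G x), (x, w G x)⟩) ?_ ?_
        · intro G hG x hx
          obtain ⟨hwx, hnadj, hwocc, hpl⟩ := hw G x hG hx
          generalize w G x = z at hwx hnadj hwocc hpl
          rw [Finset.mem_sdiff, mem_leavesF] at hx
          obtain ⟨hPF, hk, hTG, hM⟩ := mem_Cls.1 hG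
          rw [mem_PF] at hPF
          have hφ : ∀ a, a ∉ ({x, z} : Finset (Fin n)) → ∀ y,
              (G ⊔ edge x z).Adj (RelEmbedding.refl (α := Fin n) (· ≤ ·) a) y ↔
              ∃ b, RelEmbedding.refl (α := Fin n) (· ≤ ·) b = y ∧ G.Adj a b := by
            intro a ha y
            simp only [Finset.mem_insert, Finset.mem_singleton, not_or] at ha
            simp only [RelEmbedding.refl_apply, exists_eq_left, sup_adj, edge_adj]
            grind
          have hE : ∀ y, y ∉ ({x, z} : Finset (Fin n)) → ∃ a, a ∉ ({x, z} : Finset (Fin n)) ∧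
              RelEmbedding.refl (α := Fin n) (· ≤ ·) a = y := fun y hy => ⟨y, hy, rfl⟩
          have hc2 : ({x, z} : Finset (Fin n)).card ≤ 2 := Finset.card_le_two
          rw [Finset.mem_sigma]
          refine ⟨mem_Cls.2 ⟨mem_PF.2 ⟨hpl, ?_⟩, ?_, ?_, ?_⟩, ?_⟩
          · rw [edgeCount_sup_edge hwx.symm hnadj, hPF.2]
          · have := leaves_le_of_embed _ _ hφ
            show k - 2 ≤ (leavesF (G ⊔ edge x z)).card
            omega
          · intro j
            show T' j ≤ (compsF (H j) (G ⊔ edge x z)).card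
            have h1 := num_le_of_embed (H j) _ _ hφ
            have h2 := hTG j
            by_cases hj : j = i
            · subst hj
              have h3 : (meetF (H j) G {x, z}).card = 0 := by
                refine card_meetF_eq_zero_of_occF fun a ha => ?_
                rw [Finset.mem_insert, Finset.mem_singleton] at ha
                rcases ha with rfl | rfl
                · exact hx.2
                · exact hwocc
              omega
            · have h3 := card_meetF_le (H j) G {x, z}
              have h5 := hT j hj
              omega
          · show (compsF (H i) (G ⊔ edge x z)).card ≤ M + 2
            have h1 := num_le_of_embed' (H i) _ _ _ hφ hE
            have h2 := card_meetF_le (H i) (G ⊔ edge x z) {x, z}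
            omega
          · rw [mem_dartsF]
            exact Or.inr (by simp only [edge_adj]; grind)
        · intro G hG x hx G' hG' x' hx' heq
          have h1 := hw G x hG hx
          have h2 := hw G' x' hG' hx'
          simp only [Sigma.mk.injEq, heq_eq_eq, Prod.mk.injEq] at heq
          obtain ⟨h3, rfl, h4⟩ := heq
          rw [← h4] at h2 h3
          exact ⟨sup_edge_injective h1.2.1 h2.2.1 h3, rfl⟩
    _ = _ := by
        rw [Finset.card_sigma]
        refine Finset.sum_const_nat fun G hG => ?_
        rw [card_dartsF, (mem_PF.1 (mem_Cls.1 hG).1).2]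

/-- Inserting a new component isomorphic to `H i`, with freely chosen labels. -/
theorem move_place (n m k : ℕ) (T T' : Fin l → ℕ) (M : ℕ) (hconn : (H i).Connected)
    (hpl : IsPlanar (H i)) (hTi : T' i ≤ T i + 1) (hT : ∀ j, j ≠ i → T' j ≤ T j) :
    (h i + n).choose (h i) * (Cls H i n m k T M).card ≤
      (Cls H i (h i + n) (edgeCount (H i) + m) k T' (M + h i)).card * (M + h i) := by
  classical
  calc (h i + n).choose (h i) * (Cls H i n m k T M).card
      = ∑ A ∈ (Finset.univ : Finset {A : Finset (Fin (h i + n)) // A.card = h i}),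
          (Cls H i n m k T M).card := by
        rw [Finset.sum_const, smul_eq_mul, Finset.card_univ, Fintype.card_finset_len,
          Fintype.card_fin]
    _ ≤ ((Cls H i (h i + n) (edgeCount (H i) + m) k T' (M + h i)).sigma
          fun G => compsF (H i) G).card := by
        refine sum_card_le _ _ _ (fun A G => ⟨place A (H i) G fun _ _ => False, A.1⟩) ?_ ?_
        · intro A _ G hG
          obtain ⟨hPF, hk, hTG, hM⟩ := mem_Cls.1 hG
          rw [mem_PF] at hPF
          set φ : Fin n ↪o Fin (h i + n) := (A.1ᶜ).orderEmbOfFin (card_compl_fin A.2) with hφdef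
          have hφs : ∀ x, φ x = spl A (Sum.inr x) := by
            intro x
            rw [spl, finSumEquivOfFinset_inr]
          have hls : ∀ x, (A.1.orderIsoOfFin A.2 x : Fin (h i + n)) = spl A (Sum.inl x) := by
            intro x
            rw [spl, finSumEquivOfFinset_inl]; rfl
          have hφ : ∀ a, a ∉ (∅ : Finset (Fin n)) → ∀ y,
              (place A (H i) G fun _ _ => False).Adj (φ a) y ↔ ∃ b, φ b = y ∧ G.Adj a b := by
            intro a _ y
            rw [hφs]
            obtain ⟨y | y, rfl⟩ := (spl A).surjective y
            · rw [place_adj]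
              simp [hφs]
            · rw [place_adj]
              simp [hφs]
          have hE : ∀ y, y ∉ A.1 → ∃ a, a ∉ (∅ : Finset (Fin n)) ∧ φ a = y := by
            intro y hy
            obtain ⟨a, rfl⟩ := (notMem_iff_spl y).1 hy
            exact ⟨a, Finset.notMem_empty a, hφs a⟩
          have hAmem : A.1 ∈ compsF (H i) (place A (H i) G fun _ _ => False) := by
            rw [mem_compsF, isComponent_iff]
            refine ⟨⟨place_connIn hconn, ?_⟩, A.2, ?_⟩
            · intro v hv u hvu
              obtain ⟨a, rfl⟩ := (mem_iff_spl v).1 hv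
              obtain ⟨b | b, rfl⟩ := (spl A).surjective u
              · exact spl_inl_mem A b
              · rw [place_adj] at hvu
                exact hvu.elim
            · intro a b
              rw [hls, hls, place_adj, linkG_ll]
          have hi : Nonempty (Fin (h i)) := hconn.nonempty
          obtain ⟨p⟩ := hi
          rw [Finset.mem_sigma]
          refine ⟨mem_Cls.2 ⟨mem_PF.2 ⟨?_, ?_⟩, ?_, ?_, ?_⟩, hAmem⟩
          · refine IsPlanar.iso ?_ placeIso
            exact linkG_planar hpl hPF.1 (Sum.inl p) (Sum.inl p) (fun _ _ hf => hf.elim)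
          · rw [edgeCount_iso placeIso, linkG_edgeCount_false, hPF.2]
          · have := leaves_le_of_embed φ ∅ hφ
            rw [Finset.card_empty] at this
            show k ≤ (leavesF (place A (H i) G fun _ _ => False)).card
            omega
          · intro j
            show T' j ≤ (compsF (H j) (place A (H i) G fun _ _ => False)).card
            by_cases hj : j = i
            · subst hj
              have hsub : insert A.1 ((compsF (H j) G).image fun W => W.map φ.toEmbedding) ⊆
                  compsF (H j) (place A (H j) G fun _ _ => False) := by
                intro W hW
                rw [Finset.mem_insert, Finset.mem_image] at hW
                rcases hW with rfl | ⟨W, hW, rfl⟩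
                · exact hAmem
                · exact (map_mem_compsF φ fun x _ => hφ x (Finset.notMem_empty x)).2 hW
              have hnot : A.1 ∉ (compsF (H j) G).image fun W => W.map φ.toEmbedding := by
                rw [Finset.mem_image]
                rintro ⟨W, -, hWA⟩
                have h1 := spl_inl_mem A p
                rw [← hWA, Finset.mem_map] at h1
                obtain ⟨x, -, hx⟩ := h1
                have hx' : spl A (Sum.inr x) = spl A (Sum.inl p) := (hφs x).symm.trans hx
                simp at hx'
              have h2 := Finset.card_le_card hsub
              rw [Finset.card_insert_of_notMem hnot,
                Finset.card_image_of_injective _ (Finset.map_injective _)] at h2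
              have h3 := hTG j
              omega
            · have h1 := num_le_of_embed (H j) φ ∅ hφ
              have h2 := card_meetF_le (H j) G ∅
              rw [Finset.card_empty] at h2
              have h3 := hTG j
              have h4 := hT j hj
              omega
          · show (compsF (H i) (place A (H i) G fun _ _ => False)).card ≤ M + h i
            have h1 := num_le_of_embed' (H i) φ ∅ A.1 hφ hE
            have h2 := card_meetF_le (H i) (place A (H i) G fun _ _ => False) A.1
            rw [A.2] at h2
            omega
        · intro A _ G _ A' _ G' _ heq
          simp only [Sigma.mk.injEq, heq_eq_eq] at heq
          obtain rfl : A = A' := Subtype.ext heq.2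
          exact ⟨rfl, (place_left_injective heq.1).2⟩
    _ ≤ _ := by
        rw [Finset.card_sigma]
        exact Finset.sum_le_card_nsmul _ _ _ fun G hG => (mem_Cls.1 hG).2.2.2

end moves

/-! ### Creating one more component -/

section create
variable {l : ℕ} {h : Fin l → ℕ} {H : ∀ j, SimpleGraph (Fin (h j))} {i : Fin l}

theorem move_drop_iter (r : ℕ) : ∀ (n m k q : ℕ) (T T' : Fin l → ℕ) (M : ℕ), T' i ≤ T i →
    (∀ j, j ≠ i → T' j ≤ T j - 2 * r) → q + 2 * r + (M + r) * h i ≤ k →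
    (Cls H i (n + r) (m + r) k T M).card * q ^ r ≤
      (n + r) ^ (2 * r) * (Cls H i n m (k - 2 * r) T' (M + r)).card := by
  induction r with
  | zero =>
    intro n m k q T T' M hTi hT hq
    rw [pow_zero, mul_one, mul_zero, pow_zero, one_mul]
    refine Finset.card_le_card fun G hG => ?_
    obtain ⟨h1, h2, h3, h4⟩ := mem_Cls.1 hG
    refine mem_Cls.2 ⟨h1, h2, fun j => ?_, h4⟩
    by_cases hj : j = i
    · subst hj; exact hTi.trans (h3 j)
    · exact (hT j hj).trans ((Nat.sub_le _ _).trans (h3 j))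
  | succ r ih =>
    intro n m k q T T' M hTi hT hq
    have hMr : (M + r) * h i ≤ (M + (r + 1)) * h i := Nat.mul_le_mul_right _ (by omega)
    have h1 := ih (n + 1) (m + 1) k q T (fun j => if j = i then T i else T j - 2 * r) M
      (by simp) (fun j hj => by simp [hj]) (by omega)
    have h2 := move_drop (H := H) (i := i) n m (k - 2 * r)
      (fun j => if j = i then T i else T j - 2 * r) T' (M + r) (by simpa using hTi)
      (fun j hj => by
        have := hT j hj
        simp only [hj, if_false]
        omega)
    have e1 : n + 1 + r = n + (r + 1) := by ring
    have e2 : m + 1 + r = m + (r + 1) := by ring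
    rw [e1, e2] at h1
    have e3 : k - 2 * r - 2 = k - 2 * (r + 1) := by omega
    rw [e3] at h2
    have hq' : q ≤ k - 2 * r - (M + r) * h i := by omega
    have hn1 : (n + 1) * (n + 1) ≤ (n + (r + 1)) ^ 2 := by
      rw [sq]; exact Nat.mul_le_mul (by omega) (by omega)
    rw [add_assoc] at h2
    generalize (Cls H i (n + (r + 1)) (m + (r + 1)) k T M).card = a at *
    generalize (Cls H i (n + 1) (m + 1) (k - 2 * r)
      (fun j => if j = i then T i else T j - 2 * r) (M + r)).card = b at *
    generalize (Cls H i n m (k - 2 * (r + 1)) T' (M + (r + 1))).card = d at *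
    calc a * q ^ (r + 1) = (a * q ^ r) * q := by ring
      _ ≤ ((n + (r + 1)) ^ (2 * r) * b) * q := Nat.mul_le_mul_right _ h1
      _ = (n + (r + 1)) ^ (2 * r) * (b * q) := by ring
      _ ≤ (n + (r + 1)) ^ (2 * r) * ((n + (r + 1)) ^ 2 * d) := by
          refine Nat.mul_le_mul_left _ ?_
          exact ((Nat.mul_le_mul_left _ hq').trans h2).trans (Nat.mul_le_mul_right _ hn1)
      _ = _ := by ring

/-- Trading `h i` leaves (and one extra edge, if `H i` is a tree) for a new component `H i` keeps
the numbers of vertices and edges and loses only a constant factor. -/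
theorem move_all (hconn : (H i).Connected) (hpl : IsPlanar (H i)) (hedge : edgeCount (H i) ≤ h i)
    {α : ℝ} (hα : 0 < α) (T T' : Fin l → ℕ) (M : ℕ) (hTi : T' i ≤ T i + 1)
    (hT : ∀ j, j ≠ i → T' j ≤ T j - (2 * h i + 2)) :
    ∃ δ : ℝ, 0 < δ ∧ ∃ N0 : ℕ, ∀ n m k : ℕ, N0 ≤ n → h i ≤ m → m ≤ 3 * n → α * n ≤ k →
      δ * (Cls H i n m k T M).card ≤
        (Cls H i n m (k - (2 * h i + 2)) T' (M + 2 * h i + 2)).card := by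
  set s := h i with hs
  set K : ℕ := M + 2 * s + 2 with hK
  set δ0 : ℝ := min 1 (α / 16) with hδ0
  have hδ0pos : 0 < δ0 := lt_min one_pos (by positivity)
  set R : ℕ := 2 * s + 2 + (M + s + 2) * s with hR
  obtain ⟨N1, hN1⟩ := exists_nat_ge (2 * (R : ℝ) / α)
  have hKpos : (0 : ℝ) < K := by positivity
  refine ⟨(α / 2) ^ s * δ0 / (K * (2 ^ s * (s.factorial : ℝ))), by positivity,
    N1 + 2 * s + R + 4, ?_⟩
  intro n' m' k hn hm hm3 hk
  obtain ⟨n, rfl⟩ : ∃ n, n' = n + s := ⟨n' - s, by omega⟩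
  obtain ⟨m, rfl⟩ : ∃ m, m' = m + s := ⟨m' - s, by omega⟩
  have hnpos : (0 : ℝ) < ((n + s : ℕ) : ℝ) := by
    have : 0 < n + s := by omega
    exact_mod_cast this
  -- the number of leaves available at every stage
  have hRk : (R : ℝ) ≤ α * ((n + s : ℕ) : ℝ) / 2 := by
    have h1 : (N1 : ℝ) ≤ ((n + s : ℕ) : ℝ) := by exact_mod_cast (by omega : N1 ≤ n + s)
    have h2 := hN1.trans h1
    rw [div_le_iff₀ hα] at h2
    linarith
  have hRk' : R ≤ k := by
    have : (R : ℝ) ≤ k := by nlinarith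
    exact_mod_cast this
  obtain ⟨q, rfl⟩ : ∃ q, k = q + R := ⟨k - R, by omega⟩
  have hq : α * ((n + s : ℕ) : ℝ) / 2 ≤ q := by
    push_cast at hk hRk ⊢
    linarith
  have hMs : (M + s) * s ≤ (M + s + 2) * s := Nat.mul_le_mul_right _ (by omega)
  -- intermediate thresholds
  set T1 : Fin l → ℕ := fun j => if j = i then T i else T j - 2 * s with hT1
  have hdrop := move_drop_iter (H := H) (i := i) s n m (q + R) q T T1 M (by simp [hT1])
    (fun j hj => by simp [hT1, hj]) (by rw [← hs]; omega)
  set T2 : Fin l → ℕ := fun j => if j = i then T i else T j - (2 * s + 2) with hT2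
  -- the (possibly trivial) edge addition
  obtain ⟨m2, hm2, hm2e⟩ : ∃ m2, edgeCount (H i) + m2 = m + s ∧
      δ0 * (Cls H i n m (q + R - 2 * s) T1 (M + s)).card ≤
        (Cls H i n m2 (q + R - (2 * s + 2)) T2 (M + s + 2)).card := by
    have hge : s ≤ edgeCount (H i) + 1 := by
      have := hconn.card_vert_le_card_edgeSet_add_one
      rw [Nat.card_eq_fintype_card, Fintype.card_fin] at this
      exact this
    rcases Nat.lt_or_ge (edgeCount (H i)) s with hlt | hge'
    · refine ⟨m + 1, by omega, ?_⟩
      have h1 := move_edge (H := H) (i := i) n m (q + R - 2 * s) T1 T2 (M + s)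
        (by simp [hT1, hT2])
        (fun j hj => by simp only [hT1, hT2, hj, if_false]; omega)
        (by rw [← hs]; omega)
      have e3 : q + R - 2 * s - 2 = q + R - (2 * s + 2) := by omega
      rw [e3, ← hs] at h1
      have h2 : q ≤ q + R - 2 * s - (M + s) * s := by omega
      have h3 := (Nat.mul_le_mul_left (Cls H i n m (q + R - 2 * s) T1 (M + s)).card h2).trans h1
      generalize (Cls H i n m (q + R - 2 * s) T1 (M + s)).card = b at *
      generalize (Cls H i n (m + 1) (q + R - (2 * s + 2)) T2 (M + s + 2)).card = d at *
      have h4 : (b : ℝ) * q ≤ d * (2 * (m + 1)) := by exact_mod_cast h3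
      have h5 : (2 * ((m : ℝ) + 1)) ≤ 8 * ((n + s : ℕ) : ℝ) := by
        have : 2 * (m + 1) ≤ 8 * (n + s) := by omega
        exact_mod_cast this
      have h6 : (b : ℝ) * (α * ((n + s : ℕ) : ℝ) / 2) ≤ d * (8 * ((n + s : ℕ) : ℝ)) :=
        (mul_le_mul_of_nonneg_left hq (Nat.cast_nonneg b)).trans
          (h4.trans (mul_le_mul_of_nonneg_left h5 (Nat.cast_nonneg d)))
      have h7 : α / 16 * b ≤ d := by
        refine le_of_mul_le_mul_right ?_ hnpos
        linarith
      exact (mul_le_mul_of_nonneg_right (min_le_right _ _) (Nat.cast_nonneg b)).trans h7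
    · refine ⟨m, by omega, ?_⟩
      refine (mul_le_of_le_one_left (Nat.cast_nonneg _) (min_le_left _ _)).trans ?_
      refine Nat.cast_le.2 (Finset.card_le_card fun G hG => ?_)
      obtain ⟨h1, h2, h3, h4⟩ := mem_Cls.1 hG
      refine mem_Cls.2 ⟨h1, by omega, fun j => le_trans ?_ (h3 j), by omega⟩
      by_cases hj : j = i
      · simp [hT1, hT2, hj]
      · simp only [hT1, hT2, hj, if_false]; omega
  have hplace := move_place (H := H) (i := i) n m2 (q + R - (2 * s + 2)) T2 T' (M + s + 2) hconn hpl
    (by simpa [hT2] using hTi) (fun j hj => by simpa [hT2, hj] using hT j hj)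
  have e4 : M + s + 2 + s = K := by omega
  have e5 : s + n = n + s := add_comm _ _
  rw [hm2, ← hs, e4, e5] at hplace
  -- a lower bound for the binomial coefficient
  have hbin : ((n + s : ℕ) : ℝ) ^ s ≤ 2 ^ s * (s.factorial : ℝ) * ((n + s).choose s : ℝ) := by
    have h1 := Nat.pow_le_choose (α := ℝ) s (n + s)
    have h2 : ((n + s : ℕ) : ℝ) ≤ 2 * ((n + s + 1 - s : ℕ) : ℝ) := by
      have : n + s ≤ 2 * (n + s + 1 - s) := by omega
      exact_mod_cast this
    have h4 := div_le_iff₀' (by positivity : (0 : ℝ) < s.factorial) |>.1 h1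
    calc ((n + s : ℕ) : ℝ) ^ s ≤ (2 * ((n + s + 1 - s : ℕ) : ℝ)) ^ s :=
          pow_le_pow_left₀ (Nat.cast_nonneg _) h2 s
      _ = 2 ^ s * ((n + s + 1 - s : ℕ) : ℝ) ^ s := mul_pow _ _ _
      _ ≤ 2 ^ s * (s.factorial * ((n + s).choose s : ℝ)) :=
          mul_le_mul_of_nonneg_left (by exact_mod_cast h4) (by positivity)
      _ = _ := by ring
  generalize (Cls H i (n + s) (m + s) (q + R) T M).card = a at *
  generalize (Cls H i n m (q + R - 2 * s) T1 (M + s)).card = b at *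
  generalize (Cls H i n m2 (q + R - (2 * s + 2)) T2 (M + s + 2)).card = d at *
  generalize (Cls H i (n + s) (m + s) (q + R - (2 * s + 2)) T' K).card = f at *
  generalize (n + s).choose s = ch at *
  have hdrop' : (a : ℝ) * (q : ℝ) ^ s ≤ ((n + s : ℕ) : ℝ) ^ (2 * s) * b := by exact_mod_cast hdrop
  have hplace' : (ch : ℝ) * d ≤ f * K := by exact_mod_cast hplace
  generalize ((n + s : ℕ) : ℝ) = x at *
  have hxs : 0 < x ^ s := by positivity
  have h1 : (a : ℝ) * (α / 2) ^ s ≤ x ^ s * b := by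
    refine le_of_mul_le_mul_right ?_ hxs
    calc (a : ℝ) * (α / 2) ^ s * x ^ s = a * (α * x / 2) ^ s := by
          rw [mul_assoc, ← mul_pow]; ring
      _ ≤ a * (q : ℝ) ^ s := mul_le_mul_of_nonneg_left
          (pow_le_pow_left₀ (by positivity) hq s) (Nat.cast_nonneg a)
      _ ≤ _ := hdrop'
      _ = _ := by rw [two_mul, pow_add]; ring
  rw [div_mul_eq_mul_div, div_le_iff₀ (by positivity)]
  calc (α / 2) ^ s * δ0 * a = δ0 * (a * (α / 2) ^ s) := by ring
    _ ≤ δ0 * (x ^ s * b) := mul_le_mul_of_nonneg_left h1 hδ0pos.le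
    _ = x ^ s * (δ0 * b) := by ring
    _ ≤ x ^ s * d := mul_le_mul_of_nonneg_left hm2e hxs.le
    _ ≤ (2 ^ s * (s.factorial : ℝ) * ch) * d := mul_le_mul_of_nonneg_right hbin (Nat.cast_nonneg d)
    _ = (2 ^ s * (s.factorial : ℝ)) * (ch * d) := by ring
    _ ≤ (2 ^ s * (s.factorial : ℝ)) * (f * K) := mul_le_mul_of_nonneg_left hplace' (by positivity)
    _ = _ := by ring

end create

/-! ### Many leaves with positive probability -/

theorem leafSum_linear {c B : ℝ} (hc : 0 < c) (hB : B < 3) : ∃ α : ℝ, 0 < α ∧ ∃ N : ℕ, ∀ n m : ℕ,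
    N ≤ n → c * (n : ℝ) ≤ m → (m : ℝ) ≤ B * n → α * n * (PF n m).card ≤ leafSum n m := by
  obtain ⟨α1, hα1, N1, h1⟩ := leafSum_dense (B := max B 2) (le_max_right _ _)
    (max_lt hB (by norm_num))
  obtain ⟨α2, hα2, N2, h2⟩ := leafSum_sparse hc
  refine ⟨min α1 α2, lt_min hα1 hα2, max N1 N2, fun n m hn hcm hmB => ?_⟩
  rcases le_total (1.01 * (n : ℝ)) m with hm | hm
  · refine le_trans ?_ (h1 n m ((le_max_left _ _).trans hn) hm
      (hmB.trans (mul_le_mul_of_nonneg_right (le_max_left _ _) (Nat.cast_nonneg _))))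
    exact mul_le_mul_of_nonneg_right (mul_le_mul_of_nonneg_right (min_le_left _ _)
      (Nat.cast_nonneg _)) (Nat.cast_nonneg _)
  · refine le_trans ?_ (h2 n m ((le_max_right _ _).trans hn) hcm hm)
    exact mul_le_mul_of_nonneg_right (mul_le_mul_of_nonneg_right (min_le_right _ _)
      (Nat.cast_nonneg _)) (Nat.cast_nonneg _)

theorem PF_nonempty {B : ℝ} (hB : B < 3) : ∃ N : ℕ, ∀ n m : ℕ, N ≤ n → (m : ℝ) ≤ B * n →
    0 < (PF n m).card := by
  obtain ⟨N1, h1⟩ := PF_pos hB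
  obtain ⟨N2, h2⟩ := PF_pos (B := 2) (by norm_num)
  refine ⟨max N1 N2, fun n m hn hm => ?_⟩
  have hn0 : (0 : ℝ) ≤ n := Nat.cast_nonneg n
  rcases le_total (1.01 * (n : ℝ)) m with hm' | hm'
  · exact h1 n m ((le_max_left _ _).trans hn) hm' hm
  · have := h2 n (2 * n) ((le_max_right _ _).trans hn) (by push_cast; linarith) (by push_cast; rfl)
    obtain ⟨K, hK⟩ := Finset.card_pos.1 this
    rw [mem_PF] at hK
    have hm2 : m ≤ 2 * n := by
      have : (m : ℝ) ≤ ((2 * n : ℕ) : ℝ) := by push_cast; linarith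
      exact_mod_cast this
    obtain ⟨L, -, hLK, hL⟩ := exists_edgeCount_between (G := (⊥ : SimpleGraph (Fin n))) (K := K)
      (m := m) bot_le (by simp [edgeCount]) (by omega)
    exact Finset.card_pos.2 ⟨L, mem_PF.2 ⟨hK.1.mono hLK, hL⟩⟩

/-! ### Raising the thresholds one component at a time -/

/-- The planar graphs with at least `k` leaves and at least `T j` components isomorphic to `H j`
for every `j`. -/
noncomputable def Gd {l : ℕ} {h : Fin l → ℕ} (H : ∀ j, SimpleGraph (Fin (h j)))
    (n m k : ℕ) (T : Fin l → ℕ) : Finset (SimpleGraph (Fin n)) :=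
  (Set.toFinite {G | G ∈ PF n m ∧ k ≤ (leavesF G).card ∧
    ∀ j, T j ≤ (compsF (H j) G).card}).toFinset

/-- Uniformly over `c n ≤ m ≤ B n`, a positive fraction of the planar graphs has linearly many
leaves and at least `T j` components isomorphic to `H j` for every `j`. -/
def Good {l : ℕ} {h : Fin l → ℕ} (H : ∀ j, SimpleGraph (Fin (h j))) (c B : ℝ)
    (T : Fin l → ℕ) : Prop :=
  ∃ α : ℝ, 0 < α ∧ ∃ ε : ℝ, 0 < ε ∧ ∃ N : ℕ, ∀ n m : ℕ, N ≤ n → c * (n : ℝ) ≤ m →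
    (m : ℝ) ≤ B * n → ε * (PF n m).card ≤ (Gd H n m ⌈α * n⌉₊ T).card

section good
variable {l : ℕ} {h : Fin l → ℕ} {H : ∀ j, SimpleGraph (Fin (h j))} {c B : ℝ}

theorem mem_Gd {n m k : ℕ} {T : Fin l → ℕ} {G : SimpleGraph (Fin n)} :
    G ∈ Gd H n m k T ↔ G ∈ PF n m ∧ k ≤ (leavesF G).card ∧
      ∀ j, T j ≤ (compsF (H j) G).card := by
  unfold Gd
  rw [Set.Finite.mem_toFinset]
  exact Iff.rfl

theorem good_zero (hc : 0 < c) (hB : B < 3) : Good H c B fun _ => 0 := by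
  classical
  obtain ⟨α, hα, N, hN⟩ := leafSum_linear hc hB
  refine ⟨α / 2, by positivity, α / 2, by positivity, N + 1, fun n m hn hcm hmB => ?_⟩
  have h1 := hN n m (by omega) hcm hmB
  have hn0 : (0 : ℝ) < n := by exact_mod_cast (by omega : 0 < n)
  set k := ⌈α / 2 * (n : ℝ)⌉₊ with hk
  have h2 : (leafSum n m : ℝ) ≤ n * (Gd H n m k fun _ => 0).card + α / 2 * n * (PF n m).card := by
    have hsub : Gd H n m k (fun _ => 0) ⊆ PF n m := fun G hG => (mem_Gd.1 hG).1
    rw [leafSum, ← Finset.sum_sdiff hsub, Nat.cast_add, add_comm]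
    refine add_le_add ?_ ?_
    · rw [mul_comm]
      have : ∑ G ∈ Gd H n m k (fun _ => 0), (leavesF G).card ≤
          (Gd H n m k fun _ => 0).card • n :=
        Finset.sum_le_card_nsmul _ _ _ fun G _ => by
          simpa using Finset.card_le_univ (leavesF G)
      exact_mod_cast this
    · rw [Nat.cast_sum]
      have h3 : ∑ G ∈ PF n m \ Gd H n m k (fun _ => 0), ((leavesF G).card : ℝ) ≤
          (PF n m \ Gd H n m k (fun _ => 0)).card • (α / 2 * (n : ℝ)) := by
        refine Finset.sum_le_card_nsmul _ _ _ fun G hG => ?_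
        rw [Finset.mem_sdiff, mem_Gd] at hG
        by_contra hlt
        rw [not_le] at hlt
        exact hG.2 ⟨hG.1, Nat.ceil_le.2 hlt.le, fun _ => Nat.zero_le _⟩
      rw [nsmul_eq_mul, mul_comm] at h3
      refine h3.trans (mul_le_mul_of_nonneg_left ?_ (by positivity))
      exact Nat.cast_le.2 (Finset.card_le_card Finset.sdiff_subset)
  refine le_of_mul_le_mul_right ?_ hn0
  linarith

theorem good_step (hc : 0 < c) (hB : B < 3) {i : Fin l} (hconn : (H i).Connected)
    (hpl : IsPlanar (H i)) (hedge : edgeCount (H i) ≤ h i) {T T' : Fin l → ℕ}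
    (hTi : T' i ≤ T i + 1) (hT : ∀ j, j ≠ i → T' j ≤ T j - (2 * h i + 2))
    (hgood : Good H c B T) : Good H c B T' := by
  classical
  obtain ⟨α, hα, ε, hε, N1, hN1⟩ := hgood
  obtain ⟨δ, hδ, N2, hN2⟩ := move_all (H := H) (i := i) hconn hpl hedge hα T T' (T i) hTi hT
  obtain ⟨N3, hN3⟩ := exists_nat_ge ((h i : ℝ) / c)
  obtain ⟨N4, hN4⟩ := exists_nat_ge (2 * (2 * (h i : ℝ) + 2) / α)
  refine ⟨α / 2, by positivity, ε / 2 * min 1 δ, by positivity, N1 + N2 + N3 + N4,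
    fun n m hn hcm hmB => ?_⟩
  have h1 := hN1 n m (by omega) hcm hmB
  have hn0 : (0 : ℝ) ≤ n := Nat.cast_nonneg n
  have hm : h i ≤ m := by
    have h2 : (N3 : ℝ) ≤ n := by exact_mod_cast (by omega : N3 ≤ n)
    have h3 := hN3.trans h2
    rw [div_le_iff₀ hc] at h3
    have : (h i : ℝ) ≤ m := by linarith
    exact_mod_cast this
  have hm3 : m ≤ 3 * n := by
    have : (m : ℝ) ≤ 3 * n := by nlinarith
    exact_mod_cast this
  have h2 := hN2 n m ⌈α * (n : ℝ)⌉₊ (by omega) hm hm3 (Nat.le_ceil _)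
  have hk : ⌈α / 2 * (n : ℝ)⌉₊ ≤ ⌈α * (n : ℝ)⌉₊ - (2 * h i + 2) := by
    rw [Nat.ceil_le]
    have h3 : (N4 : ℝ) ≤ n := by exact_mod_cast (by omega : N4 ≤ n)
    have h4 := hN4.trans h3
    rw [div_le_iff₀ hα] at h4
    have h5 := Nat.le_ceil (α * (n : ℝ))
    have h6 : ((⌈α * (n : ℝ)⌉₊ : ℕ) : ℝ) - ((2 * h i + 2 : ℕ) : ℝ) ≤
        ((⌈α * (n : ℝ)⌉₊ - (2 * h i + 2) : ℕ) : ℝ) := by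
      rw [sub_le_iff_le_add]
      exact_mod_cast (by omega)
    push_cast at h6
    linarith
  set k := ⌈α * (n : ℝ)⌉₊ with hkdef
  set k' := ⌈α / 2 * (n : ℝ)⌉₊ with hk'def
  have hsplit : Gd H n m k T ⊆ Cls H i n m k T (T i) ∪ Gd H n m k' T' := by
    intro G hG
    obtain ⟨h3, h4, h5⟩ := mem_Gd.1 hG
    rw [Finset.mem_union]
    rcases Nat.lt_or_ge (T i) (compsF (H i) G).card with hlt | hge
    · refine Or.inr (mem_Gd.2 ⟨h3, by omega, fun j => ?_⟩)
      by_cases hj : j = i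
      · subst hj; omega
      · have := h5 j
        have := hT j hj
        omega
    · exact Or.inl (mem_Cls.2 ⟨h3, h4, h5, hge⟩)
  have hsub : Cls H i n m (k - (2 * h i + 2)) T' (T i + 2 * h i + 2) ⊆ Gd H n m k' T' := by
    intro G hG
    obtain ⟨h3, h4, h5, -⟩ := mem_Cls.1 hG
    exact mem_Gd.2 ⟨h3, hk.trans h4, h5⟩
  have h3 : ((Gd H n m k T).card : ℝ) ≤ (Cls H i n m k T (T i)).card + (Gd H n m k' T').card := by
    exact_mod_cast (Finset.card_le_card hsplit).trans (Finset.card_union_le _ _)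
  have h4 : δ * (Cls H i n m k T (T i)).card ≤ (Gd H n m k' T').card :=
    h2.trans (Nat.cast_le.2 (Finset.card_le_card hsub))
  have hF : (0 : ℝ) ≤ (PF n m).card := Nat.cast_nonneg _
  generalize ((PF n m).card : ℝ) = F at *
  generalize ((Gd H n m k' T').card : ℝ) = g at *
  generalize ((Cls H i n m k T (T i)).card : ℝ) = a at *
  generalize ((Gd H n m k T).card : ℝ) = b at *
  have hεF : 0 ≤ ε / 2 * F := by positivity
  rcases le_total (ε / 2 * F) g with hg | hg
  · calc ε / 2 * min 1 δ * F = min 1 δ * (ε / 2 * F) := by ring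
      _ ≤ 1 * (ε / 2 * F) := mul_le_mul_of_nonneg_right (min_le_left _ _) hεF
      _ ≤ g := by linarith
  · have ha : ε / 2 * F ≤ a := by linarith
    calc ε / 2 * min 1 δ * F = min 1 δ * (ε / 2 * F) := by ring
      _ ≤ δ * (ε / 2 * F) := mul_le_mul_of_nonneg_right (min_le_right _ _) hεF
      _ ≤ δ * a := mul_le_mul_of_nonneg_left ha hδ.le
      _ ≤ g := h4

/-- All thresholds are attainable. Creating a component `H i` may destroy boundedly many of the
other components, so the thresholds at the other indices are raised beforehand. -/
theorem good_all (hc : 0 < c) (hB : B < 3) (hconn : ∀ i, (H i).Connected)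
    (hpl : ∀ i, IsPlanar (H i)) (hedge : ∀ i, edgeCount (H i) ≤ h i) (S : Finset (Fin l)) :
    ∀ T : Fin l → ℕ, (∀ j, j ∉ S → T j = 0) → Good H c B T := by
  classical
  induction S using Finset.induction_on with
  | empty =>
    intro T hT
    have : T = fun _ => 0 := funext fun j => hT j (Finset.notMem_empty j)
    rw [this]
    exact good_zero hc hB
  | insert i S hi ih =>
    have key : ∀ (s : ℕ) (T : Fin l → ℕ), (∀ j, j ∉ insert i S → T j = 0) → T i = s →
        Good H c B T := by
      intro s
      induction s with
      | zero =>
        intro T hT hTi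
        refine ih T fun j hj => ?_
        by_cases hji : j = i
        · rw [hji, hTi]
        · exact hT j (by simp [hji, hj])
      | succ s ihs =>
        intro T hT hTi
        refine good_step hc hB (hconn i) (hpl i) (hedge i)
          (T := fun j => if j = i then s else if T j = 0 then 0 else T j + (2 * h i + 2)) ?_ ?_
          (ihs _ ?_ ?_)
        · simp [hTi]
        · intro j hj
          by_cases h0 : T j = 0 <;> simp [hj, h0]
        · intro j hj
          have hji : j ≠ i := fun e => hj (by simp [e])
          simp [hji, hT j hj]
        · simp
    exact fun T hT => key (T i) T hT rfl

end good

theorem components_lower_bound_unicyclic (c B : ℝ) (hc : 0 < c) (hB : B < 3) (m : ℕ → ℕ)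
    (hm : ∀ᶠ n : ℕ in atTop, c * (n : ℝ) ≤ (m n : ℝ) ∧ (m n : ℝ) ≤ B * (n : ℝ))
    (l : ℕ) (h : Fin l → ℕ) (H : ∀ i : Fin l, SimpleGraph (Fin (h i)))
    (hconn : ∀ i, (H i).Connected) (hplanar : ∀ i, IsPlanar (H i))
    (hedge : ∀ i, edgeCount (H i) ≤ h i)
    (t : ℕ) (ht : 0 < t) :
    ∃ ε : ℝ, 0 < ε ∧ ∃ N : ℕ, ∀ n ≥ N,
      ε ≤ planarProb n (m n) fun G => ∀ i, t ≤ numOrderComponents (H i) G := by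
  obtain ⟨α, hα, ε, hε, N1, hN1⟩ := good_all hc hB hconn hplanar hedge Finset.univ (fun _ => t)
    (fun j hj => absurd (Finset.mem_univ j) hj)
  obtain ⟨N2, hN2⟩ := PF_nonempty hB
  obtain ⟨N3, hN3⟩ := eventually_atTop.1 hm
  refine ⟨ε, hε, max N1 (max N2 N3), fun n hn => ?_⟩
  obtain ⟨hcm, hmB⟩ := hN3 n ((le_max_right _ _).trans ((le_max_right _ _).trans hn))
  have h1 := hN1 n (m n) ((le_max_left _ _).trans hn) hcm hmB
  have h2 := hN2 n (m n) ((le_max_left _ _).trans ((le_max_right _ _).trans hn)) hmB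
  have hcard : (planarSet n (m n)).ncard = (PF n (m n)).card := by
    rw [PF, Set.ncard_eq_toFinset_card]
  have hle : (Gd H n (m n) ⌈α * n⌉₊ fun _ => t).card ≤
      {G ∈ planarSet n (m n) | ∀ i, t ≤ numOrderComponents (H i) G}.ncard := by
    rw [← Set.ncard_coe_finset]
    refine Set.ncard_le_ncard (fun G hG => ?_) (Set.toFinite _)
    obtain ⟨h3, -, h4⟩ := mem_Gd.1 (Finset.mem_coe.1 hG)
    refine ⟨mem_PF.1 h3, fun j => ?_⟩
    rw [← card_compsF]
    exact h4 j
  rw [planarProb, hcard, le_div_iff₀ (Nat.cast_pos.2 h2)]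
  exact h1.trans (Nat.cast_le.2 hle)
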